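/- arXiv:0811.0965 — 13 statements merged into one kernel-verified Lean document; each statement's English description precedes it below -/
import Mathlib

section
/- Let f be regular on the punctured ball B(0,R) \ {0} with an essential singularity at 0, i.e. f(q) = ∑_{n∈ℤ} qⁿaₙ for all q with 0 < |q| < R and aₙ ≠ 0 for infinitely many negative indices n. Then for every r with 0 < r ≤ R, the image f({q ∈ ℍ : 0 < |q| < r}) is dense in ℍ (Casorati–Weierstrass theorem for regular quaternionic functions). -/
open Quaternion

namespace CW

open Filter Topology Set

/-- The Laurent series with coefficients `c`. -/
noncomputable def lau (c : ℤ → ℂ) (z : ℂ) : ℂ := ∑' n : ℤ, z ^ n * c n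

/-- Absolute convergence of the Laurent series on the punctured disc. -/
def Good (R : ℝ) (c : ℤ → ℂ) : Prop := ∀ ρ : ℝ, 0 < ρ → ρ < R → Summable fun n : ℤ => ρ ^ n * ‖c n‖

lemma Good.hasSum {R : ℝ} {c : ℤ → ℂ} (h : Good R c) {z : ℂ} (h0 : 0 < ‖z‖) (h1 : ‖z‖ < R) :
    HasSum (fun n : ℤ => z ^ n * c n) (lau c z) := by
  apply Summable.hasSum
  apply Summable.of_norm
  simpa using h _ h0 h1

lemma zpow_le_add {a b x : ℝ} (ha : 0 < a) (hax : a ≤ x) (hxb : x ≤ b) (n : ℤ) :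
    x ^ n ≤ a ^ n + b ^ n := by
  have hx : 0 < x := ha.trans_le hax
  have hb : 0 < b := hx.trans_le hxb
  rcases le_total 0 n with hn | hn
  · have : x ^ n ≤ b ^ n := zpow_le_zpow_left₀ hn hx.le hxb
    have := zpow_pos ha n
    linarith
  · have h3 : a ^ (-n) ≤ x ^ (-n) := zpow_le_zpow_left₀ (by omega) ha.le hax
    have h2 : x ^ n ≤ a ^ n := by
      rw [zpow_neg, zpow_neg] at h3
      exact (inv_le_inv₀ (zpow_pos ha n) (zpow_pos hx n)).1 h3
    have := zpow_pos hb n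
    linarith

lemma Good.differentiableAt {R : ℝ} {c : ℤ → ℂ} (h : Good R c) {z : ℂ} (h0 : 0 < ‖z‖)
    (h1 : ‖z‖ < R) : DifferentiableAt ℂ (lau c) z := by
  obtain ⟨a, ha0, ha⟩ := exists_between h0
  obtain ⟨b, hb0, hb⟩ := exists_between h1
  set U : Set ℂ := {w | a < ‖w‖ ∧ ‖w‖ < b} with hU
  have hUo : IsOpen U :=
    (isOpen_lt continuous_const continuous_norm).inter (isOpen_lt continuous_norm continuous_const)
  have hd : DifferentiableOn ℂ (fun w : ℂ => ∑' n : ℤ, w ^ n * c n) U := by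
    refine Complex.differentiableOn_tsum_of_summable_norm
      (u := fun n : ℤ => a ^ n * ‖c n‖ + b ^ n * ‖c n‖)
      ((h a ha0 (by linarith)).add (h b (by linarith) hb)) ?_ hUo ?_
    · intro n w hw
      have hw0 : w ≠ 0 := norm_pos_iff.1 (ha0.trans hw.1)
      exact ((differentiableAt_zpow.2 (Or.inl hw0)).mul_const _).differentiableWithinAt
    · intro n w hw
      rw [norm_mul, norm_zpow, ← add_mul]
      exact mul_le_mul_of_nonneg_right (zpow_le_add ha0 hw.1.le hw.2.le n) (norm_nonneg _)
  exact hd.differentiableAt (hUo.mem_nhds ⟨ha, hb0⟩)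

lemma Good.coeff_le {R : ℝ} {c : ℤ → ℂ} (h : Good R c) {ρ M : ℝ} (h0 : 0 < ρ) (h1 : ρ < R)
    (hM : ∀ z : ℂ, ‖z‖ = ρ → ‖lau c z‖ ≤ M) (m : ℤ) : ρ ^ m * ‖c m‖ ≤ M := by
  have hne : ∀ θ : ℝ, circleMap 0 ρ θ ≠ 0 := fun θ => circleMap_ne_center h0.ne'
  have key : HasSum (fun n : ℤ => ∮ z in C(0, ρ), z ^ (-m - 1) * (z ^ n * c n))
      (∮ z in C(0, ρ), z ^ (-m - 1) * lau c z) := by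
    unfold circleIntegral
    refine intervalIntegral.hasSum_integral_of_dominated_convergence
      (fun n _ => ρ * (ρ ^ (-m - 1) * (ρ ^ n * ‖c n‖))) ?_ ?_ ?_ ?_ ?_
    · intro n
      apply Continuous.aestronglyMeasurable
      simp only [deriv_circleMap, smul_eq_mul]
      have hc : Continuous (circleMap 0 ρ) := continuous_circleMap 0 ρ
      exact (hc.mul continuous_const).mul
        ((hc.zpow₀ _ fun θ => Or.inl (hne θ)).mul
          ((hc.zpow₀ _ fun θ => Or.inl (hne θ)).mul continuous_const))
    · intro n
      refine Eventually.of_forall fun θ _ => ?_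
      simp [abs_of_pos h0]
    · refine Eventually.of_forall fun θ _ => ?_
      exact ((h ρ h0 h1).mul_left _).mul_left _
    · exact intervalIntegrable_const
    · refine Eventually.of_forall fun θ _ => ?_
      have hn : ‖circleMap 0 ρ θ‖ = ρ := by simp [abs_of_pos h0]
      have := h.hasSum (z := circleMap 0 ρ θ) (by rw [hn]; exact h0) (by rw [hn]; exact h1)
      exact (this.mul_left _).mul_left _
  have hterm : ∀ n : ℤ, n ≠ m → (∮ z in C(0, ρ), z ^ (-m - 1) * (z ^ n * c n)) = 0 := by
    intro n hn
    have e1 : (∮ z in C(0, ρ), z ^ (-m - 1) * (z ^ n * c n))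
        = ∮ z in C(0, ρ), c n * (z - 0) ^ (-m - 1 + n) := by
      refine circleIntegral.integral_congr h0.le fun z hz => ?_
      have hz0 : z ≠ 0 := by
        rintro rfl
        simp at hz
        exact h0.ne hz
      simp only [sub_zero]
      rw [zpow_add₀ hz0]
      ring
    rw [e1, circleIntegral.integral_const_mul, circleIntegral.integral_sub_zpow_of_ne (by omega),
      mul_zero]
  have hm : (∮ z in C(0, ρ), z ^ (-m - 1) * (z ^ m * c m)) = c m * (2 * Real.pi * Complex.I) := by
    have e1 : (∮ z in C(0, ρ), z ^ (-m - 1) * (z ^ m * c m))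
        = ∮ z in C(0, ρ), c m * (z - 0)⁻¹ := by
      refine circleIntegral.integral_congr h0.le fun z hz => ?_
      have hz0 : z ≠ 0 := by
        rintro rfl
        simp at hz
        exact h0.ne hz
      simp only [sub_zero]
      rw [← mul_assoc, ← zpow_add₀ hz0, mul_comm, show -m - 1 + m = -1 by ring, zpow_neg_one]
    rw [e1, circleIntegral.integral_const_mul, circleIntegral.integral_sub_center_inv 0 h0.ne']
  have heq := (hasSum_single m hterm).unique key
  rw [hm] at heq
  have hb := circleIntegral.norm_integral_le_of_norm_le_const (f := fun z => z ^ (-m - 1) * lau c z)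
    (c := 0) (R := ρ) (C := ρ ^ (-m - 1) * M) h0.le (by
      intro z hz
      have hz' : ‖z‖ = ρ := by simpa using hz
      rw [norm_mul, norm_zpow, hz']
      exact mul_le_mul_of_nonneg_left (hM z hz') (zpow_pos h0 _).le)
  rw [← heq] at hb
  have e2 : ‖c m * (2 * Real.pi * Complex.I)‖ = 2 * Real.pi * ‖c m‖ := by
    simp [abs_of_pos Real.pi_pos]; ring
  rw [e2] at hb
  have e3 : ρ * ρ ^ (-m - 1) = ρ ^ (-m) := by
    rw [← zpow_one_add₀ h0.ne']; congr 1; ring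
  have hb' : ‖c m‖ ≤ ρ ^ (-m) * M := by
    have : 2 * Real.pi * ‖c m‖ ≤ 2 * Real.pi * (ρ ^ (-m) * M) := by
      rw [← e3]; linarith
    exact le_of_mul_le_mul_left this Real.two_pi_pos
  calc ρ ^ m * ‖c m‖ ≤ ρ ^ m * (ρ ^ (-m) * M) :=
        mul_le_mul_of_nonneg_left hb' (zpow_pos h0 _).le
    _ = M := by rw [← mul_assoc, ← zpow_add₀ h0.ne']; simp

lemma Good.coeff_zero {R : ℝ} (hR : 0 < R) {c : ℤ → ℂ} (h : Good R c)
    (hmer : MeromorphicAt (lau c) 0) : ∃ N : ℕ, ∀ n : ℤ, n < -N → c n = 0 := by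
  obtain ⟨N, hN⟩ := hmer
  refine ⟨N, fun n hn => ?_⟩
  have hbd := hN.continuousAt.norm.eventually_lt_const (lt_add_one _)
  set M := ‖(fun z : ℂ => (z - 0) ^ N • lau c z) 0‖ + 1 with hMdef
  obtain ⟨δ, hδ, hball⟩ := Metric.eventually_nhds_iff.1 hbd
  have hev : ∀ᶠ ρ : ℝ in 𝓝[>] 0, ‖c n‖ ≤ M * ρ ^ (-n - N).toNat := by
    have hlt : ∀ᶠ ρ : ℝ in 𝓝[>] 0, ρ < min δ R :=
      (eventually_lt_nhds (lt_min hδ hR)).filter_mono nhdsWithin_le_nhds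
    filter_upwards [self_mem_nhdsWithin, hlt] with ρ (h0 : 0 < ρ) hρ
    have hρδ := hρ.trans_le (min_le_left _ _)
    have hρR := hρ.trans_le (min_le_right _ _)
    have := h.coeff_le (M := ρ ^ (-(N : ℤ)) * M) h0 hρR (fun z hz => by
      have h1 := hball (y := z) (by simpa [hz] using hρδ)
      simp only [sub_zero, smul_eq_mul, norm_mul, norm_pow, hz] at h1
      rw [zpow_neg, zpow_natCast, ← div_eq_inv_mul, le_div_iff₀ (pow_pos h0 _), mul_comm]
      exact h1.le) n
    have e : ‖c n‖ = ρ ^ (-n) * (ρ ^ n * ‖c n‖) := by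
      rw [← mul_assoc, ← zpow_add₀ h0.ne']; simp
    rw [e]
    calc ρ ^ (-n) * (ρ ^ n * ‖c n‖) ≤ ρ ^ (-n) * (ρ ^ (-(N : ℤ)) * M) :=
          mul_le_mul_of_nonneg_left this (zpow_pos h0 _).le
      _ = M * ρ ^ (-n - N).toNat := by
          rw [← mul_assoc, ← zpow_add₀ h0.ne', mul_comm, ← zpow_natCast, Int.toNat_of_nonneg (by omega)]
          rfl
  have hlim : Tendsto (fun ρ : ℝ => M * ρ ^ (-n - N).toNat) (𝓝[>] 0) (𝓝 0) := by
    have hc : Continuous (fun ρ : ℝ => M * ρ ^ (-n - N).toNat) := by fun_prop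
    have := hc.tendsto 0
    rw [zero_pow (by omega), mul_zero] at this
    exact this.mono_left nhdsWithin_le_nhds
  have := ge_of_tendsto hlim hev
  exact norm_le_zero_iff.1 this

lemma meromorphicAt_of_bounded {R C : ℝ} (hR : 0 < R) {g : ℂ → ℂ}
    (hd : ∀ z : ℂ, 0 < ‖z‖ → ‖z‖ < R → DifferentiableAt ℂ g z)
    (hb : ∀ z : ℂ, 0 < ‖z‖ → ‖z‖ < R → ‖g z‖ ≤ C) : MeromorphicAt g 0 := by
  have hs : Metric.ball (0 : ℂ) R ∈ 𝓝 (0 : ℂ) := Metric.ball_mem_nhds _ hR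
  have hmem : ∀ z ∈ Metric.ball (0 : ℂ) R \ {0}, 0 < ‖z‖ ∧ ‖z‖ < R := fun z hz =>
    ⟨norm_pos_iff.2 hz.2, by simpa using hz.1⟩
  have := Complex.differentiableOn_update_limUnder_of_bddAbove (f := g) hs
    (fun z hz => (hd z (hmem z hz).1 (hmem z hz).2).differentiableWithinAt)
    ⟨C, by rintro _ ⟨z, hz, rfl⟩; exact hb z (hmem z hz).1 (hmem z hz).2⟩
  exact MeromorphicAt.update_iff.1 (this.analyticAt hs).meromorphicAt

/-- first complex coordinate -/
def pA (q : ℍ[ℝ]) : ℂ := ⟨q.re, q.imI⟩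
/-- second complex coordinate -/
def pB (q : ℍ[ℝ]) : ℂ := ⟨q.imJ, q.imK⟩
/-- assembling a quaternion -/
def mk (x y : ℂ) : ℍ[ℝ] := ⟨x.re, x.im, y.re, y.im⟩

@[simp] lemma mk_re (x y : ℂ) : (mk x y).re = x.re := rfl
@[simp] lemma mk_imI (x y : ℂ) : (mk x y).imI = x.im := rfl
@[simp] lemma mk_imJ (x y : ℂ) : (mk x y).imJ = y.re := rfl
@[simp] lemma mk_imK (x y : ℂ) : (mk x y).imK = y.im := rfl

lemma norm_mk_sq (x y : ℂ) : ‖mk x y‖ ^ 2 = ‖x‖ ^ 2 + ‖y‖ ^ 2 := by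
  rw [sq, ← Quaternion.normSq_eq_norm_mul_self, Quaternion.normSq_def', Complex.sq_norm,
    Complex.sq_norm, Complex.normSq_apply, Complex.normSq_apply]
  simp; ring

lemma mk_pA_pB (q : ℍ[ℝ]) : mk (pA q) (pB q) = q := rfl

lemma pA_le (q : ℍ[ℝ]) : ‖pA q‖ ≤ ‖q‖ := by
  have := norm_mk_sq (pA q) (pB q)
  rw [mk_pA_pB] at this
  exact abs_le_of_sq_le_sq' (by nlinarith [sq_nonneg ‖pB q‖]) (norm_nonneg _) |>.2

lemma pB_le (q : ℍ[ℝ]) : ‖pB q‖ ≤ ‖q‖ := by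
  have := norm_mk_sq (pA q) (pB q)
  rw [mk_pA_pB] at this
  exact abs_le_of_sq_le_sq' (by nlinarith [sq_nonneg ‖pA q‖]) (norm_nonneg _) |>.2

lemma hasSum_of_eq {u v : ℤ → ℍ[ℝ]} {x : ℍ[ℝ]} (h : ∀ n, u n = v n) (hv : HasSum v x) :
    HasSum u x := by
  rw [funext h]; exact hv

lemma hasSum_mk {x y : ℤ → ℂ} {X Y : ℂ} (hx : HasSum x X) (hy : HasSum y Y) :
    HasSum (fun n => mk (x n) (y n)) (mk X Y) := by
  let L : ℂ × ℂ →ₗ[ℝ] ℍ[ℝ] :=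
    { toFun := fun p => mk p.1 p.2
      map_add' := fun p q => by ext <;> simp
      map_smul' := fun c p => by ext <;> simp }
  exact (hx.prodMk hy).map L L.continuous_of_finiteDimensional

lemma mk_zpow (z : ℂ) (n : ℤ) : (mk z 0) ^ n = mk (z ^ n) 0 := by
  have h : ∀ z : ℂ, mk z 0 = Quaternion.ofComplex z := fun z => rfl
  rw [h, h, map_zpow₀]

lemma mul_id (z x y p q : ℂ) : mk z 0 * mk x (-y) * mk p q =
    mk (x * (z * p) + y * (z * (starRingEnd ℂ) q)) (x * (z * q) - y * (z * (starRingEnd ℂ) p)) := by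
  ext <;> simp <;> ring

/-- conjugate coefficients -/
noncomputable def cj (c : ℤ → ℂ) : ℤ → ℂ := fun n => (starRingEnd ℂ) (c n)

lemma Good.cj {R : ℝ} {c : ℤ → ℂ} (h : Good R c) : Good R (cj c) := by
  intro ρ h0 h1
  simpa [CW.cj] using h ρ h0 h1

lemma lau_cj (c : ℤ → ℂ) (z : ℂ) : lau (cj c) z = (starRingEnd ℂ) (lau c ((starRingEnd ℂ) z)) := by
  unfold lau
  rw [Complex.conj_tsum]
  simp [cj]

lemma main {R ε : ℝ} (hR : 0 < R) (hε : 0 < ε) (f : ℍ[ℝ] → ℍ[ℝ]) (a : ℤ → ℍ[ℝ])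
    (hreg : ∀ q : ℍ[ℝ], 0 < ‖q‖ → ‖q‖ < R → HasSum (fun n : ℤ => q ^ n * a n) (f q))
    (hf : ∀ q : ℍ[ℝ], 0 < ‖q‖ → ‖q‖ < R → ε ≤ ‖f q‖) :
    ∃ N : ℕ, ∀ n : ℤ, n < -N → a n = 0 := by
  have hsum : ∀ ρ : ℝ, 0 < ρ → ρ < R → Summable fun n : ℤ => ρ ^ n * ‖a n‖ := by
    intro ρ h0 h1
    have hn : ‖(ρ : ℍ[ℝ])‖ = ρ := by rw [Quaternion.norm_coe, Real.norm_of_nonneg h0.le]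
    have := (hreg (ρ : ℍ[ℝ]) (by rw [hn]; exact h0) (by rw [hn]; exact h1)).summable.norm
    simpa [norm_mul, norm_zpow, abs_of_pos h0] using this
  set α : ℤ → ℂ := fun n => pA (a n) with hα
  set β : ℤ → ℂ := fun n => pB (a n) with hβ
  have gα : Good R α := fun ρ h0 h1 => (hsum ρ h0 h1).of_nonneg_of_le
    (fun n => mul_nonneg (zpow_pos h0 n).le (norm_nonneg _))
    (fun n => mul_le_mul_of_nonneg_left (pA_le _) (zpow_pos h0 n).le)
  have gβ : Good R β := fun ρ h0 h1 => (hsum ρ h0 h1).of_nonneg_of_le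
    (fun n => mul_nonneg (zpow_pos h0 n).le (norm_nonneg _))
    (fun n => mul_le_mul_of_nonneg_left (pB_le _) (zpow_pos h0 n).le)
  have gα' := gα.cj
  have gβ' := gβ.cj
  set F := lau α
  set G := lau β
  set F' := lau (cj α)
  set G' := lau (cj β)
  set s : ℂ → ℂ := fun z => F z * F' z + G z * G' z with hs
  have hnz : ∀ z : ℂ, ‖mk z 0‖ = ‖z‖ := by
    intro z
    have := norm_mk_sq z 0
    simp only [norm_zero, ne_eq, OfNat.ofNat_ne_zero, not_false_eq_true, zero_pow, add_zero] at this
    exact (pow_left_inj₀ (norm_nonneg _) (norm_nonneg _) two_ne_zero).1 this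
  -- the key pointwise estimate
  have key : ∀ z : ℂ, 0 < ‖z‖ → ‖z‖ < R → ε * ‖mk (F' z) (-G z)‖ ≤ ‖s z‖ := by
    intro z h0 h1
    set w := mk (F' z) (-G z) with hw
    rcases eq_or_ne w 0 with hw0 | hw0
    · rw [hw0, norm_zero, mul_zero]; exact norm_nonneg _
    have hwn : 0 < ‖w‖ := norm_pos_iff.2 hw0
    set q := w⁻¹ * mk z 0 * w with hq
    have hqn : ‖q‖ = ‖z‖ := by
      rw [hq, norm_mul, norm_mul, norm_inv, hnz]; field_simp
    have hqp : ∀ n : ℤ, q ^ n = w⁻¹ * mk (z ^ n) 0 * w := by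
      intro n
      have : SemiconjBy w q (mk z 0) := by
        change w * q = mk z 0 * w
        rw [hq, ← mul_assoc, ← mul_assoc, mul_inv_cancel₀ hw0, one_mul]
      have h2 : w * q ^ n = (mk z 0) ^ n * w := this.zpow_right₀ n
      rw [mk_zpow] at h2
      rw [mul_assoc, ← h2, ← mul_assoc, inv_mul_cancel₀ hw0, one_mul]
    have hS := hreg q (by rw [hqn]; exact h0) (by rw [hqn]; exact h1)
    have hA := gα.hasSum h0 h1
    have hB := gβ.hasSum h0 h1
    have hA' := gα'.hasSum h0 h1
    have hB' := gβ'.hasSum h0 h1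
    have hT := (hasSum_mk ((hA.mul_left (F' z)).add (hB'.mul_left (G z)))
      ((hB.mul_left (F' z)).sub (hA'.mul_left (G z)))).mul_left w⁻¹
    have heq : f q = w⁻¹ * mk (F' z * F z + G z * G' z) (F' z * G z - G z * F' z) := by
      refine hS.unique (CW.hasSum_of_eq (fun n => ?_) hT)
      rw [hqp, mul_assoc, mul_assoc, ← mul_assoc _ w, hw]
      conv_lhs => rw [← mk_pA_pB (a n)]
      rw [mul_id]
      rfl
    have e1 : F' z * G z - G z * F' z = 0 := by ring
    rw [e1] at heq
    have h3 := hf q (by rw [hqn]; exact h0) (by rw [hqn]; exact h1)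
    rw [heq, norm_mul, hnz, norm_inv, ← div_eq_inv_mul, le_div_iff₀ hwn] at h3
    rw [hs]
    simpa [mul_comm] using h3
  have hle : ∀ x y : ℂ, ‖x‖ ≤ ‖mk x y‖ := fun x y => pA_le (mk x y)
  have hle' : ∀ x y : ℂ, ‖y‖ ≤ ‖mk x y‖ := fun x y => pB_le (mk x y)
  have eF' : ∀ z, F' z = (starRingEnd ℂ) (F ((starRingEnd ℂ) z)) := lau_cj α
  have eG' : ∀ z, G' z = (starRingEnd ℂ) (G ((starRingEnd ℂ) z)) := lau_cj β
  have es : ∀ z, ‖s ((starRingEnd ℂ) z)‖ = ‖s z‖ := by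
    intro z
    have : s ((starRingEnd ℂ) z) = (starRingEnd ℂ) (s z) := by
      simp only [hs, eF', eG', map_add, map_mul, Complex.conj_conj]; ring
    rw [this, Complex.norm_conj]
  have bF' : ∀ z : ℂ, 0 < ‖z‖ → ‖z‖ < R → ε * ‖F' z‖ ≤ ‖s z‖ := fun z h0 h1 =>
    (mul_le_mul_of_nonneg_left (hle _ _) hε.le).trans (key z h0 h1)
  have bG : ∀ z : ℂ, 0 < ‖z‖ → ‖z‖ < R → ε * ‖G z‖ ≤ ‖s z‖ := fun z h0 h1 => by
    rw [← norm_neg (G z)]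
    exact (mul_le_mul_of_nonneg_left (hle' _ _) hε.le).trans (key z h0 h1)
  have bF : ∀ z : ℂ, 0 < ‖z‖ → ‖z‖ < R → ε * ‖F z‖ ≤ ‖s z‖ := fun z h0 h1 => by
    have := bF' ((starRingEnd ℂ) z) (by simpa using h0) (by simpa using h1)
    rwa [es, eF', Complex.norm_conj, Complex.conj_conj] at this
  have bG' : ∀ z : ℂ, 0 < ‖z‖ → ‖z‖ < R → ε * ‖G' z‖ ≤ ‖s z‖ := fun z h0 h1 => by
    have := bG ((starRingEnd ℂ) z) (by simpa using h0) (by simpa using h1)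
    rwa [es, ← Complex.norm_conj, ← eG'] at this
  have hs0 : ∀ z : ℂ, 0 < ‖z‖ → ‖z‖ < R → s z ≠ 0 := by
    intro z h0 h1 hz
    have h2 := bF z h0 h1
    have h3 := bG z h0 h1
    rw [hz, norm_zero] at h2 h3
    have h2' : F z = 0 := norm_le_zero_iff.1 (nonpos_of_mul_nonpos_right h2 hε)
    have h3' : G z = 0 := norm_le_zero_iff.1 (nonpos_of_mul_nonpos_right h3 hε)
    have h4 := hf (mk z 0) (by rw [hnz]; exact h0) (by rw [hnz]; exact h1)
    have h5 : f (mk z 0) = mk (F z) (G z) := by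
      refine (hreg (mk z 0) (by rw [hnz]; exact h0) (by rw [hnz]; exact h1)).unique
        (CW.hasSum_of_eq (fun n => ?_) (hasSum_mk (gα.hasSum h0 h1) (gβ.hasSum h0 h1)))
      rw [mk_zpow]
      conv_lhs => rw [← mk_pA_pB (a n)]
      ext <;> simp [hα, hβ]
    rw [h5, h2', h3', hnz, norm_zero] at h4
    linarith
  have ds : ∀ z : ℂ, 0 < ‖z‖ → ‖z‖ < R → DifferentiableAt ℂ s z := fun z h0 h1 =>
    ((gα.differentiableAt h0 h1).mul (gα'.differentiableAt h0 h1)).add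
      ((gβ.differentiableAt h0 h1).mul (gβ'.differentiableAt h0 h1))
  have mer : ∀ H : ℂ → ℂ, (∀ z : ℂ, 0 < ‖z‖ → ‖z‖ < R → DifferentiableAt ℂ H z) →
      (∀ z : ℂ, 0 < ‖z‖ → ‖z‖ < R → ε * ‖H z‖ ≤ ‖s z‖) → MeromorphicAt (fun z => H z / s z) 0 := by
    intro H hd hb
    refine meromorphicAt_of_bounded (C := 1 / ε) hR
      (fun z h0 h1 => (hd z h0 h1).div (ds z h0 h1) (hs0 z h0 h1)) (fun z h0 h1 => ?_)
    rw [norm_div, div_le_div_iff₀ (norm_pos_iff.2 (hs0 z h0 h1)) hε]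
    linarith [hb z h0 h1]
  have mF := mer F (fun z h0 h1 => gα.differentiableAt h0 h1) bF
  have mG := mer G (fun z h0 h1 => gβ.differentiableAt h0 h1) bG
  have mF' := mer F' (fun z h0 h1 => gα'.differentiableAt h0 h1) bF'
  have mG' := mer G' (fun z h0 h1 => gβ'.differentiableAt h0 h1) bG'
  have hev : ∀ᶠ z : ℂ in 𝓝[≠] 0, s z ≠ 0 := by
    have h2 : ∀ᶠ z : ℂ in 𝓝[≠] 0, z ∈ Metric.ball (0 : ℂ) R :=
      nhdsWithin_le_nhds (Metric.ball_mem_nhds _ hR)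
    filter_upwards [self_mem_nhdsWithin, h2] with z hz hz2
    exact hs0 z (norm_pos_iff.2 hz) (by simpa using hz2)
  have ms := ((mF.mul mF').add (mG.mul mG')).inv
  have fin : ∀ H : ℂ → ℂ, MeromorphicAt (fun z => H z / s z) 0 → MeromorphicAt H 0 := by
    intro H hH
    refine (hH.mul ms).congr ?_
    filter_upwards [hev] with z hz
    simp only [Pi.mul_apply, Pi.inv_apply, Pi.add_apply]
    have : F z / s z * (F' z / s z) + G z / s z * (G' z / s z) = (s z)⁻¹ := by
      have e : F z / s z * (F' z / s z) + G z / s z * (G' z / s z) = s z / (s z * s z) := by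
        rw [div_mul_div_comm, div_mul_div_comm, ← add_div]
      rw [e]; field_simp
    rw [this, inv_inv, div_mul_cancel₀ _ hz]
  obtain ⟨N₁, h₁⟩ := gα.coeff_zero hR (fin F mF)
  obtain ⟨N₂, h₂⟩ := gβ.coeff_zero hR (fin G mG)
  refine ⟨max N₁ N₂, fun n hn => ?_⟩
  push_cast at hn
  have e1 : pA (a n) = 0 := h₁ n (by omega)
  have e2 : pB (a n) = 0 := h₂ n (by omega)
  rw [← mk_pA_pB (a n), e1, e2]
  rfl

end CW

/-- Casorati–Weierstrass theorem for regular quaternionic functions: if `f` is regular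
on the punctured ball `B(0,R) \ {0}` with an essential singularity at `0`, then for every
`0 < r ≤ R` the image of the punctured ball of radius `r` is dense in `ℍ`. -/
theorem casorati_weierstrass (R : ℝ) (hR : 0 < R) (f : ℍ[ℝ] → ℍ[ℝ]) (a : ℤ → ℍ[ℝ])
    (hreg : ∀ q : ℍ[ℝ], 0 < ‖q‖ → ‖q‖ < R → HasSum (fun n : ℤ => q ^ n * a n) (f q))
    (hess : {n : ℤ | n < 0 ∧ a n ≠ 0}.Infinite) :
    ∀ r : ℝ, 0 < r → r ≤ R → Dense (f '' {q : ℍ[ℝ] | 0 < ‖q‖ ∧ ‖q‖ < r}) := by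
  intro r hr hrR
  rw [Metric.dense_iff]
  intro p ε hε
  by_contra hne
  rw [Set.not_nonempty_iff_eq_empty, Set.eq_empty_iff_forall_notMem] at hne
  obtain ⟨N, hN⟩ := CW.main hr hε (fun q => f q - p) (fun n => a n - if n = 0 then p else 0)
    (by
      intro q h0 h1
      have h2 := (hreg q h0 (h1.trans_le hrR)).sub (hasSum_ite_eq (0 : ℤ) p)
      refine CW.hasSum_of_eq (fun n => ?_) h2
      rw [mul_sub]
      split_ifs with h
      · simp [h]
      · simp)
    (by
      intro q h0 h1
      by_contra hlt
      rw [not_le] at hlt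
      exact hne (f q) ⟨by rw [Metric.mem_ball, dist_eq_norm]; exact hlt, q, ⟨h0, h1⟩, rfl⟩)
  refine hess ((Set.finite_Icc (-(N : ℤ)) 0).subset ?_)
  rintro n ⟨hn0, hn⟩
  refine ⟨?_, hn0.le⟩
  by_contra hlt
  rw [not_le] at hlt
  have := hN n hlt
  rw [if_neg hn0.ne, sub_zero] at this
  exact hn this
end

section
/- Let f(q) = qⁿaₙ + qⁿ⁻¹aₙ₋₁ + ... + qa₁ + a₀ be a quaternionic polynomial with right coefficients a₀,...,aₙ ∈ ℍ and aₙ ≠ 0. If f : ℍ → ℍ is injective, then n = 1. -/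
open Quaternion

open Polynomial in
/-- component polynomial -/
noncomputable def compPoly (n : ℕ) (u : ℕ → ℝ) : ℂ[X] :=
  ∑ k ∈ Finset.range (n + 1), C ((u k : ℝ) : ℂ) * X ^ k

theorem exists_imag_unit (A B : ℍ[ℝ])
    (h1 : A.re ^ 2 + A.imI ^ 2 + A.imJ ^ 2 + A.imK ^ 2
      = B.re ^ 2 + B.imI ^ 2 + B.imJ ^ 2 + B.imK ^ 2)
    (h2 : A.re * B.re + A.imI * B.imI + A.imJ * B.imJ + A.imK * B.imK = 0) :
    ∃ I : ℍ[ℝ], I * I = -1 ∧ I.re = 0 ∧ A + I * B = 0 := by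
  have key : ∀ I : ℍ[ℝ], I.re = 0 → normSq I = 1 → I * I = -1 := by
    intro I hr hn
    rw [Quaternion.normSq_def'] at hn
    rw [hr] at hn
    ext <;> simp [hr] <;> nlinarith
  by_cases hB : B = 0
  · subst hB
    have hA : A = 0 := by
      rw [← Quaternion.normSq_eq_zero, Quaternion.normSq_def', h1]
      simp
    obtain ⟨J, j0, j1, j2, j3⟩ : ∃ J : ℍ[ℝ], J.re = 0 ∧ J.imI = 1 ∧ J.imJ = 0 ∧ J.imK = 0 :=
      ⟨⟨0, 1, 0, 0⟩, rfl, rfl, rfl, rfl⟩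
    refine ⟨J, key _ j0 ?_, j0, by simp [hA]⟩
    rw [Quaternion.normSq_def', j0, j1, j2, j3]; simp
  · have hB' : normSq B ≠ 0 := by simpa using hB
    have hAB : normSq A = normSq B := by
      rw [Quaternion.normSq_def', Quaternion.normSq_def', h1]
    have hre : (-(A * B⁻¹)).re = 0 := by
      rw [Quaternion.instInv]
      simp
      right
      linarith
    refine ⟨-(A * B⁻¹), key _ hre ?_, hre, ?_⟩
    · rw [Quaternion.normSq_neg, map_mul, map_inv₀, hAB, mul_inv_cancel₀ hB']
    · rw [neg_mul, mul_assoc, inv_mul_cancel₀ hB, mul_one, add_neg_cancel]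

theorem pow_slice (z : ℂ) (I : ℍ[ℝ]) (hI : I * I = -1) (k : ℕ) :
    (((z.re : ℝ) : ℍ[ℝ]) + z.im • I) ^ k = (((z ^ k).re : ℝ) : ℍ[ℝ]) + (z ^ k).im • I := by
  induction k with
  | zero => simp
  | succ k ih =>
    rw [pow_succ, ih, pow_succ, Complex.mul_re, Complex.mul_im]
    simp only [add_mul, mul_add, smul_mul_smul_comm, hI, ← Quaternion.coe_mul]
    ext <;> simp <;> ring

theorem root_of_sum_sq (n : ℕ) (a : ℕ → ℍ[ℝ]) (z : ℂ)
    (hz : ((compPoly n fun k => (a k).re) ^ 2 + (compPoly n fun k => (a k).imI) ^ 2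
      + (compPoly n fun k => (a k).imJ) ^ 2 + (compPoly n fun k => (a k).imK) ^ 2).eval z = 0) :
    ∃ I : ℍ[ℝ], I * I = -1 ∧ I.re = 0 ∧
      ∑ k ∈ Finset.range (n + 1), (((z.re : ℝ) : ℍ[ℝ]) + z.im • I) ^ k * a k = 0 := by
  have ev : ∀ u : ℕ → ℝ, (compPoly n u).eval z =
      ⟨∑ k ∈ Finset.range (n + 1), (z ^ k).re * u k,
        ∑ k ∈ Finset.range (n + 1), (z ^ k).im * u k⟩ := by
    intro u
    rw [compPoly, Polynomial.eval_finsetSum]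
    apply Complex.ext
    · rw [Complex.re_sum]
      refine Finset.sum_congr rfl fun k _ => ?_
      rw [Polynomial.eval_mul, Polynomial.eval_C, Polynomial.eval_pow, Polynomial.eval_X,
        Complex.re_ofReal_mul, mul_comm]
    · rw [Complex.im_sum]
      refine Finset.sum_congr rfl fun k _ => ?_
      rw [Polynomial.eval_mul, Polynomial.eval_C, Polynomial.eval_pow, Polynomial.eval_X,
        Complex.im_ofReal_mul, mul_comm]
  set A : ℍ[ℝ] := ∑ k ∈ Finset.range (n + 1), (z ^ k).re • a k with hA
  set B : ℍ[ℝ] := ∑ k ∈ Finset.range (n + 1), (z ^ k).im • a k with hB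
  have cre : ∀ v : ℕ → ℝ,
      (∑ k ∈ Finset.range (n + 1), v k • a k).re = ∑ k ∈ Finset.range (n + 1), v k * (a k).re ∧
      (∑ k ∈ Finset.range (n + 1), v k • a k).imI = ∑ k ∈ Finset.range (n + 1), v k * (a k).imI ∧
      (∑ k ∈ Finset.range (n + 1), v k • a k).imJ = ∑ k ∈ Finset.range (n + 1), v k * (a k).imJ ∧
      (∑ k ∈ Finset.range (n + 1), v k • a k).imK
        = ∑ k ∈ Finset.range (n + 1), v k * (a k).imK := by
    intro v
    induction Finset.range (n + 1) using Finset.induction_on with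
    | empty => simp
    | insert x s hx ih =>
      obtain ⟨i0, i1, i2, i3⟩ := ih
      simp only [Finset.sum_insert hx, ← i0, ← i1, ← i2, ← i3]
      simp
  obtain ⟨A0, A1, A2, A3⟩ := cre fun k => (z ^ k).re
  obtain ⟨B0, B1, B2, B3⟩ := cre fun k => (z ^ k).im
  rw [← hA] at A0 A1 A2 A3
  rw [← hB] at B0 B1 B2 B3
  simp only [Polynomial.eval_add, Polynomial.eval_pow, ev, ← A0, ← A1, ← A2, ← A3, ← B0, ← B1, ← B2, ← B3] at hz
  have hre := congrArg Complex.re hz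
  have him := congrArg Complex.im hz
  simp only [pow_two, Complex.add_re, Complex.add_im, Complex.mul_re, Complex.mul_im,
    Complex.zero_re, Complex.zero_im] at hre him
  obtain ⟨I, hI, hI0, hAB⟩ := exists_imag_unit A B
    (by linarith) (by linarith)
  refine ⟨I, hI, hI0, ?_⟩
  rw [← hAB]
  rw [hA, hB, Finset.mul_sum, ← Finset.sum_add_distrib]
  refine Finset.sum_congr rfl fun k _ => ?_
  rw [pow_slice z I hI, add_mul, Quaternion.coe_mul_eq_smul, smul_mul_assoc, mul_smul_comm]

theorem compPoly_natDegree (n : ℕ) (u : ℕ → ℝ) : (compPoly n u).natDegree ≤ n := by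
  refine Polynomial.natDegree_sum_le_of_forall_le _ _ fun k hk => ?_
  refine (Polynomial.natDegree_C_mul_X_pow_le _ _).trans ?_
  have := Finset.mem_range.1 hk
  omega

theorem compPoly_coeff (n : ℕ) (u : ℕ → ℝ) : (compPoly n u).coeff n = u n := by
  simp [compPoly, Polynomial.coeff_C_mul, Polynomial.coeff_X_pow]

theorem compPoly_shift (n : ℕ) (u v : ℕ → ℝ) (c : ℝ) (h0 : v 0 = u 0 - c)
    (h : ∀ k, v (k + 1) = u (k + 1)) :
    compPoly n v = compPoly n u - Polynomial.C (c : ℂ) := by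
  simp only [compPoly, Finset.sum_range_succ', h0, h]
  simp
  ring

theorem compPoly_sq_coeff (n : ℕ) (hn : 2 ≤ n) (u v : ℕ → ℝ) (c : ℝ) (h0 : v 0 = u 0 - c)
    (h : ∀ k, v (k + 1) = u (k + 1)) :
    ((compPoly n v) ^ 2).coeff (2 * n - 1) = ((compPoly n u) ^ 2).coeff (2 * n - 1) := by
  rw [compPoly_shift n u v c h0 h]
  have : (compPoly n u - Polynomial.C (c : ℂ)) ^ 2 = (compPoly n u) ^ 2 +
      (Polynomial.C (-2 * (c : ℂ)) * compPoly n u + Polynomial.C ((c : ℂ) ^ 2)) := by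
    simp only [Polynomial.C_mul, Polynomial.C_pow, Polynomial.C_neg]
    have : (Polynomial.C (2 : ℂ)) = 2 := rfl
    rw [this]; ring
  rw [this, Polynomial.coeff_add, Polynomial.coeff_add, Polynomial.coeff_C_mul,
    Polynomial.coeff_eq_zero_of_natDegree_lt (p := compPoly n u), Polynomial.coeff_C]
  · rw [if_neg (by omega)]; simp
  · have := compPoly_natDegree n u
    omega

theorem coeff_of_unique (n : ℕ) (hn : 2 ≤ n) (a : ℕ → ℍ[ℝ]) (ha : a n ≠ 0) (r : ℝ)
    (hr : ∀ q : ℍ[ℝ], ∑ k ∈ Finset.range (n + 1), q ^ k * a k = 0 → q = (r : ℍ[ℝ])) :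
    ((compPoly n fun k => (a k).re) ^ 2 + (compPoly n fun k => (a k).imI) ^ 2
      + (compPoly n fun k => (a k).imJ) ^ 2 + (compPoly n fun k => (a k).imK) ^ 2).coeff (2 * n - 1)
    = -(r : ℂ) * (2 * n) * ((normSq (a n) : ℝ) : ℂ) := by
  have hroot := root_of_sum_sq n a
  set N := ((compPoly n fun k => (a k).re) ^ 2 + (compPoly n fun k => (a k).imI) ^ 2
      + (compPoly n fun k => (a k).imJ) ^ 2 + (compPoly n fun k => (a k).imK) ^ 2) with hN
  have hc : N.coeff (2 * n) = ((normSq (a n) : ℝ) : ℂ) := by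
    have : ∀ u : ℕ → ℝ, ((compPoly n u) ^ 2).coeff (2 * n) = (u n : ℂ) ^ 2 := by
      intro u
      rw [pow_two, two_mul, Polynomial.coeff_mul_add_eq_of_natDegree_le
        (compPoly_natDegree n u) (compPoly_natDegree n u), compPoly_coeff, pow_two]
    rw [hN, Polynomial.coeff_add, Polynomial.coeff_add, Polynomial.coeff_add, this, this, this,
      this, Quaternion.normSq_def']
    push_cast
    rfl
  have hs : ((normSq (a n) : ℝ) : ℂ) ≠ 0 := by
    simpa using ha
  have hle : N.natDegree ≤ 2 * n := by
    have : ∀ u : ℕ → ℝ, ((compPoly n u) ^ 2).natDegree ≤ 2 * n := fun u =>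
      Polynomial.natDegree_pow_le_of_le 2 (compPoly_natDegree n u)
    exact Polynomial.natDegree_add_le_of_degree_le (Polynomial.natDegree_add_le_of_degree_le
      (Polynomial.natDegree_add_le_of_degree_le (this _) (this _)) (this _)) (this _)
  have hdeg : N.natDegree = 2 * n :=
    Polynomial.natDegree_eq_of_le_of_coeff_ne_zero hle (by rw [hc]; exact hs)
  have hlead : N.leadingCoeff = ((normSq (a n) : ℝ) : ℂ) := by
    rw [Polynomial.leadingCoeff, hdeg, hc]
  have hroots : N.roots = Multiset.replicate (2 * n) (r : ℂ) := by
    rw [Multiset.eq_replicate]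
    refine ⟨by rw [← (IsAlgClosed.splits N).natDegree_eq_card_roots, hdeg], fun z hz => ?_⟩
    obtain ⟨I, hI, hI0, hsum⟩ := hroot z (Polynomial.isRoot_of_mem_roots hz)
    have hq := hr _ hsum
    have h1 : z.re = r := by
      have := congrArg QuaternionAlgebra.re hq
      simpa [hI0] using this
    rw [h1] at hq
    have h2 : z.im • I = 0 := by simpa using hq
    have hI1 : I ≠ 0 := by
      rintro rfl
      simp at hI
    have h3 : z.im = 0 := (smul_eq_zero.1 h2).resolve_right hI1
    exact Complex.ext (by simpa using h1) (by simpa using h3)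
  have hP := (IsAlgClosed.splits N).eq_prod_roots
  rw [hroots, hlead, Multiset.map_replicate, Multiset.prod_replicate] at hP
  rw [hP, Polynomial.coeff_C_mul, sub_eq_add_neg, ← Polynomial.C_neg,
    Polynomial.coeff_X_add_C_pow]
  have e1 : 2 * n - (2 * n - 1) = 1 := by omega
  have e2 : (2 * n).choose (2 * n - 1) = 2 * n := by
    rw [← Nat.choose_symm (by omega), e1, Nat.choose_one_right]
  rw [e1, e2]
  push_cast
  ring

/-- An injective quaternionic polynomial (left powers, right coefficients) of degree `n`
(i.e. with `aₙ ≠ 0`) has degree `n = 1`. -/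
theorem injective_polynomial_degree_one (n : ℕ) (a : ℕ → ℍ[ℝ]) (ha : a n ≠ 0)
    (hinj : Function.Injective (fun q : ℍ[ℝ] => ∑ k ∈ Finset.range (n + 1), q ^ k * a k)) :
    n = 1 := by
  by_contra hne
  rcases Nat.eq_zero_or_pos n with rfl | hpos
  · have : (0 : ℍ[ℝ]) = 1 := hinj (by simp)
    exact zero_ne_one this
  have hn : 2 ≤ n := by omega
  have main : ∀ r : ℝ, ((compPoly n fun k => (a k).re) ^ 2 + (compPoly n fun k => (a k).imI) ^ 2
      + (compPoly n fun k => (a k).imJ) ^ 2 + (compPoly n fun k => (a k).imK) ^ 2).coeff (2 * n - 1)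
    = -(r : ℂ) * (2 * n) * ((normSq (a n) : ℝ) : ℂ) := by
    intro r
    set c : ℍ[ℝ] := ∑ k ∈ Finset.range (n + 1), (r : ℍ[ℝ]) ^ k * a k with hc
    let b : ℕ → ℍ[ℝ] := fun k => if k = 0 then a 0 - c else a k
    have hb0 : b 0 = a 0 - c := rfl
    have hbs : ∀ k, b (k + 1) = a (k + 1) := fun k => by simp [b]
    have hbn : b n = a n := by simp [b, hpos.ne']
    have h := coeff_of_unique n hn b (by rw [hbn]; exact ha) r (by
      intro q hq
      apply hinj
      change ∑ k ∈ Finset.range (n + 1), q ^ k * a k = c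
      rw [Finset.sum_range_succ'] at hq ⊢
      simp only [hbs, hb0, pow_zero, one_mul] at hq ⊢
      rw [← sub_eq_zero, ← hq]
      abel)
    rw [hbn] at h
    rw [← h]
    simp only [Polynomial.coeff_add]
    rw [compPoly_sq_coeff n hn (fun k => (a k).re) (fun k => (b k).re) c.re (by simp [hb0])
        (by simp [hbs]),
      compPoly_sq_coeff n hn (fun k => (a k).imI) (fun k => (b k).imI) c.imI (by simp [hb0])
        (by simp [hbs]),
      compPoly_sq_coeff n hn (fun k => (a k).imJ) (fun k => (b k).imJ) c.imJ (by simp [hb0])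
        (by simp [hbs]),
      compPoly_sq_coeff n hn (fun k => (a k).imK) (fun k => (b k).imK) c.imK (by simp [hb0])
        (by simp [hbs])]
  have h01 := (main 0).symm.trans (main 1)
  have hs : ((normSq (a n) : ℝ) : ℂ) ≠ 0 := by
    simpa using ha
  have hn0 : (n : ℂ) ≠ 0 := by exact_mod_cast hpos.ne'
  simp [hn0, ha] at h01
end

section
/- A function f : ℍ → ℍ which is regular on all of ℍ (i.e. f(q) = ∑_{n≥0} qⁿaₙ with the power series converging for every q ∈ ℍ) is injective if and only if there exist a, b ∈ ℍ with a ≠ 0 such that f(q) = qa + b for all q ∈ ℍ. -/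
open Quaternion

section generic
open Filter Topology

/-- power series with right coefficients in a normed algebra -/
noncomputable def rightSeries (𝕜 : Type*) {A : Type*} [NontriviallyNormedField 𝕜] [NormedRing A]
    [NormedAlgebra 𝕜 A] (c : ℕ → A) : FormalMultilinearSeries 𝕜 A A := fun n =>
  ((ContinuousLinearMap.mul 𝕜 A).flip (c n)).compContinuousMultilinearMap
    (ContinuousMultilinearMap.mkPiAlgebraFin 𝕜 n A)

theorem rightSeries_apply (𝕜 : Type*) {A : Type*} [NontriviallyNormedField 𝕜] [NormedRing A]
    [NormedAlgebra 𝕜 A] (c : ℕ → A) (n : ℕ) (v : Fin n → A) :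
    rightSeries 𝕜 c n v = (List.ofFn v).prod * c n := by
  simp [rightSeries]

theorem rightSeries_hasFPowerSeries (𝕜 : Type*) {A : Type*} [NontriviallyNormedField 𝕜]
    [NormedRing A] [NormOneClass A] [NormedAlgebra 𝕜 A] [CompleteSpace A] (c : ℕ → A) (f : A → A)
    (hs : ∀ r : NNReal, Summable fun n => ‖c n‖ * (r : ℝ) ^ n)
    (hf : ∀ q, HasSum (fun n => q ^ n * c n) (f q)) :
    HasFPowerSeriesOnBall f (rightSeries 𝕜 c) 0 ⊤ where
  r_le := by
    rw [FormalMultilinearSeries.radius_eq_top_of_summable_norm]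
    intro r
    refine Summable.of_nonneg_of_le (fun n => by positivity) (fun n => ?_) (hs r)
    gcongr
    refine ContinuousMultilinearMap.opNorm_le_bound (norm_nonneg _) fun v => ?_
    rw [rightSeries_apply, mul_comm ‖c n‖]
    refine (norm_mul_le _ _).trans ?_
    gcongr
    refine (List.norm_prod_le _).trans (le_of_eq ?_)
    simp [List.map_ofFn, List.prod_ofFn]
  r_pos := by simp
  hasSum := by
    intro y _
    simp only [rightSeries_apply, zero_add]
    simpa using hf y

/-- extended Liouville for coefficients -/
theorem coeff_eq_zero_of_growth (a : ℕ → ℂ) (E : ℂ → ℂ)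
    (hs : ∀ r : NNReal, Summable fun n => ‖a n‖ * (r : ℝ) ^ n)
    (hE : ∀ z, HasSum (fun n => z ^ n * a n) (E z)) (N : ℕ) (C R : ℝ)
    (hb : ∀ z, R ≤ ‖z‖ → ‖E z‖ ≤ C * ‖z‖ ^ N) (n : ℕ) (hn : N < n) : a n = 0 := by
  have h := rightSeries_hasFPowerSeries ℂ a E hs hE
  have hd : Differentiable ℂ E := fun z =>
    (h.analyticOnNhd z (by simp)).differentiableAt
  have h1 : (n.factorial : ℂ) * a n = iteratedDeriv n E 0 := by
    have := h.factorial_smul 1 n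
    rw [iteratedDeriv_eq_iteratedFDeriv, ← this, rightSeries_apply]
    simp
  have h2 : ∀ r : ℝ, max R 1 ≤ r → ‖a n‖ ≤ C * r⁻¹ := by
    intro r hr
    have hr1 : 1 ≤ r := (le_max_right _ _).trans hr
    have hr0 : 0 < r := by linarith
    have hC : 0 ≤ C := by
      have := (norm_nonneg _).trans (hb (r : ℂ) (by
        simp only [Complex.norm_real, Real.norm_eq_abs, abs_of_pos hr0]
        exact (le_max_left _ _).trans hr))
      simp only [Complex.norm_real, Real.norm_eq_abs, abs_of_pos hr0] at this
      exact nonneg_of_mul_nonneg_left this (by positivity)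
    have h3 := Complex.norm_iteratedDeriv_le_of_forall_mem_sphere_norm_le (c := 0) (R := r)
      (C := C * r ^ N) (f := E) n hr0 hd.diffContOnCl (by
        intro z hz
        have hz' : ‖z‖ = r := by simpa using hz
        rw [← hz']
        exact hb z (by rw [hz']; exact (le_max_left _ _).trans hr))
    rw [← h1, norm_mul, Complex.norm_natCast, mul_div_assoc] at h3
    have h4 := le_of_mul_le_mul_left h3 (by positivity)
    refine h4.trans ?_
    rw [div_le_iff₀ (by positivity), mul_assoc]
    gcongr
    obtain ⟨m, rfl⟩ := Nat.exists_eq_add_of_lt hn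
    rw [pow_succ, mul_comm, mul_assoc, mul_inv_cancel₀ hr0.ne', mul_one]
    exact pow_le_pow_right₀ hr1 (by omega)
  have h5 : Tendsto (fun r : ℝ => C * r⁻¹) atTop (𝓝 0) := by
    simpa using tendsto_inv_atTop_zero.const_mul C
  have := ge_of_tendsto h5 (eventually_atTop.2 ⟨_, h2⟩)
  simpa using this

theorem growth_of_lower_bound (h : ℂ → ℂ) (hd : Differentiable ℂ h) (δ : ℝ) (hδ : 0 < δ)
    (hb : ∀ z, 1 ≤ ‖z‖ → δ ≤ ‖h z‖) :
    ∃ (N : ℕ) (C R : ℝ), 0 ≤ C ∧ ∀ z, R ≤ ‖z‖ → ‖h z‖ ≤ C * ‖z‖ ^ N := by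
  let G : ℂ → ℂ := fun z => z * (h z⁻¹)⁻¹
  have hne : ∀ z : ℂ, z ≠ 0 → ‖z‖ < 1 → δ ≤ ‖h z⁻¹‖ := by
    intro z hz hz1
    apply hb
    rw [norm_inv]
    exact (one_le_inv₀ (norm_pos_iff.2 hz)).2 hz1.le
  have hne0 : ∀ z : ℂ, z ≠ 0 → ‖z‖ < 1 → h z⁻¹ ≠ 0 := fun z hz hz1 =>
    norm_pos_iff.1 (hδ.trans_le (hne z hz hz1))
  have hev : ∀ᶠ z : ℂ in 𝓝 0, ‖z‖ < 1 := by
    filter_upwards [Metric.ball_mem_nhds (0 : ℂ) one_pos] with z hz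
    simpa using hz
  have hG : AnalyticAt ℂ G 0 := by
    apply Complex.analyticAt_of_differentiable_on_punctured_nhds_of_continuousAt
    · filter_upwards [self_mem_nhdsWithin, nhdsWithin_le_nhds hev] with z hz hz1
      exact differentiableAt_id.mul
        (((hd _).comp z (differentiableAt_inv hz)).inv (hne0 z hz hz1))
    · have hG0 : G 0 = 0 := by simp [G]
      rw [ContinuousAt, hG0]
      refine squeeze_zero_norm' (a := fun z => ‖z‖ * δ⁻¹) ?_ ?_
      · filter_upwards [hev] with z hz1
        by_cases hz : z = 0
        · simp [hz, G]
        · simp only [G, norm_mul, norm_inv]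
          gcongr
          exact hne z hz hz1
      · have : Tendsto (fun z : ℂ => ‖z‖ * δ⁻¹) (𝓝 0) (𝓝 (‖(0 : ℂ)‖ * δ⁻¹)) :=
          (continuous_norm.mul continuous_const).tendsto _
        simpa using this
  have hGne : ¬ ∀ᶠ z in 𝓝 0, G z = 0 := by
    intro h0
    have : ∀ᶠ z : ℂ in 𝓝[≠] 0, False := by
      filter_upwards [self_mem_nhdsWithin, nhdsWithin_le_nhds hev, nhdsWithin_le_nhds h0]
        with z hz hz1 hz2
      exact mul_ne_zero hz (inv_ne_zero (hne0 z hz hz1)) hz2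
    exact this.exists.elim fun _ h => h
  obtain ⟨N, g, hg, hg0, hgG⟩ := hG.exists_eventuallyEq_pow_smul_nonzero_iff.2 hGne
  have hgl : ∀ᶠ z in 𝓝 0, ‖g 0‖ / 2 < ‖g z‖ :=
    hg.continuousAt.norm.eventually_const_lt (by
      have := norm_pos_iff.2 hg0
      linarith)
  have hg2 : 0 < ‖g 0‖ / 2 := by
    have := norm_pos_iff.2 hg0
    linarith
  obtain ⟨ρ, hρ, hball⟩ := Metric.eventually_nhds_iff.1 (hev.and (hgl.and hgG))
  refine ⟨N, (‖g 0‖ / 2)⁻¹, max 1 (2 / ρ), by positivity, fun z hz => ?_⟩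
  have hz1 : 1 ≤ ‖z‖ := (le_max_left _ _).trans hz
  have hz2 : 2 / ρ ≤ ‖z‖ := (le_max_right _ _).trans hz
  have hz0 : z ≠ 0 := norm_pos_iff.1 (by linarith)
  have hzp : 0 < ‖z‖ := by linarith
  obtain ⟨-, h2, h3⟩ := hball (y := z⁻¹) (by
    rw [dist_zero_right, norm_inv, inv_lt_comm₀ hzp hρ]
    refine lt_of_lt_of_le ?_ hz2
    rw [div_eq_mul_inv]
    have := inv_pos.2 hρ
    linarith)
  have hh : 0 < ‖h z‖ := hδ.trans_le (hb z hz1)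
  have h4 := congrArg norm h3
  simp only [G, inv_inv, sub_zero, norm_mul, norm_inv, norm_smul, norm_pow, inv_pow] at h4
  have h5 : ‖h z‖ * ‖g z⁻¹‖ = ‖z‖⁻¹ * ‖z‖ ^ N := by
    have hzN : 0 < ‖z‖ ^ N := by positivity
    rw [eq_inv_mul_iff_mul_eq₀ hzN.ne'] at h4
    rw [← h4]
    field_simp
  have h6 : ‖z‖⁻¹ * ‖z‖ ^ N ≤ ‖z‖ ^ N := by
    have : ‖z‖⁻¹ ≤ 1 := inv_le_one_of_one_le₀ hz1
    exact mul_le_of_le_one_left (by positivity) this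
  rw [inv_mul_eq_div, le_div_iff₀ hg2]
  calc ‖h z‖ * (‖g 0‖ / 2) ≤ ‖h z‖ * ‖g z⁻¹‖ := by gcongr
    _ ≤ _ := by rw [h5]; exact h6

end generic

theorem summable_coeff (f : ℍ[ℝ] → ℍ[ℝ]) (c : ℕ → ℍ[ℝ])
    (hreg : ∀ q : ℍ[ℝ], HasSum (fun n : ℕ => q ^ n * c n) (f q)) (r : NNReal) :
    Summable fun n => ‖c n‖ * (r : ℝ) ^ n := by
  have := (hreg ((r : ℝ) : ℍ[ℝ])).summable.norm
  simpa [norm_mul, norm_pow, mul_comm] using this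

/-- The null-cone lemma. -/
theorem exists_unit_min (α β : ℍ[ℝ]) : ∃ J : ℍ[ℝ], J * J = -1 ∧
    (∀ a b : ℝ, ‖(a : ℍ[ℝ]) + b • J‖ ^ 2 = a ^ 2 + b ^ 2) ∧
    ‖α + J * β‖ ^ 2 ≤ ‖(⟨α.re, β.re⟩ : ℂ) ^ 2 + (⟨α.imI, β.imI⟩ : ℂ) ^ 2
      + (⟨α.imJ, β.imJ⟩ : ℂ) ^ 2 + (⟨α.imK, β.imK⟩ : ℂ) ^ 2‖ := by
  -- V = Im (β * star α)
  obtain ⟨V, hV⟩ : ∃ V, V = β * star α := ⟨_, rfl⟩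
  obtain ⟨s, hs⟩ : ∃ s, s = √(V.imI ^ 2 + V.imJ ^ 2 + V.imK ^ 2) := ⟨_, rfl⟩
  have hs0 : 0 ≤ s := hs ▸ Real.sqrt_nonneg _
  have hs2 : s ^ 2 = V.imI ^ 2 + V.imJ ^ 2 + V.imK ^ 2 := by
    rw [hs, Real.sq_sqrt (by positivity)]
  obtain ⟨x, y, z, h1, h2⟩ : ∃ x y z : ℝ, x ^ 2 + y ^ 2 + z ^ 2 = 1 ∧
      x * V.imI + y * V.imJ + z * V.imK = s := by
    by_cases h : s = 0
    · refine ⟨1, 0, 0, by norm_num, ?_⟩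
      rw [h] at hs2 ⊢
      have : V.imI ^ 2 = 0 := by nlinarith [sq_nonneg V.imI, sq_nonneg V.imJ, sq_nonneg V.imK]
      simpa using this
    · refine ⟨V.imI / s, V.imJ / s, V.imK / s, ?_, ?_⟩
      · field_simp
        linarith
      · field_simp
        linarith
  obtain ⟨J, j0, j1, j2, j3⟩ : ∃ J : ℍ[ℝ], J.re = 0 ∧ J.imI = x ∧ J.imJ = y ∧ J.imK = z :=
    ⟨⟨0, x, y, z⟩, rfl, rfl, rfl, rfl⟩
  refine ⟨J, ?_, ?_, ?_⟩
  · ext <;> simp [j0, j1, j2, j3] <;> linarith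
  · intro a b
    simp only [sq ‖_‖, ← Quaternion.normSq_eq_norm_mul_self, Quaternion.normSq_def']
    simp [j0, j1, j2, j3]
    linear_combination b ^ 2 * h1
  · have e1 : ‖α + J * β‖ ^ 2 = ‖α‖ ^ 2 + ‖β‖ ^ 2 - 2 * s := by
      simp only [sq ‖_‖, ← Quaternion.normSq_eq_norm_mul_self, Quaternion.normSq_def']
      rw [← h2, hV]
      simp [j0, j1, j2, j3]
      linear_combination (β.re ^ 2 + β.imI ^ 2 + β.imJ ^ 2 + β.imK ^ 2) * h1
    have e2 : ‖(⟨α.re, β.re⟩ : ℂ) ^ 2 + (⟨α.imI, β.imI⟩ : ℂ) ^ 2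
      + (⟨α.imJ, β.imJ⟩ : ℂ) ^ 2 + (⟨α.imK, β.imK⟩ : ℂ) ^ 2‖ ^ 2 =
        (‖α‖ ^ 2 + ‖β‖ ^ 2 - 2 * s) * (‖α‖ ^ 2 + ‖β‖ ^ 2 + 2 * s) := by
      have : (‖α‖ ^ 2 + ‖β‖ ^ 2 - 2 * s) * (‖α‖ ^ 2 + ‖β‖ ^ 2 + 2 * s)
        = (‖α‖ ^ 2 + ‖β‖ ^ 2) ^ 2 - 4 * s ^ 2 := by ring
      rw [this, hs2, hV, Complex.sq_norm, Complex.normSq_apply]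
      simp only [sq ‖_‖, ← Quaternion.normSq_eq_norm_mul_self, Quaternion.normSq_def']
      simp [sq]
      ring
    rw [e1]
    have p1 : 0 ≤ ‖α‖ ^ 2 + ‖β‖ ^ 2 - 2 * s := e1 ▸ by positivity
    refine abs_le_of_sq_le_sq' ?_ (norm_nonneg _) |>.2
    rw [e2]
    nlinarith

noncomputable def cmp4 (k : Fin 4) : ℍ[ℝ] →L[ℝ] ℝ :=
  LinearMap.toContinuousLinearMap
    (LinearMap.proj k ∘ₗ (QuaternionAlgebra.linearEquivTuple (-1 : ℝ) 0 (-1)).toLinearMap)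

theorem cmp4_zero (q : ℍ[ℝ]) : cmp4 0 q = q.re := rfl
theorem cmp4_one (q : ℍ[ℝ]) : cmp4 1 q = q.imI := rfl
theorem cmp4_two (q : ℍ[ℝ]) : cmp4 2 q = q.imJ := rfl
theorem cmp4_three (q : ℍ[ℝ]) : cmp4 3 q = q.imK := rfl

/-- complexified component functions -/
noncomputable def compE (c : ℕ → ℍ[ℝ]) (k : Fin 4) (z : ℂ) : ℂ :=
  ∑' n, z ^ n * ((cmp4 k (c n) : ℝ) : ℂ)

section core
variable {f : ℍ[ℝ] → ℍ[ℝ]} {c : ℕ → ℍ[ℝ]}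

theorem summable_cmp (hreg : ∀ q : ℍ[ℝ], HasSum (fun n : ℕ => q ^ n * c n) (f q)) (k : Fin 4)
    (r : NNReal) : Summable fun n => ‖((cmp4 k (c n) : ℝ) : ℂ)‖ * (r : ℝ) ^ n := by
  refine Summable.of_nonneg_of_le (fun n => by positivity) (fun n => ?_)
    ((summable_coeff f c hreg r).mul_left ‖cmp4 k‖)
  rw [← mul_assoc]
  gcongr
  rw [Complex.norm_real]
  exact (cmp4 k).le_opNorm _

theorem hasSum_compE (hreg : ∀ q : ℍ[ℝ], HasSum (fun n : ℕ => q ^ n * c n) (f q)) (k : Fin 4)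
    (z : ℂ) : HasSum (fun n => z ^ n * ((cmp4 k (c n) : ℝ) : ℂ)) (compE c k z) := by
  refine Summable.hasSum (Summable.of_norm ?_)
  have := summable_cmp hreg k ‖z‖₊
  simpa [mul_comm] using this

theorem slice (hreg : ∀ q : ℍ[ℝ], HasSum (fun n : ℕ => q ^ n * c n) (f q)) (z : ℂ) :
    ∃ α β : ℍ[ℝ], (∀ k, compE c k z = ⟨cmp4 k α, cmp4 k β⟩) ∧
      ∀ J : ℍ[ℝ], J * J = -1 → f ((z.re : ℍ[ℝ]) + z.im • J) = α + J * β := by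
  have hs := summable_coeff f c hreg ‖z‖₊
  have h1 : Summable fun n => (z ^ n).re • c n := by
    refine Summable.of_norm_bounded hs fun n => ?_
    rw [norm_smul, mul_comm]
    gcongr
    simpa using Complex.abs_re_le_norm (z ^ n)
  have h2 : Summable fun n => (z ^ n).im • c n := by
    refine Summable.of_norm_bounded hs fun n => ?_
    rw [norm_smul, mul_comm]
    gcongr
    simpa using Complex.abs_im_le_norm (z ^ n)
  refine ⟨∑' n, (z ^ n).re • c n, ∑' n, (z ^ n).im • c n, fun k => ?_, fun J hJ => ?_⟩
  rotate_left 1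
  · have h3 := h1.hasSum.add (h2.hasSum.mul_left J)
    refine (hreg _).unique ?_
    convert h3 using 2 with n
    have : (z.re : ℍ[ℝ]) + z.im • J = Complex.liftAux J hJ z := by
      rw [Complex.liftAux_apply]; rfl
    rw [this, ← map_pow, Complex.liftAux_apply, add_mul, smul_mul_assoc, mul_smul_comm,
      Algebra.smul_def (z ^ n).re]
  · have hE := hasSum_compE hreg k z
    apply Complex.ext
    · refine (Complex.hasSum_re hE).unique ?_
      convert h1.hasSum.mapL (cmp4 k) using 2 with n
      simp
    · refine (Complex.hasSum_im hE).unique ?_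
      convert h2.hasSum.mapL (cmp4 k) using 2 with n
      simp

noncomputable def hfun (c : ℕ → ℍ[ℝ]) (w : ℍ[ℝ]) (z : ℂ) : ℂ :=
  ∑ k, (compE c k z - ((cmp4 k w : ℝ) : ℂ)) ^ 2

theorem hfun_min (hreg : ∀ q : ℍ[ℝ], HasSum (fun n : ℕ => q ^ n * c n) (f q)) (w : ℍ[ℝ]) (z : ℂ) :
    ∃ q : ℍ[ℝ], ‖q‖ = ‖z‖ ∧ ‖f q - w‖ ^ 2 ≤ ‖hfun c w z‖ := by
  obtain ⟨α, β, h1, h2⟩ := slice hreg z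
  obtain ⟨J, hJ, hn, hm⟩ := exists_unit_min (α - w) β
  refine ⟨(z.re : ℍ[ℝ]) + z.im • J, ?_, ?_⟩
  · rw [← sq_eq_sq₀ (norm_nonneg _) (norm_nonneg _), hn, Complex.sq_norm, Complex.normSq_apply]
    ring
  · rw [h2 J hJ, show α + J * β - w = α - w + J * β by abel]
    refine hm.trans (le_of_eq ?_)
    have key : ∀ k, compE c k z - ((cmp4 k w : ℝ) : ℂ) = ⟨cmp4 k (α - w), cmp4 k β⟩ := by
      intro k
      rw [h1, map_sub]
      apply Complex.ext <;> simp
    simp only [hfun, Fin.sum_univ_four, key]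
    rfl

theorem compE_differentiable (hreg : ∀ q : ℍ[ℝ], HasSum (fun n : ℕ => q ^ n * c n) (f q))
    (k : Fin 4) : Differentiable ℂ (compE c k) := fun z =>
  ((rightSeries_hasFPowerSeries ℂ _ _ (summable_cmp hreg k)
    (hasSum_compE hreg k)).analyticOnNhd z (by simp)).differentiableAt

theorem hfun_differentiable (hreg : ∀ q : ℍ[ℝ], HasSum (fun n : ℕ => q ^ n * c n) (f q))
    (w : ℍ[ℝ]) : Differentiable ℂ (hfun c w) := by
  unfold hfun
  have := compE_differentiable hreg
  fun_prop

theorem strictDeriv (hreg : ∀ q : ℍ[ℝ], HasSum (fun n : ℕ => q ^ n * c n) (f q)) :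
    HasStrictFDerivAt f ((ContinuousLinearMap.mul ℝ ℍ[ℝ]).flip (c 1)) 0 := by
  have h := (rightSeries_hasFPowerSeries ℝ c f (summable_coeff f c hreg)
    hreg).hasFPowerSeriesAt.hasStrictFDerivAt
  refine h.congr_fderiv ?_
  ext1 v
  simp [rightSeries_apply]

theorem exists_lower (hreg : ∀ q : ℍ[ℝ], HasSum (fun n : ℕ => q ^ n * c n) (f q))
    (hinj : Function.Injective f) (hc : c 1 ≠ 0) :
    ∃ ε : ℝ, 0 < ε ∧ ∀ w, ‖w - f 0‖ < ε → ∀ z, 1 ≤ ‖z‖ → ε ^ 2 ≤ ‖hfun c w z‖ := by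
  have hm := (strictDeriv hreg).map_nhds_eq_of_surj (by
    rw [LinearMap.range_eq_top]
    intro y
    exact ⟨y * (c 1)⁻¹, by simp [hc]⟩)
  have himg : f '' Metric.ball 0 1 ∈ nhds (f 0) := by
    rw [← hm]
    exact Filter.image_mem_map (Metric.ball_mem_nhds _ one_pos)
  obtain ⟨ε, hε, hb⟩ := Metric.mem_nhds_iff.1 himg
  refine ⟨ε / 2, by positivity, fun w hw z hz => ?_⟩
  obtain ⟨q, hq, hq2⟩ := hfun_min hreg w z
  refine le_trans ?_ hq2
  by_contra hlt
  push Not at hlt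
  have h1 : ‖f q - w‖ < ε / 2 := lt_of_pow_lt_pow_left₀ 2 (by positivity) hlt
  have h2 : f q ∈ Metric.ball (f 0) ε := by
    rw [mem_ball_iff_norm]
    calc ‖f q - f 0‖ = ‖(f q - w) + (w - f 0)‖ := by congr 1; abel
      _ ≤ ‖f q - w‖ + ‖w - f 0‖ := norm_add_le _ _
      _ < ε := by linarith
  obtain ⟨q', hq', he⟩ := hb h2
  rw [hinj he] at hq'
  have : ‖q‖ < 1 := by simpa using hq'
  linarith

theorem exists_basis (k : Fin 4) : ∃ e : ℍ[ℝ], ∀ j, cmp4 j e = if j = k then 1 else 0 := by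
  refine ⟨(QuaternionAlgebra.linearEquivTuple (-1 : ℝ) 0 (-1)).symm
    (fun j => if j = k then 1 else 0), fun j => ?_⟩
  fin_cases j <;> rfl

theorem compE_growth (hreg : ∀ q : ℍ[ℝ], HasSum (fun n : ℕ => q ^ n * c n) (f q))
    (hinj : Function.Injective f) (hc : c 1 ≠ 0) (k : Fin 4) :
    ∃ (N : ℕ) (C R : ℝ), ∀ z, R ≤ ‖z‖ → ‖compE c k z‖ ≤ C * ‖z‖ ^ N := by
  obtain ⟨ε, hε, hl⟩ := exists_lower hreg hinj hc
  have hgr : ∀ w, ‖w - f 0‖ < ε → ∃ (N : ℕ) (C R : ℝ), 0 ≤ C ∧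
      ∀ z, R ≤ ‖z‖ → ‖hfun c w z‖ ≤ C * ‖z‖ ^ N := fun w hw =>
    growth_of_lower_bound _ (hfun_differentiable hreg w) (ε ^ 2) (by positivity) (hl w hw)
  obtain ⟨e, he⟩ := exists_basis k
  obtain ⟨s, hs, hse⟩ : ∃ s : ℝ, 0 < s ∧ s * ‖e‖ < ε := by
    refine ⟨ε / (‖e‖ + 1), by positivity, ?_⟩
    rw [div_mul_eq_mul_div, div_lt_iff₀ (by positivity)]
    nlinarith
  obtain ⟨N₀, C₀, R₀, hC₀, hb₀⟩ := hgr (f 0) (by simpa using hε)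
  obtain ⟨N₁, C₁, R₁, hC₁, hb₁⟩ := hgr (f 0 + s • e) (by
    rw [add_sub_cancel_left, norm_smul, Real.norm_eq_abs, abs_of_pos hs]
    exact hse)
  have hid : ∀ z, 2 * (s : ℂ) * compE c k z = 2 * s * (cmp4 k (f 0) : ℝ) + (s : ℂ) ^ 2
      + hfun c (f 0) z - hfun c (f 0 + s • e) z := by
    intro z
    simp only [hfun, Fin.sum_univ_four, map_add, map_smul, he]
    fin_cases k <;> simp <;> ring
  refine ⟨N₀ + N₁, (2 * s)⁻¹ * (‖2 * (s : ℂ) * (cmp4 k (f 0) : ℝ) + (s : ℂ) ^ 2‖ + C₀ + C₁),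
    max 1 (max R₀ R₁), fun z hz => ?_⟩
  have hz1 : 1 ≤ ‖z‖ := (le_max_left _ _).trans hz
  have hz2 : R₀ ≤ ‖z‖ := ((le_max_left _ _).trans (le_max_right _ _)).trans hz
  have hz3 : R₁ ≤ ‖z‖ := ((le_max_right _ _).trans (le_max_right _ _)).trans hz
  have h4 : 2 * s * ‖compE c k z‖ = ‖2 * (s : ℂ) * compE c k z‖ := by
    simp [abs_of_pos hs]
  rw [mul_assoc, ← div_eq_inv_mul, le_div_iff₀ (by positivity), mul_comm, h4, hid z]
  refine (norm_sub_le _ _).trans ?_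
  rw [add_mul, add_mul]
  refine add_le_add ((norm_add_le _ _).trans (add_le_add ?_ ?_)) ?_
  · exact le_mul_of_one_le_right (norm_nonneg _) (one_le_pow₀ hz1)
  · refine (hb₀ z hz2).trans ?_
    gcongr
    omega
  · refine (hb₁ z hz3).trans ?_
    gcongr
    omega

theorem coeff_eventually_zero (hreg : ∀ q : ℍ[ℝ], HasSum (fun n : ℕ => q ^ n * c n) (f q))
    (hinj : Function.Injective f) (hc : c 1 ≠ 0) : ∃ N : ℕ, ∀ n, N < n → c n = 0 := by
  choose N C R hb using compE_growth hreg hinj hc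
  refine ⟨∑ k, N k, fun n hn => ?_⟩
  have h : ∀ k, cmp4 k (c n) = 0 := by
    intro k
    have := coeff_eq_zero_of_growth _ _ (summable_cmp hreg k) (hasSum_compE hreg k) (N k) (C k)
      (R k) (hb k) n (lt_of_le_of_lt (Finset.single_le_sum (fun _ _ => Nat.zero_le _)
        (Finset.mem_univ k)) hn)
    exact_mod_cast this
  ext
  · exact h 0
  · exact h 1
  · exact h 2
  · exact h 3

open Polynomial in
theorem coeff_zero_of_two_le (hreg : ∀ q : ℍ[ℝ], HasSum (fun n : ℕ => q ^ n * c n) (f q))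
    (hinj : Function.Injective f) (hc : c 1 ≠ 0) : ∀ n, 2 ≤ n → c n = 0 := by
  classical
  obtain ⟨N₀, hN₀⟩ := coeff_eventually_zero hreg hinj hc
  by_contra hcon
  push Not at hcon
  obtain ⟨n₀, hn₀, hcn₀⟩ := hcon
  -- the largest index with nonzero coefficient
  obtain ⟨m, hm1, hcm, hmax⟩ : ∃ m, 1 ≤ m ∧ c (m + 1) ≠ 0 ∧ ∀ n, m + 1 < n → c n = 0 := by
    have hle : n₀ ≤ N₀ := by
      by_contra h
      exact hcn₀ (hN₀ _ (by omega))
    have h1 := Nat.findGreatest_spec (P := fun n => c n ≠ 0) hle hcn₀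
    have h2 := Nat.le_findGreatest (P := fun n => c n ≠ 0) hle hcn₀
    refine ⟨Nat.findGreatest (fun n => c n ≠ 0) N₀ - 1, by omega, ?_, fun n hn => ?_⟩
    · rwa [Nat.sub_add_cancel (by omega)]
    · by_contra h
      by_cases hnN : n ≤ N₀
      · have := Nat.le_findGreatest (P := fun n => c n ≠ 0) hnN h
        omega
      · exact h (hN₀ n (by omega))
  let P : Fin 4 → ℂ[X] := fun k =>
    ∑ i ∈ Finset.range (m + 1), Polynomial.monomial i ((cmp4 k (c (i + 1)) : ℝ) : ℂ)
  have hPc : ∀ k i, i ≤ m → (P k).coeff i = ((cmp4 k (c (i + 1)) : ℝ) : ℂ) := by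
    intro k i hi
    simp only [P, Polynomial.finsetSum_coeff, Polynomial.coeff_monomial]
    rw [Finset.sum_ite_eq' ]
    rw [if_pos (Finset.mem_range.2 (by omega))]
  have hPd : ∀ k, (P k).natDegree ≤ m := by
    intro k
    refine Polynomial.natDegree_sum_le_of_forall_le _ _ fun i hi => ?_
    exact (Polynomial.natDegree_monomial_le _).trans (by
      have := Finset.mem_range.1 hi
      omega)
  have hf0 : f 0 = c 0 := by
    refine (hreg 0).unique ?_
    convert hasSum_single (α := ℍ[ℝ]) 0 (f := fun n : ℕ => (0 : ℍ[ℝ]) ^ n * c n) ?_ using 1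
    · simp
    · intro n hn
      simp [hn]
  have hPE : ∀ k z, compE c k z - ((cmp4 k (f 0) : ℝ) : ℂ) = z * (P k).eval z := by
    intro k z
    have h1 : compE c k z = ∑ i ∈ Finset.range (m + 2), z ^ i * ((cmp4 k (c i) : ℝ) : ℂ) := by
      refine (hasSum_compE hreg k z).unique (hasSum_sum_of_ne_finset_zero fun i hi => ?_)
      rw [hmax i (by
        have := Finset.mem_range.not.1 hi
        omega)]
      simp
    rw [h1, Finset.sum_range_succ', hf0]
    simp only [P, Polynomial.eval_finsetSum, Polynomial.eval_monomial, Finset.mul_sum]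
    simp only [pow_zero, one_mul, add_sub_cancel_right]
    refine Finset.sum_congr rfl fun i _ => ?_
    ring
  let g : ℂ[X] := ∑ k, P k ^ 2
  have hsq : ∀ q : ℍ[ℝ], q ≠ 0 → ∑ k, (((cmp4 k q : ℝ) : ℂ)) ^ 2 ≠ 0 := by
    intro q hq h
    have h' : ∑ k, (cmp4 k q) ^ 2 = 0 := by exact_mod_cast h
    rw [Finset.sum_eq_zero_iff_of_nonneg (fun _ _ => sq_nonneg _)] at h'
    have h2 : ∀ k, cmp4 k q = 0 := fun k => by simpa using h' k (Finset.mem_univ k)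
    apply hq
    ext
    · exact h2 0
    · exact h2 1
    · exact h2 2
    · exact h2 3
  have hgm : g.coeff (m + m) ≠ 0 := by
    have : g.coeff (m + m) = ∑ k, (((cmp4 k (c (m + 1)) : ℝ) : ℂ)) ^ 2 := by
      simp only [g, Polynomial.finsetSum_coeff]
      refine Finset.sum_congr rfl fun k _ => ?_
      rw [sq, Polynomial.coeff_mul_add_eq_of_natDegree_le (hPd k) (hPd k), hPc k m le_rfl, sq]
    rw [this]
    exact hsq _ hcm
  have hdeg : g.degree ≠ 0 := by
    intro h
    have := Polynomial.coeff_eq_zero_of_degree_lt (n := m + m) (p := g) (by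
      rw [h]; exact_mod_cast (by omega : 0 < m + m))
    exact hgm this
  obtain ⟨z, hz⟩ := IsAlgClosed.exists_root g hdeg
  have hz' : ∑ k, ((P k).eval z) ^ 2 = 0 := by
    simpa [g, Polynomial.IsRoot, Polynomial.eval_finsetSum] using hz
  have hz0 : z ≠ 0 := by
    rintro rfl
    refine hsq _ hc ?_
    rw [← hz']
    refine Finset.sum_congr rfl fun k _ => ?_
    rw [← Polynomial.coeff_zero_eq_eval_zero, hPc k 0 (by omega)]
  have hh : hfun c (f 0) z = 0 := by
    simp only [hfun, hPE, mul_pow]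
    rw [← Finset.mul_sum, hz', mul_zero]
  obtain ⟨q, hq, hq2⟩ := hfun_min hreg (f 0) z
  rw [hh, norm_zero] at hq2
  have h3 : f q = f 0 := by
    have : ‖f q - f 0‖ = 0 := by
      have := sq_nonneg ‖f q - f 0‖
      exact pow_eq_zero_iff (two_ne_zero) |>.1 (le_antisymm hq2 this)
    exact sub_eq_zero.1 (norm_eq_zero.1 this)
  have h4 := hinj h3
  rw [h4, norm_zero] at hq
  exact hz0 (norm_eq_zero.1 hq.symm)

end core

/-- Recentering at a real point. -/
theorem recenter {f : ℍ[ℝ] → ℍ[ℝ]} {c : ℕ → ℍ[ℝ]}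
    (hreg : ∀ q : ℍ[ℝ], HasSum (fun n : ℕ => q ^ n * c n) (f q)) (t : ℝ) :
    ∃ c' : ℕ → ℍ[ℝ], ∀ q : ℍ[ℝ], HasSum (fun n : ℕ => q ^ n * c' n) (f (q + t)) := by
  let F : ℍ[ℝ] → ℕ × ℕ → ℍ[ℝ] := fun q p =>
    q ^ p.1 * ((((p.1 + p.2).choose p.1 : ℝ) * t ^ p.2) • c (p.1 + p.2))
  have hanti : ∀ q n, ∑ p ∈ Finset.HasAntidiagonal.antidiagonal n, F q p = (q + t) ^ n * c n := by
    intro q n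
    have hcomm : Commute q (t : ℍ[ℝ]) := (Quaternion.coe_commutes t q).symm
    rw [hcomm.add_pow', Finset.sum_mul]
    refine Finset.sum_congr rfl fun p hp => ?_
    rw [Finset.HasAntidiagonal.mem_antidiagonal] at hp
    simp only [F, hp]
    rw [← Quaternion.coe_mul_eq_smul]
    push_cast
    rw [nsmul_eq_mul, ← mul_assoc, ← mul_assoc, ← (Nat.cast_commute _ (q ^ p.1)).eq]
    simp only [mul_assoc]
  have hsum : ∀ q, Summable (F q) := by
    intro q
    rw [← Finset.HasAntidiagonal.sigmaAntidiagonalEquivProd.summable_iff]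
    refine Summable.of_norm ?_
    rw [summable_sigma_of_nonneg (fun _ => norm_nonneg _)]
    refine ⟨fun n => (hasSum_fintype _).summable, ?_⟩
    have hs := summable_coeff f c hreg (‖q‖₊ + ‖t‖₊)
    refine hs.congr fun n => ?_
    rw [tsum_fintype]
    have : ∑ b : Finset.HasAntidiagonal.antidiagonal n, ‖F q b‖ = ∑ p ∈ Finset.HasAntidiagonal.antidiagonal n, ‖F q p‖ :=
      Finset.sum_coe_sort (Finset.HasAntidiagonal.antidiagonal n) (fun p => ‖F q p‖)
    simp only [Function.comp, Finset.HasAntidiagonal.sigmaAntidiagonalEquivProd_apply]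
    rw [this]
    push_cast
    rw [(Commute.all ‖q‖ ‖t‖).add_pow', Finset.mul_sum]
    refine Finset.sum_congr rfl fun p hp => ?_
    rw [Finset.HasAntidiagonal.mem_antidiagonal] at hp
    simp only [F, hp]
    simp [norm_smul]
    ring
  let c' : ℕ → ℍ[ℝ] := fun k => ∑' m, (((k + m).choose k : ℝ) * t ^ m) • c (k + m)
  have hc' : ∀ k, HasSum (fun m => (((k + m).choose k : ℝ) * t ^ m) • c (k + m)) (c' k) := by
    intro k
    refine Summable.hasSum ?_
    have := (hsum 1).prod_factor k
    simpa [F] using this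
  refine ⟨c', fun q => ?_⟩
  have h1 : HasSum (F q) (f (q + t)) := by
    have h2 := (hsum q).hasSum
    have h3 := (Finset.HasAntidiagonal.sigmaAntidiagonalEquivProd.hasSum_iff.2 h2)
    have h4 := h3.sigma (g := fun n => (q + t) ^ n * c n) (fun n => by
      rw [← hanti q n]
      exact (Finset.HasAntidiagonal.antidiagonal n).hasSum (F q))
    rwa [(hreg (q + t)).unique h4]
  exact h1.prod_fiberwise fun k => (hc' k).mul_left (q ^ k)

theorem injective_entire_iff_affine (f : ℍ[ℝ] → ℍ[ℝ]) (c : ℕ → ℍ[ℝ])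
    (hreg : ∀ q : ℍ[ℝ], HasSum (fun n : ℕ => q ^ n * c n) (f q)) :
    Function.Injective f ↔ ∃ a b : ℍ[ℝ], a ≠ 0 ∧ ∀ q : ℍ[ℝ], f q = q * a + b := by
  constructor
  · intro hinj
    obtain ⟨t, c', hc', hc1⟩ : ∃ (t : ℝ) (c' : ℕ → ℍ[ℝ]),
        (∀ q : ℍ[ℝ], HasSum (fun n : ℕ => q ^ n * c' n) (f (q + t))) ∧ c' 1 ≠ 0 := by
      by_contra hcon
      push Not at hcon
      have hder : ∀ t : ℝ, HasDerivAt (fun s : ℝ => f (s : ℍ[ℝ])) 0 t := by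
        intro t
        obtain ⟨c', hc'⟩ := recenter hreg t
        have h0 := hcon t c' hc'
        have h1 := (strictDeriv (f := fun q => f (q + t)) hc').hasFDerivAt
        rw [h0, map_zero] at h1
        have h2 : HasDerivAt (fun s : ℝ => ((s - t : ℝ) : ℍ[ℝ])) 1 t := by
          have := ((hasDerivAt_id t).sub_const t).smul_const (1 : ℍ[ℝ])
          simpa [Algebra.smul_def] using! this
        have h1' : HasFDerivAt (fun q => f (q + t)) (0 : ℍ[ℝ] →L[ℝ] ℍ[ℝ])
            ((t - t : ℝ) : ℍ[ℝ]) := by simpa using h1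
        have h3 := h1'.comp_hasDerivAt t h2
        simpa [Function.comp_def] using h3
      have h5 := is_const_of_deriv_eq_zero (fun t => (hder t).differentiableAt)
        (fun t => (hder t).deriv) 0 1
      have h6 := hinj h5
      simp at h6
    have hinj' : Function.Injective (fun q => f (q + t)) :=
      fun x y h => add_right_cancel (hinj h)
    have hz := coeff_zero_of_two_le hc' hinj' hc1
    have hf : ∀ q, f (q + t) = q * c' 1 + c' 0 := by
      intro q
      refine (hc' q).unique ?_
      have : HasSum (fun n : ℕ => q ^ n * c' n) (∑ i ∈ Finset.range 2, q ^ i * c' i) :=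
        hasSum_sum_of_ne_finset_zero fun i hi => by
          rw [hz i (by simpa [Nat.succ_le_iff] using hi), mul_zero]
      simpa [Finset.sum_range_succ, add_comm] using this
    refine ⟨c' 1, c' 0 - t * c' 1, hc1, fun q => ?_⟩
    have := hf (q - t)
    rw [sub_add_cancel] at this
    rw [this, sub_mul]
    abel
  · rintro ⟨a, b, ha, h⟩ x y hxy
    rw [h, h] at hxy
    exact mul_right_cancel₀ ha (add_right_cancel hxy)
end

section
/- If f : ℍ → ℍ is a bijection such that both f and its inverse f⁻¹ are regular on all of ℍ (i.e. each is given by an everywhere-convergent power series ∑_{n≥0} qⁿaₙ), then f is a regular affine transformation: f(q) = qa + b for some a, b ∈ ℍ with a ≠ 0. Hence the group Aut(ℍ) of biregular self-maps of ℍ coincides with the group of regular affine transformations. -/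
open Quaternion

open Filter Topology Asymptotics Bornology in
theorem poly_of_growth (m : ℕ) : ∀ (p : ℂ → ℂ), Differentiable ℂ p →
    p =o[cocompact ℂ] (fun z => z ^ m) → ∃ P : Polynomial ℂ, ∀ z, p z = P.eval z := by
  induction m with
  | zero =>
    intro p hp ho
    refine ⟨0, fun z => ?_⟩
    simp only [pow_zero] at ho
    have := (isLittleO_one_iff ℂ).1 ho
    simpa using hp.apply_eq_of_tendsto_cocompact z this
  | succ m ih =>
    intro p hp ho
    have h1 : Differentiable ℂ (dslope p 0) := by
      rw [← differentiableOn_univ] at hp ⊢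
      exact (Complex.differentiableOn_dslope (by simp)).2 hp
    have hinf : Tendsto (fun z : ℂ => ‖z‖) (cocompact ℂ) atTop := tendsto_norm_cocompact_atTop
    have hne : ∀ᶠ z : ℂ in cocompact ℂ, z ≠ 0 := by
      filter_upwards [hinf.eventually_gt_atTop 0] with z hz
      exact norm_pos_iff.1 hz
    have h2 : (fun z => p z - p 0) =o[cocompact ℂ] (fun z : ℂ => z ^ (m + 1)) := by
      refine ho.sub (isLittleO_const_left.2 (Or.inr ?_))
      have : (norm ∘ fun z : ℂ => z ^ (m + 1)) = fun z => ‖z‖ ^ (m + 1) := by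
        ext z; simp
      rw [this]
      exact (tendsto_pow_atTop (by simp)).comp hinf
    have h3 : dslope p 0 =o[cocompact ℂ] (fun z => z ^ m) := by
      have h4 := (isBigO_refl (fun z : ℂ => z⁻¹) (cocompact ℂ)).mul_isLittleO h2
      refine h4.congr' ?_ ?_
      · filter_upwards [hne] with z hz
        rw [dslope_of_ne _ hz, slope_def_field, sub_zero, div_eq_inv_mul]
      · filter_upwards [hne] with z hz
        rw [pow_succ']
        field_simp
    obtain ⟨P, hP⟩ := ih _ h1 h3
    refine ⟨Polynomial.C (p 0) + Polynomial.X * P, fun z => ?_⟩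
    have := sub_smul_dslope p 0 z
    simp only [Polynomial.eval_add, Polynomial.eval_C, Polynomial.eval_mul, Polynomial.eval_X, ← hP]
    simp only [sub_zero, smul_eq_mul] at this
    rw [this]; ring

open Filter Topology Asymptotics in
theorem entire_single_zero (h : ℂ → ℂ) (z0 : ℂ) (hd : Differentiable ℂ h)
    (hz : ∀ z, h z = 0 → z = z0) (hinf : Tendsto (fun z => ‖h z‖) (cocompact ℂ) atTop) :
    ∃ (C : ℂ) (m : ℕ), ∀ z, h z = C * (z - z0) ^ m := by
  have ha : AnalyticAt ℂ h z0 := hd.analyticAt z0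
  have hnz : ¬ ∀ᶠ z in 𝓝 z0, h z = 0 := by
    intro hh
    have h2 : ∀ᶠ z in 𝓝[≠] z0, False := by
      filter_upwards [hh.filter_mono nhdsWithin_le_nhds, self_mem_nhdsWithin] with z h1 h2
      exact h2 (hz z h1)
    rw [eventually_false_iff_eq_bot] at h2
    exact (inferInstance : (𝓝[≠] z0).NeBot).ne h2
  obtain ⟨m, k, hk, hk0, hke⟩ := ha.exists_eventuallyEq_pow_smul_nonzero_iff.2 hnz
  -- the inverse of the nonvanishing factor
  set p : ℂ → ℂ := fun z => if z = z0 then (k z0)⁻¹ else (z - z0) ^ m / h z with hpdef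
  have hp0 : ∀ z, p z ≠ 0 := by
    intro z
    by_cases e : z = z0
    · simp [hpdef, e, hk0]
    · simp only [hpdef, e, if_false]
      exact div_ne_zero (pow_ne_zero _ (sub_ne_zero.2 e)) (fun h' => e (hz z h'))
  have hpd : Differentiable ℂ p := by
    intro z
    by_cases e : z = z0
    · subst e
      have : (fun w => (k w)⁻¹) =ᶠ[𝓝 z] p := by
        filter_upwards [hke, hk.continuousAt.eventually_ne hk0] with w hw hw2
        by_cases e : w = z
        · simp [hpdef, e]
        · have := pow_ne_zero m (sub_ne_zero.2 e)
          simp only [hpdef, e, if_false, hw, smul_eq_mul]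
          field_simp
      exact (hk.differentiableAt.inv hk0).congr_of_eventuallyEq this.symm
    · have : (fun w => (w - z0) ^ m / h w) =ᶠ[𝓝 z] p := by
        filter_upwards [isOpen_ne.mem_nhds e] with w hw
        simp only [hpdef]
        rw [if_neg hw]
      refine DifferentiableAt.congr_of_eventuallyEq ?_ this.symm
      exact (by fun_prop : DifferentiableAt ℂ (fun w => (w - z0) ^ m) z).div (hd z)
        (fun h' => e (hz z h'))
  have hn : Tendsto (fun z : ℂ => ‖z‖) (cocompact ℂ) atTop := tendsto_norm_cocompact_atTop
  have hgr : p =o[cocompact ℂ] (fun z => z ^ (m + 1)) := by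
    have h1 : p =O[cocompact ℂ] (fun z => z ^ m) := by
      refine IsBigO.of_bound (2 ^ m) ?_
      filter_upwards [hinf.eventually_ge_atTop 1, hn.eventually_gt_atTop ‖z0‖] with z h1 h2
      have e : z ≠ z0 := by rintro rfl; exact lt_irrefl _ h2
      simp only [hpdef, e, if_false, norm_div, norm_pow]
      rw [← mul_pow]
      refine (div_le_self (by positivity) h1).trans ?_
      refine pow_le_pow_left₀ (norm_nonneg _) ?_ _
      have := norm_sub_le z z0
      linarith
    refine h1.trans_isLittleO ?_
    have h2 : (fun _ : ℂ => (1:ℂ)) =o[cocompact ℂ] (fun z : ℂ => z) :=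
      isLittleO_const_left.2 (Or.inr hn)
    have := (isBigO_refl (fun z : ℂ => z ^ m) (cocompact ℂ)).mul_isLittleO h2
    simpa [pow_succ] using this
  obtain ⟨P, hP⟩ := poly_of_growth _ p hpd hgr
  have hdeg : P.degree = 0 := by
    by_contra hdeg
    obtain ⟨w, hw⟩ := IsAlgClosed.exists_root P hdeg
    exact hp0 w (by rw [hP]; exact hw)
  rw [Polynomial.eq_C_of_degree_eq_zero hdeg] at hP
  simp only [Polynomial.eval_C] at hP
  set c := P.coeff 0
  have hc : c ≠ 0 := by rw [← hP 0]; exact hp0 0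
  have key : ∀ z, z ≠ z0 → h z = c⁻¹ * (z - z0) ^ m := by
    intro z e
    have h1 := hP z
    simp only [hpdef, e, if_false] at h1
    have h2 : h z ≠ 0 := fun h' => e (hz z h')
    rw [← h1]
    have := pow_ne_zero m (sub_ne_zero.2 e)
    field_simp
  refine ⟨c⁻¹, m, fun z => ?_⟩
  have hcont : h = fun z => c⁻¹ * (z - z0) ^ m := by
    refine Continuous.ext_on (dense_compl_singleton z0) hd.continuous (by fun_prop) ?_
    intro z e
    exact key z e
  exact congrFun hcont z

theorem quat_min (α β : ℍ[ℝ]) : ∃ I : ℍ[ℝ], I * I = -1 ∧ I.re = 0 ∧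
    (normSq (α + I * β)) ^ 2 ≤ (normSq α - normSq β) ^ 2 +
      4 * (α.re * β.re + α.imI * β.imI + α.imJ * β.imJ + α.imK * β.imK) ^ 2 := by
  obtain ⟨x, hx⟩ : ∃ x, x = (α * star β).imI := ⟨_, rfl⟩
  obtain ⟨y, hy⟩ : ∃ x, x = (α * star β).imJ := ⟨_, rfl⟩
  obtain ⟨z, hz⟩ : ∃ x, x = (α * star β).imK := ⟨_, rfl⟩
  simp only [Quaternion.imI_mul, Quaternion.imJ_mul, Quaternion.imK_mul, Quaternion.re_star,
    Quaternion.imI_star, Quaternion.imJ_star, Quaternion.imK_star] at hx hy hz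
  obtain ⟨M, hM⟩ : ∃ M, M = Real.sqrt (x^2+y^2+z^2) := ⟨_, rfl⟩
  have hM0 : 0 ≤ M := hM ▸ Real.sqrt_nonneg _
  have hM2 : M^2 = x^2+y^2+z^2 := by rw [hM, Real.sq_sqrt]; positivity
  -- choose the unit vector
  obtain ⟨p, q, r, hpqr, hdot⟩ : ∃ p q r : ℝ, p^2+q^2+r^2 = 1 ∧ p*x+q*y+r*z = -M := by
    by_cases h : M = 0
    · have hx0 : x = 0 := by nlinarith [sq_nonneg x, sq_nonneg y, sq_nonneg z]
      have hy0 : y = 0 := by nlinarith [sq_nonneg x, sq_nonneg y, sq_nonneg z]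
      have hz0 : z = 0 := by nlinarith [sq_nonneg x, sq_nonneg y, sq_nonneg z]
      exact ⟨1, 0, 0, by norm_num, by rw [hx0, hy0, hz0, h]; ring⟩
    · refine ⟨-x/M, -y/M, -z/M, ?_, ?_⟩
      · field_simp; linarith
      · field_simp; linarith
  obtain ⟨I, h0, h1, h2, h3⟩ : ∃ I : ℍ[ℝ], I.re = 0 ∧ I.imI = p ∧ I.imJ = q ∧ I.imK = r :=
    ⟨⟨0, p, q, r⟩, rfl, rfl, rfl, rfl⟩
  refine ⟨I, ?_, h0, ?_⟩
  · ext <;> simp [h0, h1, h2, h3] <;> nlinarith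
  · obtain ⟨A, hA⟩ : ∃ A, A = normSq α + normSq β := ⟨_, rfl⟩
    have e1 : normSq (α + I * β) = A - 2 * M := by
      have : M = -(p*x+q*y+r*z) := by linarith
      rw [this, hA, hx, hy, hz]
      simp only [Quaternion.normSq_def', Quaternion.re_add, Quaternion.imI_add, Quaternion.imJ_add,
        Quaternion.imK_add, Quaternion.re_mul, Quaternion.imI_mul, Quaternion.imJ_mul,
        Quaternion.imK_mul, h0, h1, h2, h3]
      linear_combination (β.re^2+β.imI^2+β.imJ^2+β.imK^2) * hpqr
    have e2 : 0 ≤ A - 2 * M := e1 ▸ normSq_nonneg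
    rw [e1]
    have e3 : (normSq α - normSq β) ^ 2 +
      4 * (α.re * β.re + α.imI * β.imI + α.imJ * β.imJ + α.imK * β.imK) ^ 2
      = A^2 - 4*M^2 := by
      rw [hM2, hA, hx, hy, hz]
      simp only [Quaternion.normSq_def']
      ring
    rw [e3]
    nlinarith

theorem quat_norm_summable (f : ℍ[ℝ] → ℍ[ℝ]) (c : ℕ → ℍ[ℝ])
    (hf : ∀ q : ℍ[ℝ], HasSum (fun n : ℕ => q ^ n * c n) (f q)) (r : ℝ) (hr : 0 ≤ r) :
    Summable (fun n : ℕ => r ^ n * ‖c n‖) := by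
  have h := (hf (r : ℍ[ℝ])).summable.norm
  refine h.congr fun n => ?_
  rw [norm_mul, norm_pow, Quaternion.norm_coe, Real.norm_of_nonneg hr]

theorem quat_bound (f : ℍ[ℝ] → ℍ[ℝ]) (c : ℕ → ℍ[ℝ])
    (hf : ∀ q : ℍ[ℝ], HasSum (fun n : ℕ => q ^ n * c n) (f q)) (r : ℝ) (hr : 0 ≤ r) :
    ∃ K : ℝ, ∀ q : ℍ[ℝ], ‖q‖ ≤ r → ‖f q‖ ≤ K := by
  refine ⟨∑' n, r ^ n * ‖c n‖, fun q hq => ?_⟩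
  rw [← (hf q).tsum_eq]
  refine tsum_of_norm_bounded (quat_norm_summable f c hf r hr).hasSum fun n => ?_
  rw [norm_mul, norm_pow]
  gcongr

theorem entire_series (a : ℕ → ℝ) (ha : ∀ r : ℝ, 0 ≤ r → Summable (fun n : ℕ => r ^ n * |a n|)) :
    ∃ F : ℂ → ℂ, Differentiable ℂ F ∧ ∀ z, HasSum (fun n : ℕ => z ^ n * (a n : ℂ)) (F z) := by
  refine ⟨fun z => ∑' n : ℕ, z ^ n * (a n : ℂ), fun z => ?_, fun z => ?_⟩
  · have h := Complex.differentiableOn_tsum_of_summable_norm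
      (F := fun (n : ℕ) (z : ℂ) => z ^ n * (a n : ℂ))
      (ha (‖z‖ + 1) (by positivity)) (U := Metric.ball 0 (‖z‖ + 1))
      (fun n => by fun_prop) Metric.isOpen_ball (fun n w hw => by
        rw [norm_mul, norm_pow, Complex.norm_real, Real.norm_eq_abs]
        have : ‖w‖ ≤ ‖z‖ + 1 := by simpa using (Metric.mem_ball.1 hw).le
        gcongr)
    exact h.differentiableAt (Metric.isOpen_ball.mem_nhds (by simp))
  · refine Summable.hasSum (Summable.of_norm ?_)
    refine (ha ‖z‖ (norm_nonneg _)).congr fun n => ?_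
    rw [norm_mul, norm_pow, Complex.norm_real, Real.norm_eq_abs]

theorem slice_rep (f : ℍ[ℝ] → ℍ[ℝ]) (c : ℕ → ℍ[ℝ])
    (hf : ∀ q : ℍ[ℝ], HasSum (fun n : ℕ => q ^ n * c n) (f q)) :
    ∃ F : (ℍ[ℝ] →L[ℝ] ℝ) → ℂ → ℂ, (∀ l, Differentiable ℂ (F l)) ∧
      (∀ l (x : ℝ), F l x = ((l (f (x : ℍ[ℝ])) : ℝ) : ℂ)) ∧
      ∀ z : ℂ, ∃ α β : ℍ[ℝ], (∀ l, l α = (F l z).re ∧ l β = (F l z).im) ∧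
        ∀ (I : ℍ[ℝ]) (_ : I * I = -1), f ((z.re : ℍ[ℝ]) + z.im • I) = α + I * β := by
  have hs := quat_norm_summable f c hf
  have h1 : ∀ l : ℍ[ℝ] →L[ℝ] ℝ, ∃ F : ℂ → ℂ, Differentiable ℂ F ∧
      ∀ z, HasSum (fun n : ℕ => z ^ n * ((l (c n) : ℝ) : ℂ)) (F z) := by
    intro l
    refine entire_series _ fun r hr => ?_
    refine Summable.of_nonneg_of_le (fun n => by positivity) (fun n => ?_)
      ((hs r hr).mul_left ‖l‖)
    have := l.le_opNorm (c n)
    rw [Real.norm_eq_abs] at this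
    calc r ^ n * |l (c n)| ≤ r ^ n * (‖l‖ * ‖c n‖) := by gcongr
      _ = _ := by ring
  choose F hF hFs using h1
  refine ⟨F, hF, fun l x => ?_, fun z => ?_⟩
  · have h2 := (hf (x : ℍ[ℝ])).mapL l
    have h3 : HasSum (fun n : ℕ => (x : ℂ) ^ n * ((l (c n) : ℝ) : ℂ)) ((l (f (x : ℍ[ℝ])) : ℝ) : ℂ) := by
      have h4 := h2.mapL Complex.ofRealCLM
      refine h4.congr_fun fun n => ?_
      rw [← Quaternion.coe_pow, Quaternion.coe_mul_eq_smul]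
      simp
    exact (hFs l x).unique h3
  · have sα : Summable (fun n : ℕ => (z ^ n).re • c n) := by
      refine Summable.of_norm_bounded (hs ‖z‖ (norm_nonneg _)) fun n => ?_
      rw [norm_smul, ← norm_pow]
      gcongr
      exact Complex.abs_re_le_norm _
    have sβ : Summable (fun n : ℕ => (z ^ n).im • c n) := by
      refine Summable.of_norm_bounded (hs ‖z‖ (norm_nonneg _)) fun n => ?_
      rw [norm_smul, ← norm_pow]
      gcongr
      exact Complex.abs_im_le_norm _
    obtain ⟨α, hα⟩ := sα
    obtain ⟨β, hβ⟩ := sβ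
    refine ⟨α, β, fun l => ⟨?_, ?_⟩, fun I hI => ?_⟩
    · have h2 := hα.mapL l
      have h3 := (hFs l z).mapL Complex.reCLM
      refine h2.unique (h3.congr_fun fun n => ?_)
      simp
    · have h2 := hβ.mapL l
      have h3 := (hFs l z).mapL Complex.imCLM
      refine h2.unique (h3.congr_fun fun n => ?_)
      simp
    · have h2 := hα.add (hβ.mul_left I)
      refine (hf _).unique (h2.congr_fun fun n => ?_)
      have e : ∀ w : ℂ, Complex.liftAux I hI w = (w.re : ℍ[ℝ]) + w.im • I := fun w => rfl
      rw [← e, ← map_pow, e, add_mul, Quaternion.coe_mul_eq_smul]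
      simp

theorem pow_aux {A B s t : ℝ} {a b : ℕ} (hA : 0 < A) (hB : 0 < B) (hs : 1 < s) (hst : s < t)
    (hab : a ≤ b) (h1 : A * s ^ a = B * s ^ b) (h2 : A * t ^ a = B * t ^ b) : a = b ∧ A = B := by
  obtain ⟨k, rfl⟩ := Nat.exists_eq_add_of_le hab
  have hs0 : 0 < s := by linarith
  have ht0 : 0 < t := by linarith
  have e1 : A = B * s ^ k := by
    have := pow_pos hs0 a
    rw [pow_add] at h1
    refine mul_right_cancel₀ this.ne' ?_
    rw [h1]; ring
  have e2 : A = B * t ^ k := by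
    have := pow_pos ht0 a
    rw [pow_add] at h2
    refine mul_right_cancel₀ this.ne' ?_
    rw [h2]; ring
  have hk : k = 0 := by
    by_contra hk
    have := pow_lt_pow_left₀ hst hs0.le hk
    nlinarith
  subst hk
  simpa using e1

theorem scaled_isometry {E : Type*} [NormedAddCommGroup E] (u : ℝ → E)
    (hu : Function.Injective u)
    (H : ∀ x0, ∃ (C : ℝ) (m : ℕ), ∀ x, ‖u x - u x0‖ ^ 2 = C * (x - x0) ^ m) :
    ∃ C : ℝ, 0 < C ∧ ∀ x y, ‖u x - u y‖ ^ 2 = C * (x - y) ^ 2 := by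
  choose C m hC using H
  have hpos : ∀ x y, x ≠ y → 0 < ‖u x - u y‖ ^ 2 := fun x y h =>
    pow_pos (norm_pos_iff.2 (sub_ne_zero.2 (hu.ne h))) 2
  have C0 : ∀ x, 0 < C x := by
    intro x
    have h := hpos (x + 1) x (by simp)
    rw [hC] at h
    simpa using h
  have me : ∀ x, Even (m x) := by
    intro x
    have h := hpos (x - 1) x (by simp)
    rw [hC] at h
    rcases Nat.even_or_odd (m x) with h1 | h1
    · exact h1
    · exfalso
      rw [show x - 1 - x = -1 by ring, h1.neg_one_pow] at h
      linarith [C0 x]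
  have m0 : ∀ x, m x ≠ 0 := by
    intro x h0
    have h := hC x x
    rw [h0] at h
    simp at h
    exact (C0 x).ne' h.symm
  have sym : ∀ x y, C x * (y - x) ^ m x = C y * (y - x) ^ m y := by
    intro x y
    rw [← hC x y, norm_sub_rev, hC y x, ← (me y).neg_pow, neg_sub]
  have C1 : ∀ x, C (x + 1) = C x := by
    intro x
    have := sym x (x + 1)
    simpa using this.symm
  have C2 : ∀ x, C (x + 2) = C x ∧ m (x + 2) = m x := by
    intro x
    have h1 : C (x + 2) = C x := by
      rw [show x + 2 = x + 1 + 1 by ring, C1, C1]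
    refine ⟨h1, ?_⟩
    have h2 := sym x (x + 2)
    rw [h1] at h2
    have h3 := mul_left_cancel₀ (C0 x).ne' h2
    rw [show x + 2 - x = 2 by ring] at h3
    exact (pow_right_injective₀ (by norm_num) (by norm_num) h3).symm
  have Cn : ∀ (n : ℕ) x, C (x + 2 * n) = C x ∧ m (x + 2 * n) = m x := by
    intro n x
    induction n with
    | zero => simp
    | succ n ih =>
      rw [show x + 2 * ((n + 1 : ℕ) : ℝ) = x + 2 * n + 2 by push_cast; ring, (C2 _).1, (C2 _).2]
      exact ih
  have all : ∀ x, m 0 = m x ∧ C 0 = C x := by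
    intro x
    obtain ⟨n, hn⟩ := exists_nat_gt (1 - x)
    have hn0 : (0 : ℝ) ≤ n := Nat.cast_nonneg n
    have e1 := sym 0 (x + 2 * n)
    have e2 := sym 0 (x + 2 * n + 2)
    rw [(C2 _).1, (C2 _).2] at e2
    rw [(Cn n x).1, (Cn n x).2, sub_zero] at e1 e2
    rcases le_total (m 0) (m x) with h | h
    · exact pow_aux (C0 0) (C0 x) (by linarith) (by linarith) h e1 e2
    · have := pow_aux (C0 x) (C0 0) (by linarith) (by linarith) h e1.symm e2.symm
      exact ⟨this.1.symm, this.2.symm⟩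
  have hm2 : m 0 = 2 := by
    have a1 := hC 0 2
    have a2 := hC 0 1
    have a3 := hC 1 2
    rw [← (all 1).1, ← (all 1).2] at a3
    norm_num at a1 a2 a3
    have tri : ‖u 2 - u 0‖ ≤ ‖u 2 - u 1‖ + ‖u 1 - u 0‖ := norm_sub_le_norm_sub_add_norm_sub _ _ _
    have n1 := norm_nonneg (u 2 - u 0)
    have h4 : C 0 * 2 ^ m 0 ≤ C 0 * 4 := by
      nlinarith [sq_nonneg (‖u 2 - u 1‖ - ‖u 1 - u 0‖)]
    have h5 : (2 : ℝ) ^ m 0 ≤ 2 ^ 2 := by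
      have := le_of_mul_le_mul_left h4 (C0 0)
      linarith
    have h6 := (pow_le_pow_iff_right₀ (by norm_num : (1 : ℝ) < 2)).1 h5
    obtain ⟨k, hk⟩ := me 0
    have := m0 0
    omega
  refine ⟨C 0, C0 0, fun x y => ?_⟩
  rw [hC, ← (all y).1, ← (all y).2, hm2]

theorem affine_of_scaled (u : ℝ → ℍ[ℝ]) (C : ℝ) (hC : 0 < C)
    (h : ∀ x y, ‖u x - u y‖ ^ 2 = C * (x - y) ^ 2) (x : ℝ) : u x = u 0 + x • (u 1 - u 0) := by
  set s := Real.sqrt C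
  have hs : 0 < s := Real.sqrt_pos.2 hC
  have hs2 : s ^ 2 = C := Real.sq_sqrt hC.le
  have hi : Isometry (fun x => s⁻¹ • u x) := by
    refine Isometry.of_dist_eq fun x y => ?_
    rw [dist_eq_norm, dist_eq_norm, ← smul_sub, norm_smul, norm_inv, Real.norm_of_nonneg hs.le]
    have : ‖u x - u y‖ = s * ‖x - y‖ := by
      rw [← sq_eq_sq₀ (norm_nonneg _) (by positivity), h, mul_pow, hs2, Real.norm_eq_abs, sq_abs]
    rw [this]
    field_simp
  have h1 := AffineMap.apply_lineMap hi.affineIsometryOfStrictConvexSpace.toAffineMap (0:ℝ) 1 x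
  rw [AffineMap.lineMap_apply, AffineMap.lineMap_apply] at h1
  simp only [vsub_eq_sub, vadd_eq_add, sub_zero, smul_eq_mul, mul_one, add_zero,
    AffineIsometry.coe_toAffineMap, Isometry.affineIsometryOfStrictConvexSpace_apply] at h1
  rw [← smul_sub, smul_comm x, ← smul_add] at h1
  have := smul_right_injective ℍ[ℝ] (inv_ne_zero hs.ne') h1
  rw [this, add_comm]

theorem exists_slice (q : ℍ[ℝ]) : ∃ (z : ℂ) (I : ℍ[ℝ]), I * I = -1 ∧ q = (z.re : ℍ[ℝ]) + z.im • I := by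
  obtain ⟨M, hM⟩ : ∃ M, M = Real.sqrt (q.imI^2+q.imJ^2+q.imK^2) := ⟨_, rfl⟩
  have hM2 : M^2 = q.imI^2+q.imJ^2+q.imK^2 := by rw [hM, Real.sq_sqrt]; positivity
  obtain ⟨p, r, s, hprs, h1, h2, h3⟩ : ∃ p r s : ℝ, p^2+r^2+s^2 = 1 ∧
      q.imI = M * p ∧ q.imJ = M * r ∧ q.imK = M * s := by
    by_cases h : M = 0
    · rw [h] at hM2
      have hx0 : q.imI = 0 := by nlinarith [sq_nonneg q.imI, sq_nonneg q.imJ, sq_nonneg q.imK]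
      have hy0 : q.imJ = 0 := by nlinarith [sq_nonneg q.imI, sq_nonneg q.imJ, sq_nonneg q.imK]
      have hz0 : q.imK = 0 := by nlinarith [sq_nonneg q.imI, sq_nonneg q.imJ, sq_nonneg q.imK]
      exact ⟨1, 0, 0, by norm_num, by simp [h, hx0], by simp [hy0], by simp [hz0]⟩
    · refine ⟨q.imI/M, q.imJ/M, q.imK/M, ?_, ?_, ?_, ?_⟩
      · field_simp; linarith
      all_goals field_simp
  obtain ⟨I, i0, i1, i2, i3⟩ : ∃ I : ℍ[ℝ], I.re = 0 ∧ I.imI = p ∧ I.imJ = r ∧ I.imK = s :=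
    ⟨⟨0, p, r, s⟩, rfl, rfl, rfl, rfl⟩
  refine ⟨⟨q.re, M⟩, I, ?_, ?_⟩
  · ext <;> simp [i0, i1, i2, i3] <;> nlinarith
  · ext <;> simp [i0, i1, i2, i3, h1, h2, h3]

/-- The real component as a continuous linear functional. -/
noncomputable def compRe : ℍ[ℝ] →L[ℝ] ℝ :=
  ⟨{ toFun := fun q => q.re, map_add' := fun _ _ => rfl, map_smul' := fun _ _ => rfl },
    Quaternion.continuous_re⟩
/-- The first imaginary component as a continuous linear functional. -/
noncomputable def compI : ℍ[ℝ] →L[ℝ] ℝ :=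
  ⟨{ toFun := fun q => q.imI, map_add' := fun _ _ => rfl, map_smul' := fun _ _ => rfl },
    Quaternion.continuous_imI⟩
/-- The second imaginary component as a continuous linear functional. -/
noncomputable def compJ : ℍ[ℝ] →L[ℝ] ℝ :=
  ⟨{ toFun := fun q => q.imJ, map_add' := fun _ _ => rfl, map_smul' := fun _ _ => rfl },
    Quaternion.continuous_imJ⟩
/-- The third imaginary component as a continuous linear functional. -/
noncomputable def compK : ℍ[ℝ] →L[ℝ] ℝ :=
  ⟨{ toFun := fun q => q.imK, map_add' := fun _ _ => rfl, map_smul' := fun _ _ => rfl },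
    Quaternion.continuous_imK⟩

theorem comp_apply : (∀ q, compRe q = q.re) ∧ (∀ q, compI q = q.imI) ∧ (∀ q, compJ q = q.imJ) ∧
    (∀ q, compK q = q.imK) := ⟨fun _ => rfl, fun _ => rfl, fun _ => rfl, fun _ => rfl⟩

theorem ext_functional (a b : ℍ[ℝ]) (h : ∀ l : ℍ[ℝ] →L[ℝ] ℝ, l a = l b) : a = b := by
  ext
  · exact h compRe
  · exact h compI
  · exact h compJ
  · exact h compK

open Filter in
theorem real_power_law (f g : ℍ[ℝ] → ℍ[ℝ]) (c d : ℕ → ℍ[ℝ])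
    (hf : ∀ q : ℍ[ℝ], HasSum (fun n : ℕ => q ^ n * c n) (f q))
    (hg : ∀ q : ℍ[ℝ], HasSum (fun n : ℕ => q ^ n * d n) (g q))
    (hgf : ∀ q : ℍ[ℝ], g (f q) = q) (x0 : ℝ) :
    ∃ (C : ℝ) (m : ℕ), ∀ x : ℝ, ‖f (x : ℍ[ℝ]) - f (x0 : ℍ[ℝ])‖ ^ 2 = C * (x - x0) ^ m := by
  obtain ⟨F, hF, hFr, hFs⟩ := slice_rep f c hf
  obtain ⟨b, hb⟩ : ∃ b, b = f (x0 : ℍ[ℝ]) := ⟨_, rfl⟩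
  rw [← hb]
  obtain ⟨h, hh⟩ : ∃ h : ℂ → ℂ, h = fun z => (F compRe z - (b.re : ℂ)) ^ 2 + (F compI z - (b.imI : ℂ)) ^ 2
    + (F compJ z - (b.imJ : ℂ)) ^ 2 + (F compK z - (b.imK : ℂ)) ^ 2 := ⟨_, rfl⟩
  have hd : Differentiable ℂ h := by
    have := hF compRe
    have := hF compI
    have := hF compJ
    have := hF compK
    rw [hh]
    fun_prop
  have hreal : ∀ x : ℝ, h x = ((‖f (x : ℍ[ℝ]) - b‖ ^ 2 : ℝ) : ℂ) := by
    intro x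
    rw [sq ‖_‖, ← Quaternion.normSq_eq_norm_mul_self, Quaternion.normSq_def', hh]
    simp only [hFr]
    simp only [comp_apply.1, comp_apply.2.1, comp_apply.2.2.1, comp_apply.2.2.2]
    simp
  have hmin : ∀ z, ∃ q : ℍ[ℝ], q.re = z.re ∧ ‖q‖ = ‖z‖ ∧ ‖f q - b‖ ^ 2 ≤ ‖h z‖ := by
    intro z
    obtain ⟨α, β, hαβ, hI⟩ := hFs z
    obtain ⟨I, hII, hI0, hle⟩ := quat_min (α - b) β
    refine ⟨(z.re : ℍ[ℝ]) + z.im • I, by simp [hI0], ?_, ?_⟩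
    · have h2 : I.imI ^ 2 + I.imJ ^ 2 + I.imK ^ 2 = 1 := by
        have := congrArg (fun q : ℍ[ℝ] => q.re) hII
        simp [hI0] at this
        linarith
      rw [← sq_eq_sq₀ (norm_nonneg _) (norm_nonneg _), sq ‖_‖, ← Quaternion.normSq_eq_norm_mul_self,
        Quaternion.normSq_def', ← Complex.normSq_eq_norm_sq, Complex.normSq_apply]
      simp [hI0]
      linear_combination z.im ^ 2 * h2
    · rw [hI I hII, sq ‖_‖, ← Quaternion.normSq_eq_norm_mul_self]
      rw [show α + I * β - b = α - b + I * β by abel]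
      refine (sq_le_sq₀ normSq_nonneg (norm_nonneg _)).1 ?_
      refine hle.trans (le_of_eq ?_)
      have a0 := hαβ compRe
      have a1 := hαβ compI
      have a2 := hαβ compJ
      have a3 := hαβ compK
      rw [comp_apply.1, comp_apply.1] at a0
      rw [comp_apply.2.1, comp_apply.2.1] at a1
      rw [comp_apply.2.2.1, comp_apply.2.2.1] at a2
      rw [comp_apply.2.2.2, comp_apply.2.2.2] at a3
      rw [← Complex.normSq_eq_norm_sq, Complex.normSq_apply, hh]
      simp only [Quaternion.normSq_def', Quaternion.re_sub, Quaternion.imI_sub, Quaternion.imJ_sub,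
        Quaternion.imK_sub, sq, Complex.add_re, Complex.add_im, Complex.mul_re, Complex.mul_im,
        Complex.sub_re, Complex.sub_im, Complex.ofReal_re, Complex.ofReal_im]
      simp only [a0.1, a0.2, a1.1, a1.2, a2.1, a2.2, a3.1, a3.2]
      ring
  have hz : ∀ z, h z = 0 → z = (x0 : ℂ) := by
    intro z hz
    obtain ⟨q, q1, q2, q3⟩ := hmin z
    rw [hz, norm_zero] at q3
    have e : f q = f (x0 : ℍ[ℝ]) := by
      rw [← hb, ← sub_eq_zero, ← norm_eq_zero]
      exact pow_eq_zero_iff (two_ne_zero) |>.1 (le_antisymm q3 (by positivity))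
    have e2 : q = (x0 : ℍ[ℝ]) := by rw [← hgf q, e, hgf]
    rw [e2] at q1 q2
    simp at q1
    rw [Quaternion.norm_coe, Real.norm_eq_abs, ← sq_eq_sq₀ (abs_nonneg _) (norm_nonneg _), sq_abs,
      ← Complex.normSq_eq_norm_sq, Complex.normSq_apply, q1] at q2
    have : z.im = 0 := by nlinarith
    apply Complex.ext <;> simp [q1, this]
  have hinf : Tendsto (fun z => ‖h z‖) (cocompact ℂ) atTop := by
    rw [tendsto_atTop]
    intro B
    obtain ⟨K, hK⟩ := quat_bound g d hg (‖b‖ + (|B| + 1)) (by positivity)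
    filter_upwards [(tendsto_norm_cocompact_atTop (E := ℂ)).eventually_gt_atTop K] with z hzK
    by_contra hlt
    push Not at hlt
    obtain ⟨q, q1, q2, q3⟩ := hmin z
    have h1 : ‖f q - b‖ ≤ |B| + 1 := by
      have := le_abs_self B
      have := abs_nonneg B
      have := norm_nonneg (f q - b)
      by_contra! hc
      nlinarith
    have h2 : ‖f q‖ ≤ ‖b‖ + (|B| + 1) := by
      have := norm_le_norm_add_norm_sub b (f q)
      rw [norm_sub_rev] at this
      linarith
    have := hK _ h2
    rw [hgf, q2] at this
    linarith
  obtain ⟨C, m, hCm⟩ := entire_single_zero h x0 hd hz hinf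
  refine ⟨C.re, m, fun x => ?_⟩
  have h1 := hreal x
  rw [hCm] at h1
  have h2 := congrArg Complex.re h1
  rw [Complex.ofReal_re] at h2
  rw [← h2, ← Complex.ofReal_sub, ← Complex.ofReal_pow, Complex.re_mul_ofReal]

open Filter Topology in
theorem entire_eq_of_real (F G : ℂ → ℂ) (hF : Differentiable ℂ F) (hG : Differentiable ℂ G)
    (h : ∀ x : ℝ, F x = G x) : F = G := by
  have a1 : AnalyticOnNhd ℂ F Set.univ := fun z _ => hF.analyticAt z
  have a2 : AnalyticOnNhd ℂ G Set.univ := fun z _ => hG.analyticAt z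
  refine a1.eq_of_frequently_eq a2 (z₀ := ((0 : ℝ) : ℂ)) ?_
  have ht : Tendsto (fun x : ℝ => (x : ℂ)) (𝓝[≠] 0) (𝓝[≠] ((0 : ℝ) : ℂ)) := by
    refine tendsto_nhdsWithin_of_tendsto_nhds_of_eventually_within _ ?_ ?_
    · exact (Complex.continuous_ofReal.tendsto 0).mono_left nhdsWithin_le_nhds
    · filter_upwards [self_mem_nhdsWithin] with x hx
      simpa using hx
  exact ht.frequently (Eventually.of_forall h).frequently

/-- A biregular self-map of `ℍ` (a bijection `f` such that both `f` and its inverse are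
entire regular functions) is a regular affine transformation `q ↦ qa + b` with `a ≠ 0`.
Hence `Aut(ℍ)` coincides with the group of regular affine transformations. -/
theorem biregular_is_affine (f g : ℍ[ℝ] → ℍ[ℝ]) (c d : ℕ → ℍ[ℝ])
    (hf : ∀ q : ℍ[ℝ], HasSum (fun n : ℕ => q ^ n * c n) (f q))
    (hg : ∀ q : ℍ[ℝ], HasSum (fun n : ℕ => q ^ n * d n) (g q))
    (hgf : ∀ q : ℍ[ℝ], g (f q) = q) (hfg : ∀ q : ℍ[ℝ], f (g q) = q) :
    ∃ a b : ℍ[ℝ], a ≠ 0 ∧ ∀ q : ℍ[ℝ], f q = q * a + b := by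
  obtain ⟨C, hC, h1⟩ := scaled_isometry (fun x : ℝ => f (x : ℍ[ℝ]))
    (fun x y hxy => by
      have : ((x : ℝ) : ℍ[ℝ]) = y := by rw [← hgf (x : ℍ[ℝ]), ← hgf (y : ℍ[ℝ])]; exact congrArg g hxy
      exact Quaternion.coe_injective this)
    (real_power_law f g c d hf hg hgf)
  have h2 := affine_of_scaled (fun x : ℝ => f (x : ℍ[ℝ])) C hC h1
  obtain ⟨b, hb⟩ : ∃ b, b = f ((0 : ℝ) : ℍ[ℝ]) := ⟨_, rfl⟩
  obtain ⟨a, ha⟩ : ∃ a, a = f ((1 : ℝ) : ℍ[ℝ]) - b := ⟨_, rfl⟩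
  simp only [← hb, ← ha] at h2
  refine ⟨a, b, ?_, fun q => ?_⟩
  · rintro rfl
    have e : f ((1 : ℝ) : ℍ[ℝ]) = f ((0 : ℝ) : ℍ[ℝ]) := by rw [← hb]; exact (sub_eq_zero.1 ha.symm)
    have e2 : ((1 : ℝ) : ℍ[ℝ]) = ((0 : ℝ) : ℍ[ℝ]) := by
      rw [← hgf ((1 : ℝ) : ℍ[ℝ]), e, hgf]
    have e3 : (1 : ℝ) = 0 := Quaternion.coe_injective e2
    norm_num at e3
  · obtain ⟨F, hF, hFr, hFs⟩ := slice_rep f c hf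
    have hFl : ∀ l, F l = fun z => ((l b : ℝ) : ℂ) + z * ((l a : ℝ) : ℂ) := by
      intro l
      refine entire_eq_of_real _ _ (hF l) (by fun_prop) fun x => ?_
      rw [hFr, h2]
      simp
    obtain ⟨z, I, hI, rfl⟩ := exists_slice q
    obtain ⟨α, β, hαβ, hfz⟩ := hFs z
    rw [hfz I hI]
    have hα : α = b + z.re • a := by
      refine ext_functional _ _ fun l => ?_
      rw [(hαβ l).1, hFl]
      simp
    have hβ : β = z.im • a := by
      refine ext_functional _ _ fun l => ?_
      rw [(hαβ l).2, hFl]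
      simp
    rw [hα, hβ, add_mul, Quaternion.coe_mul_eq_smul, smul_mul_assoc, mul_smul_comm]
    abel
end

section
/- Let A = [[a,c],[b,d]] and B = [[α,γ],[β,δ]] be invertible 2×2 quaternionic matrices, and let AB = [[aα+cβ, aγ+cδ],[bα+dβ, bγ+dδ]] be their product. For every q ∈ ℍ such that qc + d ≠ 0, F_A(q)γ + δ ≠ 0 and q(aγ+cδ) + (bγ+dδ) ≠ 0, one has F_B(F_A(q)) = F_{AB}(q). (Thus A ↦ F_A is a group anti-homomorphism from GL(2,ℍ) onto the group of linear fractional transformations.) -/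
open Quaternion Matrix

/-- For invertible quaternionic matrices `A = [[a,c],[b,d]]` and `B = [[α,γ],[β,δ]]`,
the linear fractional transformations satisfy `F_B ∘ F_A = F_{AB}` wherever everything
is defined: the map `A ↦ F_A` is a group anti-homomorphism. -/
theorem linear_fractional_antihom (a c b d α γ β δ : ℍ[ℝ])
    (hA : IsUnit !![a, c; b, d]) (hB : IsUnit !![α, γ; β, δ])
    (q : ℍ[ℝ]) (h1 : q * c + d ≠ 0)
    (h2 : ((q * c + d)⁻¹ * (q * a + b)) * γ + δ ≠ 0)
    (h3 : q * (a * γ + c * δ) + (b * γ + d * δ) ≠ 0) :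
    (((q * c + d)⁻¹ * (q * a + b)) * γ + δ)⁻¹ * (((q * c + d)⁻¹ * (q * a + b)) * α + β) =
      (q * (a * γ + c * δ) + (b * γ + d * δ))⁻¹ * (q * (a * α + c * β) + (b * α + d * β)) := by
  have key : ∀ x y : ℍ[ℝ], q * (a * x + c * y) + (b * x + d * y) =
      (q * c + d) * (((q * c + d)⁻¹ * (q * a + b)) * x + y) := by
    intro x y
    rw [mul_add (q * c + d), ← mul_assoc, ← mul_assoc, mul_inv_cancel₀ h1, one_mul]
    noncomm_ring
  rw [key, key]
  generalize (q * c + d)⁻¹ * (q * a + b) = r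
  rw [_root_.mul_inv_rev, mul_assoc, inv_mul_cancel_left₀ h1]
end

section
/- Let A = [[a,c],[b,d]] be an invertible 2×2 quaternionic matrix. Then F_A(q) = q for every q ∈ ℍ with qc + d ≠ 0 if and only if there exists t ∈ ℝ, t ≠ 0, such that a = d = t and b = c = 0. (The kernel of the anti-homomorphism A ↦ F_A consists exactly of the nonzero real multiples of the identity matrix.) -/
open Quaternion Matrix

/-- For an invertible quaternionic matrix `A = [[a,c],[b,d]]`, the linear fractional
transformation `F_A` is the identity (wherever defined) if and only if `A` is a nonzero
real multiple of the identity matrix. -/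
theorem linear_fractional_kernel (a c b d : ℍ[ℝ]) (hA : IsUnit !![a, c; b, d]) :
    (∀ q : ℍ[ℝ], q * c + d ≠ 0 → (q * c + d)⁻¹ * (q * a + b) = q) ↔
      ∃ t : ℝ, t ≠ 0 ∧ a = (t : ℍ[ℝ]) ∧ d = (t : ℍ[ℝ]) ∧ b = 0 ∧ c = 0 := by
  have hcd : ¬ (c = 0 ∧ d = 0) := by
    rintro ⟨rfl, rfl⟩
    obtain ⟨B, hB⟩ := hA.exists_left_inv
    have h := congrFun (congrFun hB 1) 1
    simp [Matrix.mul_apply, Fin.sum_univ_two] at h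
  constructor
  · intro h
    have key : ∀ q : ℍ[ℝ], q * c + d = 0 ∨ q * a + b = (q * c + d) * q := by
      intro q
      by_cases hq : q * c + d = 0
      · exact Or.inl hq
      · right
        have := h q hq
        rw [inv_mul_eq_iff_eq_mul₀ hq] at this
        exact this
    have real : ∀ t : ℝ, t • c + d = 0 ∨ t • a + b = (t * t) • c + t • d := by
      intro t
      have := key (t : ℍ[ℝ])
      rwa [Quaternion.mul_coe_eq_smul, Quaternion.coe_mul_eq_smul, Quaternion.coe_mul_eq_smul,
        smul_add, smul_smul] at this
    have main : (c = 0 ∧ d = 0) ∨ (c = 0 ∧ a = d ∧ b = 0) := by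
      have h0 := real 0
      have h1 := real 1
      have h2 := real (-1)
      have h3 := real 2
      simp only [Quaternion.ext_iff, Quaternion.re_add, Quaternion.imI_add, Quaternion.imJ_add,
        Quaternion.imK_add, Quaternion.re_smul, Quaternion.imI_smul, Quaternion.imJ_smul,
        Quaternion.imK_smul, Quaternion.re_zero, Quaternion.imI_zero, Quaternion.imJ_zero,
        Quaternion.imK_zero, smul_eq_mul] at h0 h1 h2 h3 ⊢
      rcases h0 with ⟨_, _, _, _⟩ | ⟨_, _, _, _⟩ <;> rcases h1 with ⟨_, _, _, _⟩ | ⟨_, _, _, _⟩ <;>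
        rcases h2 with ⟨_, _, _, _⟩ | ⟨_, _, _, _⟩ <;>
        rcases h3 with ⟨_, _, _, _⟩ | ⟨_, _, _, _⟩ <;>
        first
        | (left; refine ⟨⟨?_, ?_, ?_, ?_⟩, ?_, ?_, ?_, ?_⟩ <;> linarith)
        | (right; refine ⟨⟨?_, ?_, ?_, ?_⟩, ⟨?_, ?_, ?_, ?_⟩, ?_, ?_, ?_, ?_⟩ <;> linarith)
    rcases main with h' | ⟨rfl, rfl, rfl⟩
    · exact absurd h' hcd
    have ha : a ≠ 0 := fun h => hcd ⟨rfl, h⟩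
    have comm : ∀ q : ℍ[ℝ], q * a = a * q := by
      intro q
      have := key q
      simpa [ha] using this
    have comm2 := comm
    simp only [Quaternion.ext_iff, Quaternion.re_mul, Quaternion.imI_mul, Quaternion.imJ_mul,
      Quaternion.imK_mul] at comm2
    have hI := comm2 ⟨0, 1, 0, 0⟩
    have hJ := comm2 ⟨0, 0, 1, 0⟩
    dsimp only at hI hJ
    obtain ⟨_, _, i3, i4⟩ := hI
    obtain ⟨_, j2, _, j4⟩ := hJ
    have hr : a = (a.re : ℍ[ℝ]) := by
      ext <;> simp <;> linarith
    refine ⟨a.re, ?_, hr, hr, rfl, rfl⟩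
    intro h0
    rw [h0] at hr
    exact ha (by simpa using hr)
  · rintro ⟨t, ht, rfl, rfl, rfl, rfl⟩ q hq
    rw [inv_mul_eq_iff_eq_mul₀ hq]
    simp [Quaternion.mul_coe_eq_smul, Quaternion.coe_mul_eq_smul]
end

section
/- Let A = [[a,c],[b,d]] and A′ = [[a′,c′],[b′,d′]] be invertible 2×2 quaternionic matrices. The regular fractional transformations ℱ_A and ℱ_{A′} agree at every q ∈ ℍ at which both are defined if and only if there exists e ∈ ℍ, e ≠ 0, such that a′ = ea, b′ = eb, c′ = ec, d′ = ed (i.e. A′ = eA). -/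
open Quaternion Matrix

/-- The real quadratic denominator `|c|²q² + 2Re(c·conj d)q + |d|²` of the regular
fractional transformation associated to `[[a,c],[b,d]]`. -/
noncomputable def regDenom (c d q : ℍ[ℝ]) : ℍ[ℝ] :=
  ((‖c‖ ^ 2 : ℝ) : ℍ[ℝ]) * q ^ 2 + ((2 * (c * star d).re : ℝ) : ℍ[ℝ]) * q + ((‖d‖ ^ 2 : ℝ) : ℍ[ℝ])

/-- The regular fractional transformation `ℱ_A(q) = (qc+d)^{-*} * (qa+b)` associated to
`A = [[a,c],[b,d]]`, in explicit form. -/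
noncomputable def regFT (a c b d q : ℍ[ℝ]) : ℍ[ℝ] :=
  (regDenom c d q)⁻¹ *
    (q ^ 2 * (star c * a) + q * (star d * a + star c * b) + star d * b)

theorem aux_unit (a c b d : ℍ[ℝ]) (hA : IsUnit !![a, c; b, d]) :
    ∃ x y z w : ℍ[ℝ], (x * a + y * b = 1 ∧ x * c + y * d = 0 ∧ z * a + w * b = 0 ∧
      z * c + w * d = 1) ∧ (a * x + c * z = 1 ∧ a * y + c * w = 0 ∧ b * x + d * z = 0 ∧
      b * y + d * w = 1) := by
  obtain ⟨u, hu⟩ := hA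
  have h1 : (u⁻¹).val * !![a, c; b, d] = 1 := by rw [← hu]; simp
  have h2 : !![a, c; b, d] * (u⁻¹).val = 1 := by rw [← hu]; simp
  generalize (u⁻¹).val = B at h1 h2
  refine ⟨B 0 0, B 0 1, B 1 0, B 1 1, ⟨?_, ?_, ?_, ?_⟩, ?_, ?_, ?_, ?_⟩
  · simpa [Matrix.mul_apply, Fin.sum_univ_two] using congrFun (congrFun h1 0) 0
  · simpa [Matrix.mul_apply, Fin.sum_univ_two] using congrFun (congrFun h1 0) 1
  · simpa [Matrix.mul_apply, Fin.sum_univ_two] using congrFun (congrFun h1 1) 0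
  · simpa [Matrix.mul_apply, Fin.sum_univ_two] using congrFun (congrFun h1 1) 1
  · simpa [Matrix.mul_apply, Fin.sum_univ_two] using congrFun (congrFun h2 0) 0
  · simpa [Matrix.mul_apply, Fin.sum_univ_two] using congrFun (congrFun h2 0) 1
  · simpa [Matrix.mul_apply, Fin.sum_univ_two] using congrFun (congrFun h2 1) 0
  · simpa [Matrix.mul_apply, Fin.sum_univ_two] using congrFun (congrFun h2 1) 1

theorem aux_denom_real (c d : ℍ[ℝ]) (t : ℝ) :
    regDenom c d (t : ℍ[ℝ]) = star (t • c + d) * (t • c + d) := by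
  have h1 := Quaternion.normSq_eq_norm_mul_self c
  have h2 := Quaternion.normSq_eq_norm_mul_self d
  rw [Quaternion.normSq_def'] at h1 h2
  unfold regDenom
  rw [pow_two ‖c‖, pow_two ‖d‖, ← h1, ← h2, ← Quaternion.coe_pow, ← Quaternion.coe_mul,
    ← Quaternion.coe_mul, ← Quaternion.coe_add, ← Quaternion.coe_add]
  rw [Quaternion.star_mul_self, Quaternion.normSq_def']
  congr 1
  simp
  ring

theorem aux_num_real (a c b d : ℍ[ℝ]) (t : ℝ) :
    (t : ℍ[ℝ]) ^ 2 * (star c * a) + (t : ℍ[ℝ]) * (star d * a + star c * b) + star d * b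
      = star (t • c + d) * (t • a + b) := by
  rw [← Quaternion.coe_pow, Quaternion.coe_mul_eq_smul, Quaternion.coe_mul_eq_smul]
  simp only [star_add, Quaternion.star_smul, add_mul, mul_add, smul_mul_assoc,
    mul_smul_comm, smul_add, smul_smul]
  rw [pow_two]; abel

theorem aux_FT_real (a c b d : ℍ[ℝ]) (t : ℝ) (h : t • c + d ≠ 0) :
    regFT a c b d (t : ℍ[ℝ]) = (t • c + d)⁻¹ * (t • a + b) := by
  unfold regFT
  rw [aux_num_real, aux_denom_real, _root_.mul_inv_rev, mul_assoc,
    inv_mul_cancel_left₀ (star_ne_zero.mpr h)]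

theorem aux_good (c d : ℍ[ℝ]) (h : ¬ (c = 0 ∧ d = 0)) (t : ℝ) (ht : ‖d‖ / ‖c‖ < t) :
    t • c + d ≠ 0 := by
  intro h0
  by_cases hc : c = 0
  · subst hc; simp at h0; exact h ⟨rfl, h0⟩
  have ht0 : 0 < t := lt_of_le_of_lt (by positivity) ht
  have hn : 0 < ‖c‖ := norm_pos_iff.mpr hc
  have : ‖t • c‖ = ‖d‖ := by rw [eq_neg_of_add_eq_zero_left h0, norm_neg]
  rw [norm_smul, Real.norm_of_nonneg ht0.le] at this
  rw [div_lt_iff₀ hn] at ht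
  linarith

theorem aux_quad (n k p : ℍ[ℝ]) (T : ℝ) (h : ∀ t : ℝ, T < t → (t * t) • n + t • k = p) :
    n = 0 ∧ k = 0 ∧ p = 0 := by
  have h1 := h (T + 1) (by linarith)
  have h2 := h (T + 2) (by linarith)
  have h3 := h (T + 3) (by linarith)
  have hn : n = 0 := by
    linear_combination (norm := module) (1/2 : ℝ) • h1 - (1 : ℝ) • h2 + (1/2 : ℝ) • h3
  subst hn
  have hk : k = 0 := by
    linear_combination (norm := module) (1 : ℝ) • h2 - (1 : ℝ) • h1
  subst hk
  simp at h1
  exact ⟨rfl, rfl, h1.symm⟩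

/-- Two regular fractional transformations `ℱ_A` and `ℱ_A'` agree wherever both are defined
if and only if `A' = eA` for some nonzero quaternion `e`. -/
theorem regular_fractional_eq_iff (a c b d a' c' b' d' : ℍ[ℝ])
    (hA : IsUnit !![a, c; b, d]) (hA' : IsUnit !![a', c'; b', d']) :
    (∀ q : ℍ[ℝ], regDenom c d q ≠ 0 → regDenom c' d' q ≠ 0 →
        regFT a c b d q = regFT a' c' b' d' q) ↔
      ∃ e : ℍ[ℝ], e ≠ 0 ∧ a' = e * a ∧ b' = e * b ∧ c' = e * c ∧ d' = e * d := by
  constructor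
  · intro H
    obtain ⟨x, y, z, w, ⟨l1, l2, l3, l4⟩, r1, r2, r3, r4⟩ := aux_unit a c b d hA
    obtain ⟨x', y', z', w', ⟨l1', l2', l3', l4'⟩, -⟩ := aux_unit a' c' b' d' hA'
    have hcd : ¬ (c = 0 ∧ d = 0) := by
      rintro ⟨rfl, rfl⟩; simp at l4
    have hcd' : ¬ (c' = 0 ∧ d' = 0) := by
      rintro ⟨rfl, rfl⟩; simp at l4'
    obtain ⟨hn, hk, hp⟩ := aux_quad (a' * y + c' * w)
      ((b' * y + d' * w) - (a' * x + c' * z)) (b' * x + d' * z)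
      (max (‖d‖ / ‖c‖) (‖d'‖ / ‖c'‖)) (by
        intro t ht
        have g := aux_good c d hcd t (lt_of_le_of_lt (le_max_left _ _) ht)
        have g' := aux_good c' d' hcd' t (lt_of_le_of_lt (le_max_right _ _) ht)
        have E := H (t : ℍ[ℝ])
          (by rw [aux_denom_real]; exact mul_ne_zero (star_ne_zero.mpr g) g)
          (by rw [aux_denom_real]; exact mul_ne_zero (star_ne_zero.mpr g') g')
        rw [aux_FT_real _ _ _ _ _ g, aux_FT_real _ _ _ _ _ g'] at E
        obtain ⟨lam, hlam⟩ : ∃ lam, lam = (t • c' + d') * (t • c + d)⁻¹ := ⟨_, rfl⟩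
        have e1 : t • c' + d' = lam * (t • c + d) := by
          rw [hlam, inv_mul_cancel_right₀ g]
        have e2 : t • a' + b' = lam * (t • a + b) := by
          rw [hlam, mul_assoc, E, mul_inv_cancel_left₀ g']
        have f1 : t • (a' * x + c' * z) + (b' * x + d' * z) = t • lam := by
          calc _ = (t • a' + b') * x + (t • c' + d') * z := by
                simp only [add_mul, smul_mul_assoc, smul_add]; abel
            _ = lam * (t • (a * x + c * z) + (b * x + d * z)) := by
                rw [e1, e2]
                simp only [add_mul, mul_add, smul_mul_assoc, mul_smul_comm, smul_add, mul_assoc]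
                abel
            _ = _ := by rw [r1, r3]; simp
        have f2 : t • (a' * y + c' * w) + (b' * y + d' * w) = lam := by
          calc _ = (t • a' + b') * y + (t • c' + d') * w := by
                simp only [add_mul, smul_mul_assoc, smul_add]; abel
            _ = lam * (t • (a * y + c * w) + (b * y + d * w)) := by
                rw [e1, e2]
                simp only [add_mul, mul_add, smul_mul_assoc, mul_smul_comm, smul_add, mul_assoc]
                abel
            _ = _ := by rw [r2, r4]; simp
        rw [← f2] at f1
        rw [mul_smul, smul_sub]
        rw [smul_add t (t • _)] at f1
        rw [← add_sub_assoc, ← f1]; abel)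
    have hr : b' * y + d' * w = a' * x + c' * z := sub_eq_zero.mp hk
    have key : ∀ u v s k : ℍ[ℝ], x * s + y * k = u → z * s + w * k = v →
        a' * u + c' * v = (a' * x + c' * z) * s ∧ b' * u + d' * v = (a' * x + c' * z) * k := by
      rintro u v s k rfl rfl
      constructor
      · calc _ = (a' * x + c' * z) * s + (a' * y + c' * w) * k := by noncomm_ring
          _ = _ := by rw [hn]; simp
      · calc _ = (b' * x + d' * z) * s + (b' * y + d' * w) * k := by noncomm_ring
          _ = _ := by rw [hp, hr]; simp
    obtain ⟨k1, k2⟩ := key _ _ _ _ l1 l3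
    obtain ⟨k3, k4⟩ := key _ _ _ _ l2 l4
    simp only [mul_one, mul_zero, add_zero, zero_add] at k1 k2 k3 k4
    refine ⟨a' * x + c' * z, ?_, k1, k2, k3, k4⟩
    intro h0
    rw [h0, zero_mul] at k3 k4
    exact hcd' ⟨k3, k4⟩
  · rintro ⟨e, he, rfl, rfl, rfl, rfl⟩ q - -
    have hs : star e * e = ((‖e‖ ^ 2 : ℝ) : ℍ[ℝ]) := by
      rw [Quaternion.star_mul_self, Quaternion.normSq_eq_norm_mul_self, pow_two]
    have hs' : ∀ u v : ℍ[ℝ], star (e * u) * (e * v) = (‖e‖ ^ 2) • (star u * v) := by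
      intro u v
      rw [star_mul, mul_assoc, ← mul_assoc (star e), hs, Quaternion.coe_mul_eq_smul, mul_smul_comm]
    have hre : (e * c * star (e * d)).re = ‖e‖ ^ 2 * (c * star d).re := by
      rw [pow_two, ← Quaternion.normSq_eq_norm_mul_self, Quaternion.normSq_def']
      simp
      ring
    have hD : regDenom (e * c) (e * d) q = (‖e‖ ^ 2) • regDenom c d q := by
      unfold regDenom
      rw [hre]
      simp only [norm_mul, Quaternion.coe_mul_eq_smul, smul_add, mul_pow, smul_smul]
      rw [← Quaternion.coe_mul_eq_smul (‖e‖ ^ 2) ((‖d‖ ^ 2 : ℝ) : ℍ[ℝ]), ← Quaternion.coe_mul]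
      congr 3
      ring
    have hne : (‖e‖ ^ 2 : ℝ) ≠ 0 := by positivity
    unfold regFT
    rw [hD, hs', hs', hs', hs', ← smul_add]
    simp only [mul_smul_comm, ← smul_add]
    rw [← Quaternion.coe_mul_eq_smul _ (regDenom c d q), _root_.mul_inv_rev, ← Quaternion.coe_inv,
      Quaternion.mul_coe_eq_smul, smul_mul_assoc, smul_smul, mul_inv_cancel₀ hne, one_smul]
end

section
/- Let A = [[a,c],[b,d]] be an invertible 2×2 quaternionic matrix. Then either ℱ_A is a regular affine transformation (there exist a₀, b₀ ∈ ℍ, a₀ ≠ 0, with ℱ_A(q) = qa₀ + b₀ for all q ∈ ℍ), or there exist unique a′, b′, p ∈ ℍ such that ℱ_A(q) = (q−p)^{-*} * (qa′+b′) at every q where ℱ_A is defined; the latter is given explicitly by (q² − 2Re(p)q + |p|²)⁻¹ · (q²a′ + q(b′ − conj(p)a′) − conj(p)b′). -/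
open Quaternion Matrix

open Filter Topology in
lemma aux_tendsto (p : ℍ[ℝ]) :
    Tendsto (fun t : ℝ => ((t : ℍ[ℝ]) - p)⁻¹) atTop (𝓝 0) := by
  rw [tendsto_zero_iff_norm_tendsto_zero]
  have h : Tendsto (fun t : ℝ => ‖(t : ℍ[ℝ]) - p‖) atTop atTop := by
    refine tendsto_atTop_mono (f := fun t : ℝ => t - ‖p‖) ?_ (tendsto_atTop_add_const_right _ _ tendsto_id)
    intro t
    have h1 := norm_sub_norm_le (t : ℍ[ℝ]) p
    rw [Quaternion.norm_coe] at h1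
    have h2 := le_abs_self t
    rw [Real.norm_eq_abs] at h1
    linarith
  refine h.inv_tendsto_atTop.congr fun t => ?_
  rw [norm_inv]
  rfl

open Filter Topology in
lemma aux_tendsto_mul (p k : ℍ[ℝ]) :
    Tendsto (fun t : ℝ => ((t : ℍ[ℝ]) - p)⁻¹ * k) atTop (𝓝 0) := by
  simpa using (aux_tendsto p).mul_const k

open Filter in
lemma aux_ev_ne (p : ℍ[ℝ]) : ∀ᶠ t : ℝ in atTop, (t : ℍ[ℝ]) - p ≠ 0 := by
  filter_upwards [eventually_gt_atTop p.re] with t ht h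
  have := congrArg (fun q : ℍ[ℝ] => q.re) h
  simp at this
  linarith

lemma aux_denom (p : ℍ[ℝ]) (t : ℝ) :
    (t : ℍ[ℝ]) ^ 2 - ((2 * p.re : ℝ) : ℍ[ℝ]) * t + ((‖p‖ ^ 2 : ℝ) : ℍ[ℝ])
      = star ((t : ℍ[ℝ]) - p) * (t - p) := by
  rw [← Quaternion.normSq_eq_norm_mul_self p |>.trans (sq _).symm, Quaternion.star_mul_self]
  rw [← Quaternion.coe_pow, ← Quaternion.coe_mul, ← Quaternion.coe_sub, ← Quaternion.coe_add]
  congr 1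
  simp only [Quaternion.normSq_def']
  simp
  ring

lemma aux_val (p a b : ℍ[ℝ]) (t : ℝ) (ht : (t : ℍ[ℝ]) - p ≠ 0) :
    ((t : ℍ[ℝ]) ^ 2 - ((2 * p.re : ℝ) : ℍ[ℝ]) * t + ((‖p‖ ^ 2 : ℝ) : ℍ[ℝ]))⁻¹ *
      ((t : ℍ[ℝ]) ^ 2 * a + t * (b - star p * a) - star p * b)
      = a + ((t : ℍ[ℝ]) - p)⁻¹ * (p * a + b) := by
  have hs : star ((t : ℍ[ℝ]) - p) ≠ 0 := star_ne_zero.mpr ht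
  have hn : (t : ℍ[ℝ]) ^ 2 * a + t * (b - star p * a) - star p * b
      = star ((t : ℍ[ℝ]) - p) * (((t : ℍ[ℝ]) - p) * a + (p * a + b)) := by
    have hc : star p * (t : ℍ[ℝ]) = t * star p := (Quaternion.coe_commutes t _).symm
    rw [star_sub, Quaternion.star_coe]
    have h2 : ((t : ℍ[ℝ]) - p) * a + (p * a + b) = t * a + b := by noncomm_ring
    rw [h2, sub_mul, mul_add, mul_add, ← mul_assoc (star p), hc]
    noncomm_ring
  rw [aux_denom, hn, _root_.mul_inv_rev, mul_assoc, inv_mul_cancel_left₀ hs, mul_add,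
    inv_mul_cancel_left₀ ht]

open Filter Topology in
lemma aux_unique (p a b p₁ a₁ b₁ : ℍ[ℝ]) (hk : p * a + b ≠ 0)
    (h : ∀ᶠ t : ℝ in atTop, a + ((t : ℍ[ℝ]) - p)⁻¹ * (p * a + b)
      = a₁ + ((t : ℍ[ℝ]) - p₁)⁻¹ * (p₁ * a₁ + b₁)) : a₁ = a ∧ b₁ = b ∧ p₁ = p := by
  have ha : a = a₁ := by
    have h1 := (aux_tendsto_mul p (p * a + b)).const_add a
    have h2 := (aux_tendsto_mul p₁ (p₁ * a₁ + b₁)).const_add a₁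
    rw [add_zero] at h1 h2
    exact tendsto_nhds_unique (h1.congr' h) h2
  subst ha
  generalize hk1 : p * a + b = k at *
  generalize hk2 : p₁ * a + b₁ = k₁ at *
  have key : ∀ (p k : ℍ[ℝ]),
      Tendsto (fun t : ℝ => (t : ℍ[ℝ]) * (((t : ℍ[ℝ]) - p)⁻¹ * k)) atTop (𝓝 k) := by
    intro p k
    have h1 := ((aux_tendsto_mul p k).const_mul p).const_add k
    rw [mul_zero, add_zero] at h1
    refine h1.congr' ?_
    filter_upwards [aux_ev_ne p] with t ht
    have : k = ((t : ℍ[ℝ]) - p) * (((t : ℍ[ℝ]) - p)⁻¹ * k) := (mul_inv_cancel_left₀ ht k).symm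
    nth_rewrite 1 [this]
    rw [sub_mul]
    abel
  have hkk : k = k₁ := by
    refine tendsto_nhds_unique ((key p k).congr' ?_) (key p₁ k₁)
    filter_upwards [h] with t ht
    rw [add_left_cancel ht]
  subst hkk
  obtain ⟨t, ht⟩ := h.exists
  have h3 := inv_injective (mul_right_cancel₀ hk (add_left_cancel ht))
  have hp : p₁ = p := (sub_right_injective h3).symm
  subst hp
  exact ⟨rfl, add_left_cancel (hk2.trans hk1.symm), rfl⟩

lemma aux_exists (a c b d : ℍ[ℝ]) (hc : c ≠ 0) (q : ℍ[ℝ]) :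
    regFT a c b d q =
      (q ^ 2 - ((2 * (-(c⁻¹ * d)).re : ℝ) : ℍ[ℝ]) * q + ((‖-(c⁻¹ * d)‖ ^ 2 : ℝ) : ℍ[ℝ]))⁻¹ *
        (q ^ 2 * (c⁻¹ * a) + q * (c⁻¹ * b - star (-(c⁻¹ * d)) * (c⁻¹ * a))
          - star (-(c⁻¹ * d)) * (c⁻¹ * b)) := by
  have hr : ‖c‖ ^ 2 ≠ 0 := by simpa using hc
  have hrq : ((‖c‖ ^ 2 : ℝ) : ℍ[ℝ]) ≠ 0 := by
    rw [← Quaternion.coe_zero]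
    exact fun h => hr (Quaternion.coe_injective h)
  have hcc : ((‖c‖ ^ 2 : ℝ) : ℍ[ℝ]) = star c * c := by
    rw [Quaternion.star_mul_self, Quaternion.normSq_eq_norm_mul_self, sq]
  have hcc2 : ((‖c‖ ^ 2 : ℝ) : ℍ[ℝ]) = c * star c := by
    rw [Quaternion.self_mul_star, Quaternion.normSq_eq_norm_mul_self, sq]
  have e1 : ∀ x : ℍ[ℝ], star c * x = ((‖c‖ ^ 2 : ℝ) : ℍ[ℝ]) * (c⁻¹ * x) := by
    intro x
    rw [hcc, mul_assoc, mul_inv_cancel_left₀ hc]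
  have e2 : ∀ x : ℍ[ℝ], star d * x = ((‖c‖ ^ 2 : ℝ) : ℍ[ℝ]) * (star (c⁻¹ * d) * (c⁻¹ * x)) := by
    intro x
    have hsc : star c ≠ 0 := by simpa using hc
    rw [← mul_assoc, Quaternion.coe_commutes, hcc2, star_mul, star_inv₀, mul_assoc (star d),
      mul_assoc (star d)]
    congr 1
    rw [← hcc2, ← Quaternion.coe_commutes, hcc2]
    rw [mul_assoc, mul_assoc, mul_inv_cancel_left₀ hsc, mul_inv_cancel_left₀ hc]
  have hre : (c * star d).re = ‖c‖ ^ 2 * (c⁻¹ * d).re := by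
    have h := congrArg (fun x : ℍ[ℝ] => x.re) (e1 d)
    have h2 : (((‖c‖ ^ 2 : ℝ) : ℍ[ℝ]) * (c⁻¹ * d)).re = ‖c‖ ^ 2 * (c⁻¹ * d).re := by
      rw [Quaternion.re_mul]
      simp only [Quaternion.re_coe, Quaternion.imI_coe, Quaternion.imJ_coe, Quaternion.imK_coe]
      ring
    rw [← h2, ← h, Quaternion.re_mul, Quaternion.re_mul]
    simp only [Quaternion.re_star, Quaternion.imI_star, Quaternion.imJ_star, Quaternion.imK_star]
    ring
  have hnd : ‖d‖ ^ 2 = ‖c‖ ^ 2 * ‖c⁻¹ * d‖ ^ 2 := by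
    rw [norm_mul, norm_inv]
    have : ‖c‖ ≠ 0 := by simpa using hc
    field_simp
  unfold regFT regDenom
  rw [hre, hnd, e1 a, e1 b, e2 a, e2 b]
  generalize c⁻¹ * d = s
  generalize c⁻¹ * a = a
  generalize c⁻¹ * b = b
  generalize ‖c‖ ^ 2 = r at *
  have hqr : ∀ x : ℍ[ℝ], q * ((r : ℍ[ℝ]) * x) = r * (q * x) := by
    intro x
    rw [← mul_assoc, ← Quaternion.coe_commutes, mul_assoc]
  have hD : (r : ℍ[ℝ]) * q ^ 2 + ((2 * (r * s.re) : ℝ) : ℍ[ℝ]) * q + ((r * ‖s‖ ^ 2 : ℝ) : ℍ[ℝ])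
      = r * (q ^ 2 - ((2 * (-s).re : ℝ) : ℍ[ℝ]) * q + ((‖-s‖ ^ 2 : ℝ) : ℍ[ℝ])) := by
    have h1 : 2 * (r * s.re) = -(r * (2 * (-s).re)) := by simp; ring
    rw [h1, norm_neg, Quaternion.coe_neg, Quaternion.coe_mul, Quaternion.coe_mul r]
    noncomm_ring
  have hN : q ^ 2 * ((r : ℍ[ℝ]) * a) + q * (r * (star s * a) + r * b) + r * (star s * b)
      = r * (q ^ 2 * a + q * (b - star (-s) * a) - star (-s) * b) := by
    rw [sq, mul_assoc, hqr, hqr, ← mul_add, hqr, star_neg]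
    noncomm_ring
  rw [hD, hN, _root_.mul_inv_rev, mul_assoc, inv_mul_cancel_left₀ hrq]

lemma aux_real (c d : ℍ[ℝ]) (hc : c ≠ 0) :
    ∀ᶠ t : ℝ in Filter.atTop, regDenom c d t ≠ 0 := by
  have hrq : ((‖c‖ ^ 2 : ℝ) : ℍ[ℝ]) ≠ 0 := by
    rw [← Quaternion.coe_zero]
    exact fun h => (by simpa using hc : ‖c‖ ^ 2 ≠ 0) (Quaternion.coe_injective h)
  filter_upwards [aux_ev_ne (-(d * c⁻¹))] with t ht h
  have : regDenom c d t = star ((t : ℍ[ℝ]) * c + d) * (t * c + d) := by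
    unfold regDenom
    rw [← Quaternion.normSq_eq_norm_mul_self c |>.trans (sq _).symm,
      ← Quaternion.normSq_eq_norm_mul_self d |>.trans (sq _).symm, Quaternion.star_mul_self]
    rw [← Quaternion.coe_pow, ← Quaternion.coe_mul, ← Quaternion.coe_mul, ← Quaternion.coe_add,
      ← Quaternion.coe_add]
    congr 1
    simp only [Quaternion.normSq_def']
    simp
    ring
  rw [this, mul_eq_zero, star_eq_zero, or_self] at h
  apply ht
  rw [sub_neg_eq_add]
  have h2 : ((t : ℍ[ℝ]) + d * c⁻¹) * c = 0 := by
    rw [add_mul, inv_mul_cancel_right₀ hc, h]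
  exact (mul_eq_zero.mp h2).resolve_right hc

/-- Every regular fractional transformation is either a regular affine transformation, or of
the form `(q−p)^{-*} * (qa'+b')` for unique `a', b', p ∈ ℍ` (here `x = (a', b', p)`). -/
theorem regular_fractional_representation (a c b d : ℍ[ℝ]) (hA : IsUnit !![a, c; b, d]) :
    (∃ a₀ b₀ : ℍ[ℝ], a₀ ≠ 0 ∧
        ∀ q : ℍ[ℝ], regDenom c d q ≠ 0 → regFT a c b d q = q * a₀ + b₀) ∨
      (∃! x : ℍ[ℝ] × ℍ[ℝ] × ℍ[ℝ],
        ∀ q : ℍ[ℝ], regDenom c d q ≠ 0 →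
          regFT a c b d q =
            (q ^ 2 - ((2 * x.2.2.re : ℝ) : ℍ[ℝ]) * q + ((‖x.2.2‖ ^ 2 : ℝ) : ℍ[ℝ]))⁻¹ *
              (q ^ 2 * x.1 + q * (x.2.1 - star x.2.2 * x.1) - star x.2.2 * x.2.1)) := by
  obtain ⟨B, hB⟩ := hA.exists_right_inv
  have h00 := congrFun (congrFun hB 0) 0
  have h01 := congrFun (congrFun hB 0) 1
  have h11 := congrFun (congrFun hB 1) 1
  simp [Matrix.mul_apply, Fin.sum_univ_two] at h00 h01 h11
  by_cases hc : c = 0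
  · left
    subst hc
    simp only [zero_mul, add_zero] at h00 h01
    have ha : a ≠ 0 := by
      rintro rfl
      simp at h00
    have hd : d ≠ 0 := by
      rintro rfl
      rw [(mul_eq_zero.mp h01).resolve_left ha] at h11
      simp at h11
    have hsd : star d ≠ 0 := by simpa using hd
    have hr : ‖d‖ ^ 2 ≠ 0 := by simpa using hd
    refine ⟨((‖d‖ ^ 2)⁻¹ : ℝ) * (star d * a), ((‖d‖ ^ 2)⁻¹ : ℝ) * (star d * b), ?_, ?_⟩
    · refine mul_ne_zero ?_ (mul_ne_zero hsd ha)
      rw [← Quaternion.coe_zero]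
      exact fun h => inv_ne_zero hr (Quaternion.coe_injective h)
    · intro q _
      have hD : regDenom 0 d q = ((‖d‖ ^ 2 : ℝ) : ℍ[ℝ]) := by
        simp [regDenom]
      unfold regFT
      rw [hD, ← Quaternion.coe_inv, ← mul_assoc q, ← Quaternion.coe_commutes]
      simp [mul_add, mul_assoc]
  · right
    refine ⟨(c⁻¹ * a, c⁻¹ * b, -(c⁻¹ * d)), fun q _ => aux_exists a c b d hc q, ?_⟩
    rintro ⟨a₁, b₁, p₁⟩ hx
    have hk : -(c⁻¹ * d) * (c⁻¹ * a) + c⁻¹ * b ≠ 0 := by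
      intro hk
      have hb : b = d * c⁻¹ * a := by
        have h2 : c⁻¹ * b = c⁻¹ * (d * c⁻¹ * a) := by
          rw [neg_mul, neg_add_eq_zero] at hk
          rw [← hk]
          noncomm_ring
        exact mul_left_cancel₀ (inv_ne_zero hc) h2
      have hd : d = d * c⁻¹ * c := (inv_mul_cancel_right₀ hc d).symm
      have h3 : b * B 0 1 + d * B 1 1 = d * c⁻¹ * (a * B 0 1 + c * B 1 1) := by
        rw [mul_add, ← mul_assoc, ← mul_assoc _ c, ← hb, ← hd]
      rw [h11, h01, mul_zero] at h3
      exact one_ne_zero h3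
    have := aux_unique _ _ _ p₁ a₁ b₁ hk (by
      filter_upwards [aux_real c d hc, aux_ev_ne p₁, aux_ev_ne (-(c⁻¹ * d))] with t h1 h2 h3
      have h4 := hx t h1
      rw [aux_exists a c b d hc] at h4
      dsimp only at h4
      rwa [aux_val _ _ _ _ h2, aux_val _ _ _ _ h3] at h4)
    obtain ⟨h1, h2, h3⟩ := this
    rw [h1, h2, h3]
end

section
/- Let A = [[a,c],[b,d]] be an invertible 2×2 quaternionic matrix and define T(q) = (q·conj(c) + conj(d))⁻¹ · q · (q·conj(c) + conj(d)). Then for every q ∈ ℍ at which the real quadratic |c|²q² + 2Re(c·conj(d))q + |d|² is nonzero, one has ℱ_A(q) = F_A(T(q)), i.e. ℱ_A(q) = (T(q)c + d)⁻¹(T(q)a + b). (The regular fractional transformation is the composition of the linear fractional transformation with the quaternionic conjugation map T.) -/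
open Quaternion Matrix

/-- The regular fractional transformation `ℱ_A` is the composition of the linear fractional
transformation `F_A` with the quaternionic conjugation map
`T(q) = (q·conj(c) + conj(d))⁻¹ · q · (q·conj(c) + conj(d))`. -/
theorem regular_fractional_eq_linear_comp (a c b d : ℍ[ℝ]) (hA : IsUnit !![a, c; b, d])
    (q : ℍ[ℝ]) (hq : regDenom c d q ≠ 0) :
    regFT a c b d q =
      (((q * star c + star d)⁻¹ * q * (q * star c + star d)) * c + d)⁻¹ *
        (((q * star c + star d)⁻¹ * q * (q * star c + star d)) * a + b) := by
  have hD : regDenom c d q = q * (q * star c + star d) * c + (q * star c + star d) * d := by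
    have h1 : ((‖c‖ ^ 2 : ℝ) : ℍ[ℝ]) = star c * c := by
      rw [Quaternion.star_mul_self, Quaternion.normSq_eq_norm_mul_self, pow_two]
    have h2 : ((‖d‖ ^ 2 : ℝ) : ℍ[ℝ]) = star d * d := by
      rw [Quaternion.star_mul_self, Quaternion.normSq_eq_norm_mul_self, pow_two]
    have h3 : ((2 * (c * star d).re : ℝ) : ℍ[ℝ]) = star d * c + star c * d := by
      ext <;> simp <;> ring
    unfold regDenom
    rw [(Quaternion.coe_commutes (‖c‖ ^ 2 : ℝ) (q ^ 2)),
      (Quaternion.coe_commutes (2 * (c * star d).re : ℝ) q), h1, h2, h3]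
    noncomm_ring
  have hN : q ^ 2 * (star c * a) + q * (star d * a + star c * b) + star d * b
      = q * (q * star c + star d) * a + (q * star c + star d) * b := by
    noncomm_ring
  unfold regFT
  rw [hN]
  rw [hD] at hq ⊢
  generalize q * star c + star d = p at *
  have hp : p ≠ 0 := by
    rintro rfl
    simp at hq
  have e : ∀ x y : ℍ[ℝ], p⁻¹ * q * p * x + y = p⁻¹ * (q * p * x + p * y) := by
    intro x y
    rw [mul_add, inv_mul_cancel_left₀ hp]
    simp only [mul_assoc]
  rw [e, e, _root_.mul_inv_rev, inv_inv, mul_assoc _ p (p⁻¹ * _), mul_inv_cancel_left₀ hp]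
end

section
/- Let p = x + yI ∈ ℍ with x, y ∈ ℝ, y ≠ 0 and I² = −1. The map T(q) = (q − conj(p))⁻¹ · q · (q − conj(p)) is a bijection of ℍ \ (x + y𝕊) onto itself, with inverse S(q) = (q − p)⁻¹ · q · (q − p); both T and S are continuous on ℍ \ (x + y𝕊), so T is a homeomorphism of ℍ \ (x + y𝕊) onto itself. -/
open Quaternion

lemma aux_mem (x y : ℝ) (hy : y ≠ 0) (q : ℍ[ℝ]) :
    (q.re = x ∧ ‖q.im‖ = |y|) ↔
      q * q - ((2 * x : ℝ) : ℍ[ℝ]) * q + ((x ^ 2 + y ^ 2 : ℝ) : ℍ[ℝ]) = 0 := by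
  have h1 : ‖q.im‖ = |y| ↔ q.imI ^ 2 + q.imJ ^ 2 + q.imK ^ 2 = y ^ 2 := by
    rw [← abs_norm, ← sq_eq_sq_iff_abs_eq_abs, sq ‖q.im‖, ← Quaternion.normSq_eq_norm_mul_self,
      Quaternion.normSq_def']
    simp
  rw [h1, Quaternion.ext_iff]
  simp only [Quaternion.re_add, Quaternion.re_sub, Quaternion.re_mul, Quaternion.re_coe,
    Quaternion.imI_add, Quaternion.imI_sub, Quaternion.imI_mul, Quaternion.imI_coe,
    Quaternion.imJ_add, Quaternion.imJ_sub, Quaternion.imJ_mul, Quaternion.imJ_coe,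
    Quaternion.imK_add, Quaternion.imK_sub, Quaternion.imK_mul, Quaternion.imK_coe,
    Quaternion.re_zero, Quaternion.imI_zero, Quaternion.imJ_zero, Quaternion.imK_zero]
  generalize q.re = r
  generalize q.imI = a
  generalize q.imJ = b
  generalize q.imK = c
  constructor
  · rintro ⟨rfl, h⟩
    refine ⟨?_, ?_, ?_, ?_⟩ <;> linarith
  · rintro ⟨h0, ha, hb, hc⟩
    have hr : r = x := by
      by_contra hne
      have hne' : r - x ≠ 0 := sub_ne_zero.mpr hne
      have ea : a = 0 := by
        apply (mul_eq_zero.mp (show (r - x) * a = 0 by linarith)).resolve_left hne'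
      have eb : b = 0 := by
        apply (mul_eq_zero.mp (show (r - x) * b = 0 by linarith)).resolve_left hne'
      have ec : c = 0 := by
        apply (mul_eq_zero.mp (show (r - x) * c = 0 by linarith)).resolve_left hne'
      subst ea eb ec
      have : 0 < y ^ 2 := by positivity
      nlinarith [sq_nonneg (r - x)]
    subst hr
    exact ⟨rfl, by linarith⟩

lemma aux_core (t n : ℝ) (p p' q : ℍ[ℝ]) (hs : p' + p = (t : ℍ[ℝ])) (hn : p' * p = (n : ℍ[ℝ]))
    (hq : q * q - (t : ℍ[ℝ]) * q + (n : ℍ[ℝ]) ≠ 0) :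
    q - p' ≠ 0 ∧
    (((q - p')⁻¹ * q * (q - p')) * ((q - p')⁻¹ * q * (q - p'))
      - (t : ℍ[ℝ]) * ((q - p')⁻¹ * q * (q - p')) + (n : ℍ[ℝ]) ≠ 0) ∧
    ((q - p')⁻¹ * q * (q - p') - p)⁻¹ * ((q - p')⁻¹ * q * (q - p'))
      * ((q - p')⁻¹ * q * (q - p') - p) = q := by
  have hct : (t : ℍ[ℝ]) * q = q * (t : ℍ[ℝ]) := Quaternion.coe_commutes t q
  have hcn : (n : ℍ[ℝ]) * q = q * (n : ℍ[ℝ]) := Quaternion.coe_commutes n q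
  have hN : q * (q - p') - (q - p') * p = q * q - (t : ℍ[ℝ]) * q + (n : ℍ[ℝ]) := by
    rw [hct, ← hs, ← hn]; noncomm_ring
  have hNq : (q * q - (t : ℍ[ℝ]) * q + (n : ℍ[ℝ])) * q
      = q * (q * q - (t : ℍ[ℝ]) * q + (n : ℍ[ℝ])) := by
    rw [add_mul, sub_mul, mul_add, mul_sub, hcn, hct]
    simp only [mul_assoc, hct]
  have ha : q - p' ≠ 0 := by
    intro h
    rw [h] at hN
    apply hq
    rw [← hN]; simp
  refine ⟨ha, ?_, ?_⟩
  · generalize q - p' = a at ha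
    have e : (a⁻¹ * q * a) * (a⁻¹ * q * a) - (t : ℍ[ℝ]) * (a⁻¹ * q * a) + (n : ℍ[ℝ])
        = a⁻¹ * (q * q - (t : ℍ[ℝ]) * q + (n : ℍ[ℝ])) * a := by
      have e1 : (a⁻¹ * q * a) * (a⁻¹ * q * a) = a⁻¹ * (q * q) * a := by
        simp only [mul_assoc, mul_inv_cancel_left₀ ha]
      have e2 : (t : ℍ[ℝ]) * (a⁻¹ * q * a) = a⁻¹ * ((t : ℍ[ℝ]) * q) * a := by
        rw [← mul_assoc, ← mul_assoc, Quaternion.coe_commutes t a⁻¹]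
        simp only [mul_assoc]
      have e3 : (n : ℍ[ℝ]) = a⁻¹ * (n : ℍ[ℝ]) * a := by
        rw [mul_assoc, Quaternion.coe_commutes n a, inv_mul_cancel_left₀ ha]
      rw [mul_add, mul_sub, add_mul, sub_mul, ← e1, ← e2, ← e3]
    rw [e]
    exact mul_ne_zero (mul_ne_zero (inv_ne_zero ha) hq) ha
  · generalize q * q - (t : ℍ[ℝ]) * q + (n : ℍ[ℝ]) = N at *
    generalize q - p' = a at *
    have e : a⁻¹ * q * a - p = a⁻¹ * N := by
      rw [← hN, mul_sub, inv_mul_cancel_left₀ ha, mul_assoc]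
    rw [e, mul_inv_rev, inv_inv]
    simp only [mul_assoc, mul_inv_cancel_left₀ ha]
    rw [← hNq, inv_mul_cancel_left₀ hq]

/-- For `p = x + yI` with `y ≠ 0`, the map `T(q) = (q − conj p)⁻¹ q (q − conj p)` is a
homeomorphism of `ℍ \ (x + y𝕊)` onto itself, with continuous inverse
`S(q) = (q − p)⁻¹ q (q − p)`. -/
theorem conjugation_homeomorphism (x y : ℝ) (hy : y ≠ 0) (I : ℍ[ℝ]) (hI : I ^ 2 = -1)
    (p : ℍ[ℝ]) (hp : p = (x : ℍ[ℝ]) + (y : ℍ[ℝ]) * I)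
    (U : Set ℍ[ℝ]) (hU : U = {q : ℍ[ℝ] | ¬(q.re = x ∧ ‖q.im‖ = |y|)})
    (T S : ℍ[ℝ] → ℍ[ℝ])
    (hT : ∀ q : ℍ[ℝ], T q = (q - star p)⁻¹ * q * (q - star p))
    (hS : ∀ q : ℍ[ℝ], S q = (q - p)⁻¹ * q * (q - p)) :
    Set.MapsTo T U U ∧ Set.MapsTo S U U ∧ (∀ q ∈ U, S (T q) = q) ∧ (∀ q ∈ U, T (S q) = q) ∧
      ContinuousOn T U ∧ ContinuousOn S U := by
  have hre : I.re = 0 := by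
    have h := hI
    rw [sq, Quaternion.ext_iff] at h
    simp only [Quaternion.re_mul, Quaternion.imI_mul, Quaternion.imJ_mul, Quaternion.imK_mul,
      Quaternion.re_neg, Quaternion.imI_neg, Quaternion.imJ_neg, Quaternion.imK_neg,
      Quaternion.re_one, Quaternion.imI_one, Quaternion.imJ_one, Quaternion.imK_one] at h
    obtain ⟨h0, ha, hb, hc⟩ := h
    by_contra hne
    have ea : I.imI = 0 :=
      (mul_eq_zero.mp (show I.re * I.imI = 0 by linarith)).resolve_left hne
    have eb : I.imJ = 0 :=
      (mul_eq_zero.mp (show I.re * I.imJ = 0 by linarith)).resolve_left hne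
    have ec : I.imK = 0 :=
      (mul_eq_zero.mp (show I.re * I.imK = 0 by linarith)).resolve_left hne
    rw [ea, eb, ec] at h0
    nlinarith [mul_self_nonneg I.re]
  have hstar : star I = -I := by
    ext <;> simp [hre]
  have hsp : star p = (x : ℍ[ℝ]) - (y : ℍ[ℝ]) * I := by
    rw [hp, star_add, star_mul, hstar, Quaternion.star_coe, Quaternion.star_coe,
      Quaternion.coe_commutes y I]
    noncomm_ring
  have hs : star p + p = ((2 * x : ℝ) : ℍ[ℝ]) := by
    rw [hsp, hp, two_mul, Quaternion.coe_add]; noncomm_ring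
  have hs' : p + star p = ((2 * x : ℝ) : ℍ[ℝ]) := by rw [add_comm, hs]
  have hyI : ((y : ℍ[ℝ]) * I) * ((y : ℍ[ℝ]) * I) = -((y ^ 2 : ℝ) : ℍ[ℝ]) := by
    rw [mul_assoc, ← mul_assoc I, ← Quaternion.coe_commutes y I, mul_assoc (y : ℍ[ℝ]) I I,
      ← sq I, hI]
    push_cast; noncomm_ring
  have hxI : (x : ℍ[ℝ]) * ((y : ℍ[ℝ]) * I) = ((y : ℍ[ℝ]) * I) * (x : ℍ[ℝ]) :=
    Quaternion.coe_commutes x _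
  have hn : star p * p = ((x ^ 2 + y ^ 2 : ℝ) : ℍ[ℝ]) := by
    rw [hsp, hp, sub_mul, mul_add, mul_add, hyI, hxI]; push_cast; noncomm_ring
  have hn' : p * star p = ((x ^ 2 + y ^ 2 : ℝ) : ℍ[ℝ]) := by
    rw [hsp, hp, add_mul, mul_sub, mul_sub, hyI, hxI]; push_cast; noncomm_ring
  have hmem : ∀ q, q ∈ U ↔
      q * q - ((2 * x : ℝ) : ℍ[ℝ]) * q + ((x ^ 2 + y ^ 2 : ℝ) : ℍ[ℝ]) ≠ 0 := by
    intro q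
    rw [hU, Set.mem_setOf_eq, aux_mem x y hy q]
  have A := fun q hq => aux_core (2 * x) (x ^ 2 + y ^ 2) p (star p) q hs hn ((hmem q).mp hq)
  have B := fun q hq => aux_core (2 * x) (x ^ 2 + y ^ 2) (star p) p q hs' hn' ((hmem q).mp hq)
  refine ⟨?_, ?_, ?_, ?_, ?_, ?_⟩
  · intro q hq
    rw [hmem, hT]
    exact (A q hq).2.1
  · intro q hq
    rw [hmem, hS]
    exact (B q hq).2.1
  · intro q hq
    rw [hS, hT]
    exact (A q hq).2.2
  · intro q hq
    rw [hT, hS]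
    exact (B q hq).2.2
  · rw [funext hT]
    have hc : ContinuousOn (fun q : ℍ[ℝ] => q - star p) U := by fun_prop
    exact ((hc.inv₀ fun q hq => (A q hq).1).mul continuousOn_id).mul hc
  · rw [funext hS]
    have hc : ContinuousOn (fun q : ℍ[ℝ] => q - p) U := by fun_prop
    exact ((hc.inv₀ fun q hq => (B q hq).1).mul continuousOn_id).mul hc
end

section
/- Let A = [[a,c],[b,d]] be a 2×2 quaternionic matrix satisfying Aᴴ H A = H, where Aᴴ is the conjugate transpose and H = [[1,0],[0,−1]]. Then qc + d ≠ 0 for every q with |q| < 1, the linear fractional transformation F_A(q) = (qc+d)⁻¹(qa+b) maps the open unit ball 𝔹 = {q ∈ ℍ : |q| < 1} bijectively onto itself, and there exist u, v ∈ ℍ with |u| = |v| = 1 and α ∈ 𝔹 such that F_A(q) = v⁻¹ · (1 − q·conj(α))⁻¹ · (q − α) · u for all q ∈ 𝔹. -/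
open Quaternion Matrix

theorem sp_normSq_ball (q : ℍ[ℝ]) : ‖q‖ < 1 ↔ normSq q < 1 := by
  rw [Quaternion.normSq_eq_norm_mul_self]
  constructor <;> intro h <;> nlinarith [norm_nonneg q]

theorem sp_rel (a c b d : ℍ[ℝ])
    (hA : !![a, c; b, d]ᴴ * !![(1 : ℍ[ℝ]), 0; 0, -1] * !![a, c; b, d] =
      !![(1 : ℍ[ℝ]), 0; 0, -1]) :
    normSq a = 1 + normSq b ∧ normSq d = 1 + normSq c ∧ star a * c = star b * d ∧
      star c * a = star d * b := by
  have h00 := congrFun (congrFun hA 0) 0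
  have h01 := congrFun (congrFun hA 0) 1
  have h10 := congrFun (congrFun hA 1) 0
  have h11 := congrFun (congrFun hA 1) 1
  simp [Matrix.mul_apply, Fin.sum_univ_two, Quaternion.star_mul_self] at h00 h01 h10 h11
  refine ⟨?_, ?_, ?_, ?_⟩
  · have : ((normSq a + - normSq b : ℝ) : ℍ[ℝ]) = ((1 : ℝ) : ℍ[ℝ]) := by
      push_cast; exact h00
    have := Quaternion.coe_injective this
    linarith
  · have : ((normSq c + - normSq d : ℝ) : ℍ[ℝ]) = ((-1 : ℝ) : ℍ[ℝ]) := by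
      push_cast; exact h11
    have := Quaternion.coe_injective this
    linarith
  · exact add_neg_eq_zero.1 h01
  · exact add_neg_eq_zero.1 h10

/-- A matrix `A = [[a,c],[b,d]] ∈ Sp(1,1)` (i.e. `Aᴴ H A = H` with `H = [[1,0],[0,−1]]`)
induces a linear fractional transformation mapping the unit ball `𝔹` bijectively onto itself,
of the form `q ↦ v⁻¹(1 − q·conj α)⁻¹(q − α)u` with `|u| = |v| = 1`, `α ∈ 𝔹`. -/
theorem moebius_transformation_of_ball (a c b d : ℍ[ℝ])
    (hA : !![a, c; b, d]ᴴ * !![(1 : ℍ[ℝ]), 0; 0, -1] * !![a, c; b, d] =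
      !![(1 : ℍ[ℝ]), 0; 0, -1]) :
    (∀ q : ℍ[ℝ], ‖q‖ < 1 → q * c + d ≠ 0) ∧
      Set.BijOn (fun q : ℍ[ℝ] => (q * c + d)⁻¹ * (q * a + b))
        (Metric.ball 0 1) (Metric.ball 0 1) ∧
      ∃ u v α : ℍ[ℝ], ‖u‖ = 1 ∧ ‖v‖ = 1 ∧ ‖α‖ < 1 ∧
        ∀ q ∈ Metric.ball (0 : ℍ[ℝ]) 1,
          (q * c + d)⁻¹ * (q * a + b) = v⁻¹ * (1 - q * star α)⁻¹ * (q - α) * u := by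
  obtain ⟨ha, hd, hac, hca⟩ := sp_rel a c b d hA
  have hbn : 0 ≤ normSq b := normSq_nonneg
  have hcn : 0 ≤ normSq c := normSq_nonneg
  have hbc : normSq c = normSq b := by
    have := congrArg normSq hac
    rw [map_mul, map_mul, normSq_star, normSq_star, ha, hd] at this
    linarith
  have had : normSq d = normSq a := by rw [ha, hd, hbc]
  have ha0 : a ≠ 0 := by rintro rfl; simp at ha; linarith
  have hd0 : d ≠ 0 := by rintro rfl; simp at hd; linarith
  have hsa0 : star a ≠ 0 := star_ne_zero.2 ha0
  have hab : c * star d = a * star b := by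
    apply mul_left_cancel₀ hsa0
    rw [← mul_assoc, hac, mul_assoc, Quaternion.self_mul_star, ← mul_assoc,
      Quaternion.star_mul_self, had, Quaternion.coe_commutes]
  have key : ∀ q : ℍ[ℝ], normSq (q * c + d) - normSq (q * a + b) = 1 - normSq q := by
    intro q
    rw [normSq_add, normSq_add, mul_assoc, mul_assoc, hab, map_mul, map_mul, hd, ha, hbc]
    ring
  have key2 : ∀ p : ℍ[ℝ], normSq (a - c * p) - normSq (d * p - b) = 1 - normSq p := by
    intro p
    have h1 : normSq (a - c * p) = normSq (star a + -(star p * star c)) := by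
      rw [← normSq_star]; simp [sub_eq_add_neg]
    have h2 : normSq (d * p - b) = normSq (-(star p * star d) + star b) := by
      rw [← normSq_star, ← normSq_neg]; simp [sub_eq_add_neg, add_comm]
    rw [h1, h2, add_comm (star a), normSq_add, normSq_add]
    simp only [star_star, neg_mul, mul_assoc, hca, normSq_neg, map_mul, normSq_star, hd, ha, hbc]
    ring
  have hne : ∀ q : ℍ[ℝ], ‖q‖ < 1 → q * c + d ≠ 0 := by
    intro q hq h
    have := key q
    rw [h, map_zero] at this
    have h3 : 0 ≤ normSq (q * a + b) := normSq_nonneg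
    linarith [(sp_normSq_ball q).1 hq]
  have hne2 : ∀ p : ℍ[ℝ], ‖p‖ < 1 → a - c * p ≠ 0 := by
    intro p hp h
    have := key2 p
    rw [h, map_zero] at this
    have h3 : 0 ≤ normSq (d * p - b) := normSq_nonneg
    linarith [(sp_normSq_ball p).1 hp]
  have pos : ∀ x : ℍ[ℝ], x ≠ 0 → 0 < normSq x := fun x hx =>
    lt_of_le_of_ne normSq_nonneg (Ne.symm (normSq_ne_zero.2 hx))
  have hmaps : ∀ q : ℍ[ℝ], ‖q‖ < 1 → ‖(q * c + d)⁻¹ * (q * a + b)‖ < 1 := by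
    intro q hq
    rw [sp_normSq_ball, map_mul, normSq_inv, inv_mul_lt_one₀ (pos _ (hne q hq))]
    linarith [(sp_normSq_ball q).1 hq, key q]
  refine ⟨hne, ⟨?_, ?_, ?_⟩, ?_⟩
  · intro q hq
    rw [mem_ball_zero_iff] at hq ⊢
    exact hmaps q hq
  · have main : ∀ q : ℍ[ℝ], ‖q‖ < 1 → ∀ p, (q * c + d)⁻¹ * (q * a + b) = p →
        q * (a - c * p) = d * p - b := by
      intro q hq p h
      rw [inv_mul_eq_iff_eq_mul₀ (hne q hq)] at h
      rw [mul_sub, ← mul_assoc, eq_sub_of_add_eq h]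
      noncomm_ring
    intro q hq r hr h
    rw [mem_ball_zero_iff] at hq hr
    have h1 := main q hq _ rfl
    have h2 := main r hr _ h.symm
    exact mul_right_cancel₀ (hne2 _ (hmaps q hq)) (h1.trans h2.symm)
  · intro p hp
    rw [mem_ball_zero_iff] at hp
    have h0 := hne2 p hp
    have hq : ‖(d * p - b) * (a - c * p)⁻¹‖ < 1 := by
      rw [sp_normSq_ball, map_mul, normSq_inv, mul_inv_lt_iff₀ (pos _ h0)]
      linarith [(sp_normSq_ball p).1 hp, key2 p]
    refine ⟨(d * p - b) * (a - c * p)⁻¹, by rwa [mem_ball_zero_iff], ?_⟩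
    have h1 : (d * p - b) * (a - c * p)⁻¹ * (a - c * p) = d * p - b := inv_mul_cancel_right₀ h0 _
    have h2 := hne _ hq
    generalize (d * p - b) * (a - c * p)⁻¹ = q at *
    show (q * c + d)⁻¹ * (q * a + b) = p
    rw [inv_mul_eq_iff_eq_mul₀ h2]
    rw [mul_sub, sub_eq_iff_eq_add] at h1
    rw [h1]
    noncomm_ring
  · have hna : ‖a‖ ≠ 0 := norm_ne_zero_iff.2 ha0
    have hnad : ‖d‖ = ‖a‖ := by
      rw [Quaternion.normSq_eq_norm_mul_self, Quaternion.normSq_eq_norm_mul_self] at had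
      nlinarith [norm_nonneg a, norm_nonneg d, norm_pos_iff.2 ha0]
    refine ⟨‖a‖⁻¹ • a, ‖a‖⁻¹ • d, -(b * a⁻¹), ?_, ?_, ?_, ?_⟩
    · rw [norm_smul, norm_inv, norm_norm, inv_mul_cancel₀ hna]
    · rw [norm_smul, norm_inv, norm_norm, hnad, inv_mul_cancel₀ hna]
    · rw [sp_normSq_ball, normSq_neg, map_mul, normSq_inv, mul_inv_lt_iff₀ (pos _ ha0)]
      linarith
    · intro q _
      have e1 : q * a + b = (q - -(b * a⁻¹)) * a := by
        rw [sub_neg_eq_add, add_mul, inv_mul_cancel_right₀ ha0]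
      have e2 : q * c + d = (1 - q * star (-(b * a⁻¹))) * d := by
        have : c = star (b * a⁻¹) * d := by
          rw [star_mul, star_inv₀, mul_assoc, ← hac, inv_mul_cancel_left₀ hsa0]
        rw [star_neg, mul_neg, sub_neg_eq_add, add_mul, mul_assoc, ← this, one_mul, add_comm]
      have e3 : (‖a‖⁻¹ • d)⁻¹ = ‖a‖ • d⁻¹ := by
        rw [smul_inv₀, inv_inv]
      rw [e1, e2, e3, _root_.mul_inv_rev]
      simp only [smul_mul_assoc, mul_smul_comm, smul_smul]
      rw [inv_mul_cancel₀ hna, one_smul]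
      simp only [mul_assoc]
end

section
/- Let A = [[a,c],[b,d]] be a 2×2 quaternionic matrix satisfying Aᴴ H A = H with H = [[1,0],[0,−1]]. Then the regular fractional transformation ℱ_A maps the open unit ball 𝔹 = {q ∈ ℍ : |q| < 1} bijectively onto itself, and there exist unique u, α ∈ ℍ with |u| = 1 and |α| < 1 such that for all q ∈ 𝔹: ℱ_A(q) = (1 − q·conj(α))^{-*} * (q − α)·u, i.e. ℱ_A(q) = (|α|²q² − 2Re(α)q + 1)⁻¹ · (−q²α + q(1 + α²) − α) · u. -/
open Quaternion Matrix

namespace RegMoeb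

/-- denominator of the normalized form -/
noncomputable def D (α q : ℍ[ℝ]) : ℍ[ℝ] :=
  ((‖α‖ ^ 2 : ℝ) : ℍ[ℝ]) * q ^ 2 - ((2 * α.re : ℝ) : ℍ[ℝ]) * q + 1

/-- normalized transformation -/
noncomputable def M (α q : ℍ[ℝ]) : ℍ[ℝ] :=
  (D α q)⁻¹ * (-(q ^ 2) * α + q * (1 + α ^ 2) - α)

/-- conjugating map -/
noncomputable def T (α q : ℍ[ℝ]) : ℍ[ℝ] := (1 - q * α)⁻¹ * q * (1 - q * α)

lemma mul_star_norm (a : ℍ[ℝ]) : a * star a = ((‖a‖ ^ 2 : ℝ) : ℍ[ℝ]) := by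
  rw [Quaternion.self_mul_star, Quaternion.normSq_eq_norm_mul_self, sq]

lemma star_mul_norm (a : ℍ[ℝ]) : star a * a = ((‖a‖ ^ 2 : ℝ) : ℍ[ℝ]) := by
  rw [Quaternion.star_mul_self, Quaternion.normSq_eq_norm_mul_self, sq]

lemma D_eq (α q : ℍ[ℝ]) : D α q = (1 - q * α) - q * (1 - q * α) * star α := by
  have h1 : ((2 * α.re : ℝ) : ℍ[ℝ]) = α + star α := by
    rw [Quaternion.self_add_star']
  have h2 : ((2 * α.re : ℝ) : ℍ[ℝ]) * q = q * (α + star α) := by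
    rw [← h1, Quaternion.coe_commutes]
  have h3 : ((‖α‖ ^ 2 : ℝ) : ℍ[ℝ]) * q ^ 2 = q ^ 2 * (α * star α) := by
    rw [mul_star_norm, Quaternion.coe_commutes]
  rw [D, h2, h3]
  noncomm_ring

lemma D_comm (α q : ℍ[ℝ]) : D α q * q = q * D α q := by
  have h1 := Quaternion.coe_commutes (‖α‖ ^ 2 : ℝ) q
  have h2 := Quaternion.coe_commutes (2 * α.re : ℝ) q
  have e1 : Commute ((‖α‖ ^ 2 : ℝ) : ℍ[ℝ]) q := h1
  have e2 : Commute ((2 * α.re : ℝ) : ℍ[ℝ]) q := h2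
  have : Commute (D α q) q :=
    ((e1.mul_left ((Commute.refl q).pow_left 2)).sub_left
      (e2.mul_left (Commute.refl q))).add_left (Commute.one_left q)
  exact this

lemma one_sub_ne {x y : ℍ[ℝ]} (hx : ‖x‖ < 1) (hy : ‖y‖ < 1) : 1 - x * y ≠ 0 := by
  intro h
  have h1 : x * y = 1 := (sub_eq_zero.mp h).symm
  have h2 : ‖x‖ * ‖y‖ = 1 := by rw [← norm_mul, h1, norm_one]
  nlinarith [norm_nonneg x, norm_nonneg y]

lemma T_norm {α q : ℍ[ℝ]} (h : 1 - q * α ≠ 0) : ‖T α q‖ = ‖q‖ := by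
  have : ‖1 - q * α‖ ≠ 0 := norm_ne_zero_iff.mpr h
  rw [T, norm_mul, norm_mul, norm_inv]
  field_simp

/-- key identity -/
lemma key {α q : ℍ[ℝ]} (h : 1 - q * α ≠ 0) :
    (1 - q * α) * (1 - T α q * star α) = D α q := by
  have : (1 - q * α) * T α q = q * (1 - q * α) := by
    rw [T, ← mul_assoc, ← mul_assoc, mul_inv_cancel₀ h, one_mul]
  rw [mul_sub, mul_one, ← mul_assoc, this, D_eq]

lemma D_ne {α q : ℍ[ℝ]} (hα : ‖α‖ < 1) (hq : ‖q‖ < 1) : D α q ≠ 0 := by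
  have h := one_sub_ne hq hα
  rw [← key h]
  refine mul_ne_zero h (one_sub_ne ?_ ?_)
  · rwa [T_norm h]
  · rwa [norm_star]

lemma T_T {α q : ℍ[ℝ]} (hα : ‖α‖ < 1) (hq : ‖q‖ < 1) : T (star α) (T α q) = q := by
  have h := one_sub_ne hq hα
  have hD := D_ne hα hq
  have h1 : 1 - T α q * star α = (1 - q * α)⁻¹ * D α q := by
    rw [← key h, ← mul_assoc, inv_mul_cancel₀ h, one_mul]
  have h2 : T (star α) (T α q) = (1 - T α q * star α)⁻¹ * T α q * (1 - T α q * star α) := rfl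
  rw [h2, h1, _root_.mul_inv_rev, inv_inv]
  have h3 : (D α q)⁻¹ * (1 - q * α) * T α q * ((1 - q * α)⁻¹ * D α q)
      = (D α q)⁻¹ * ((1 - q * α) * (1 - q * α)⁻¹) * q * ((1 - q * α) * (1 - q * α)⁻¹) * D α q := by
    simp only [T, mul_assoc]
  rw [h3, mul_inv_cancel₀ h, mul_one, mul_one, mul_assoc, ← D_comm, ← mul_assoc,
    inv_mul_cancel₀ hD, one_mul]

/-- classical Moebius map -/
noncomputable def G (α p : ℍ[ℝ]) : ℍ[ℝ] := (1 - p * star α)⁻¹ * (p - α)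

lemma M_eq {α q : ℍ[ℝ]} (hα : ‖α‖ < 1) (hq : ‖q‖ < 1) : M α q = G α (T α q) := by
  have h := one_sub_ne hq hα
  have hD := D_ne hα hq
  have h1 : 1 - T α q * star α = (1 - q * α)⁻¹ * D α q := by
    rw [← key h, ← mul_assoc, inv_mul_cancel₀ h, one_mul]
  have h2 : (1 - q * α) * T α q = q * (1 - q * α) := by
    rw [T, ← mul_assoc, ← mul_assoc, mul_inv_cancel₀ h, one_mul]
  rw [G, h1, _root_.mul_inv_rev, inv_inv, mul_assoc, mul_sub, h2, M]
  congr 1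
  noncomm_ring

lemma norm_id (p α : ℍ[ℝ]) :
    ‖1 - p * star α‖ ^ 2 - ‖p - α‖ ^ 2 = (1 - ‖p‖ ^ 2) * (1 - ‖α‖ ^ 2) := by
  simp only [sq, ← Quaternion.normSq_eq_norm_mul_self, Quaternion.normSq_def']
  simp
  ring

lemma norm_id' (w α : ℍ[ℝ]) :
    ‖1 + star α * w‖ ^ 2 - ‖w + α‖ ^ 2 = (1 - ‖w‖ ^ 2) * (1 - ‖α‖ ^ 2) := by
  simp only [sq, ← Quaternion.normSq_eq_norm_mul_self, Quaternion.normSq_def']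
  simp
  ring

lemma G_lt {α p : ℍ[ℝ]} (hα : ‖α‖ < 1) (hp : ‖p‖ < 1) : ‖G α p‖ < 1 := by
  have h := one_sub_ne hp (y := star α) (by rwa [norm_star])
  have h0 : 0 < ‖1 - p * star α‖ := norm_pos_iff.mpr h
  rw [G, norm_mul, norm_inv, inv_mul_lt_one₀ h0]
  have := norm_id p α
  have h1 : 0 < 1 - ‖p‖ ^ 2 := by nlinarith [norm_nonneg p]
  have h2 : 0 < 1 - ‖α‖ ^ 2 := by nlinarith [norm_nonneg α]
  have := mul_pos h1 h2
  exact lt_of_pow_lt_pow_left₀ 2 h0.le (by linarith)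

lemma one_add_ne {α w : ℍ[ℝ]} (hα : ‖α‖ < 1) (hw : ‖w‖ < 1) : 1 + star α * w ≠ 0 := by
  have := one_sub_ne (x := star α) (y := -w) (by rwa [norm_star]) (by rwa [norm_neg])
  rwa [mul_neg, sub_neg_eq_add] at this

lemma G_iff {α p w : ℍ[ℝ]} (hα : ‖α‖ < 1) (hp : ‖p‖ < 1) (hw : ‖w‖ < 1) :
    G α p = w ↔ p = (w + α) * (1 + star α * w)⁻¹ := by
  have h := one_sub_ne hp (y := star α) (by rwa [norm_star])
  rw [G, inv_mul_eq_iff_eq_mul₀ h, eq_mul_inv_iff_mul_eq₀ (one_add_ne hα hw)]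
  constructor
  · intro e
    have : p * (1 + star α * w) = (p - α) + α + p * star α * w := by noncomm_ring
    rw [this, e]; noncomm_ring
  · intro e
    have : p - α = p * (1 + star α * w) - p * star α * w - α := by noncomm_ring
    rw [this, e]; noncomm_ring

lemma Ginv_lt {α w : ℍ[ℝ]} (hα : ‖α‖ < 1) (hw : ‖w‖ < 1) :
    ‖(w + α) * (1 + star α * w)⁻¹‖ < 1 := by
  have h0 : 0 < ‖1 + star α * w‖ := norm_pos_iff.mpr (one_add_ne hα hw)
  rw [norm_mul, norm_inv, mul_inv_lt_iff₀ h0, one_mul]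
  have := norm_id' w α
  have h1 : 0 < 1 - ‖w‖ ^ 2 := by nlinarith [norm_nonneg w]
  have h2 : 0 < 1 - ‖α‖ ^ 2 := by nlinarith [norm_nonneg α]
  have := mul_pos h1 h2
  exact lt_of_pow_lt_pow_left₀ 2 h0.le (by linarith)

lemma M_bij {α : ℍ[ℝ]} (hα : ‖α‖ < 1) :
    Set.BijOn (M α) (Metric.ball 0 1) (Metric.ball 0 1) := by
  have hα' : ‖star α‖ < 1 := by rwa [norm_star]
  have hT : ∀ q : ℍ[ℝ], ‖q‖ < 1 → ‖T α q‖ < 1 := fun q hq => by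
    rwa [T_norm (one_sub_ne hq hα)]
  refine ⟨?_, ?_, ?_⟩
  · intro q hq
    rw [mem_ball_zero_iff] at hq ⊢
    rw [M_eq hα hq]
    exact G_lt hα (hT q hq)
  · intro q hq r hr e
    rw [mem_ball_zero_iff] at hq hr
    rw [M_eq hα hq, M_eq hα hr] at e
    have h1 := (G_iff hα (hT q hq) (G_lt hα (hT r hr))).mp e
    have h2 := (G_iff hα (hT r hr) (G_lt hα (hT r hr))).mp rfl
    rw [← T_T hα hq, ← T_T hα hr, h1, ← h2]
  · intro w hw
    rw [mem_ball_zero_iff] at hw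
    have hp := Ginv_lt hα hw
    set p := (w + α) * (1 + star α * w)⁻¹ with hpd
    have hq : ‖T (star α) p‖ < 1 := by rwa [T_norm (one_sub_ne hp hα')]
    refine ⟨T (star α) p, by rwa [mem_ball_zero_iff], ?_⟩
    have hTT := T_T hα' hp
    rw [star_star] at hTT
    rw [M_eq hα hq, hTT]
    exact (G_iff hα hp hw).mpr hpd

lemma M_self (α : ℍ[ℝ]) : M α α = 0 := by
  have : -(α ^ 2) * α + α * (1 + α ^ 2) - α = 0 := by noncomm_ring
  rw [M, this, mul_zero]

lemma Mu_bij {α u : ℍ[ℝ]} (hα : ‖α‖ < 1) (hu : ‖u‖ = 1) :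
    Set.BijOn (fun q => M α q * u) (Metric.ball 0 1) (Metric.ball 0 1) := by
  have hu0 : u ≠ 0 := by rintro rfl; simp at hu
  have : Set.BijOn (fun q : ℍ[ℝ] => q * u) (Metric.ball 0 1) (Metric.ball 0 1) := by
    refine ⟨fun q hq => ?_, fun q _ r _ e => mul_right_cancel₀ hu0 e, fun w hw => ?_⟩
    · simpa [hu] using hq
    · exact ⟨w * u⁻¹, by simpa [hu] using hw, by simp [mul_assoc, hu0]⟩
  exact this.comp (M_bij hα)

lemma entries (a c b d : ℍ[ℝ])
    (hA : !![a, c; b, d]ᴴ * !![(1 : ℍ[ℝ]), 0; 0, -1] * !![a, c; b, d] =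
      !![(1 : ℍ[ℝ]), 0; 0, -1]) :
    star a * a - star b * b = 1 ∧ star a * c = star b * d ∧ star c * c - star d * d = -1 := by
  have h00 := congrFun (congrFun hA 0) 0
  have h01 := congrFun (congrFun hA 0) 1
  have h11 := congrFun (congrFun hA 1) 1
  simp [Matrix.mul_apply, Fin.sum_univ_two, Matrix.conjTranspose_apply] at h00 h01 h11
  refine ⟨?_, ?_, ?_⟩
  · rw [sub_eq_add_neg]; exact h00
  · exact add_neg_eq_zero.mp h01
  · rw [sub_eq_add_neg]; exact h11

lemma exists_form (a c b d : ℍ[ℝ])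
    (hA : !![a, c; b, d]ᴴ * !![(1 : ℍ[ℝ]), 0; 0, -1] * !![a, c; b, d] =
      !![(1 : ℍ[ℝ]), 0; 0, -1]) :
    ∃ u α : ℍ[ℝ], ‖u‖ = 1 ∧ ‖α‖ < 1 ∧ ∀ q, regFT a c b d q = M α q * u := by
  obtain ⟨h1, h2, h3⟩ := entries a c b d hA
  have n1 : ‖a‖ ^ 2 - ‖b‖ ^ 2 = 1 := by
    rw [star_mul_norm, star_mul_norm] at h1
    have h := congrArg (fun x : ℍ[ℝ] => x.re) h1
    simpa only [Quaternion.re_sub, Quaternion.re_coe, Quaternion.re_one] using h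
  have n3 : ‖c‖ ^ 2 - ‖d‖ ^ 2 = -1 := by
    rw [star_mul_norm, star_mul_norm] at h3
    have h := congrArg (fun x : ℍ[ℝ] => x.re) h3
    simpa only [Quaternion.re_sub, Quaternion.re_coe, Quaternion.re_one, Quaternion.re_neg] using h
  have n2 : ‖a‖ * ‖c‖ = ‖b‖ * ‖d‖ := by
    have := congrArg norm h2
    simpa using this
  have hcd : ‖c‖ < ‖d‖ := lt_of_pow_lt_pow_left₀ 2 (norm_nonneg d) (by linarith)
  have hd : 0 < ‖d‖ := lt_of_le_of_lt (norm_nonneg c) hcd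
  have hd0 : d ≠ 0 := norm_pos_iff.mp hd
  have hsd0 : star d ≠ 0 := star_ne_zero.mpr hd0
  have had : ‖a‖ = ‖d‖ := by
    have : ‖a‖ ^ 2 * ‖c‖ ^ 2 = ‖b‖ ^ 2 * ‖d‖ ^ 2 := by rw [← mul_pow, n2, mul_pow]
    have : ‖a‖ ^ 2 = ‖d‖ ^ 2 := by
      have e1 : ‖c‖ ^ 2 = ‖d‖ ^ 2 - 1 := by linarith
      have e2 : ‖b‖ ^ 2 = ‖a‖ ^ 2 - 1 := by linarith
      rw [e1, e2] at this; linarith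
    exact (pow_left_inj₀ (norm_nonneg a) (norm_nonneg d) two_ne_zero).mp this
  have h2' : star c * a = star d * b := by
    have := congrArg star h2
    simpa using this
  set r : ℝ := ‖d‖ ^ 2 with hr
  have hr0 : r ≠ 0 := by positivity
  have hrq : (r : ℍ[ℝ]) ≠ 0 := by
    intro h
    have h' := congrArg (fun x : ℍ[ℝ] => x.re) h
    simp only [Quaternion.re_coe, Quaternion.re_zero] at h'
    exact hr0 h'
  set α : ℍ[ℝ] := -(star c * (star d)⁻¹) with hαd
  have hα1 : α * star d = -star c := by
    rw [hαd, neg_mul, mul_assoc, inv_mul_cancel₀ hsd0, mul_one]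
  have hu1 : d * (d⁻¹ * a) = a := by rw [← mul_assoc, mul_inv_cancel₀ hd0, one_mul]
  set u : ℍ[ℝ] := d⁻¹ * a with hud
  have hru : (r : ℍ[ℝ]) * u = star d * a := by
    rw [hr, ← star_mul_norm, mul_assoc, hu1]
  have hrαu : (r : ℍ[ℝ]) * (α * u) = -(star c * a) := by
    rw [Quaternion.coe_commutes, mul_assoc, ← Quaternion.coe_commutes, hru, ← mul_assoc, hα1,
      neg_mul]
  have hrα : (r : ℍ[ℝ]) * α = -(star c * d) := by
    rw [Quaternion.coe_commutes, hr, ← star_mul_norm, ← mul_assoc, hα1, neg_mul]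
  have hααu : (r : ℍ[ℝ]) * (α ^ 2 * u) = star c * b := by
    rw [sq, mul_assoc, ← mul_assoc, Quaternion.coe_commutes, mul_assoc, hrαu, h2', mul_neg,
      ← mul_assoc, hα1, neg_mul, neg_neg]
  have hnα : ‖α‖ = ‖c‖ / ‖d‖ := by
    rw [hαd, norm_neg, norm_mul, norm_inv, _root_.norm_star, _root_.norm_star]; rfl
  refine ⟨u, α, ?_, ?_, ?_⟩
  · rw [hud, norm_mul, norm_inv, had, inv_mul_cancel₀ hd.ne']
  · rw [hnα, div_lt_one hd]; exact hcd
  · intro q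
    have hre : r * α.re = -(c * star d).re := by
      have := congrArg (fun x : ℍ[ℝ] => x.re) hrα
      simp at this
      simp
      linarith
    have hDen : regDenom c d q = (r : ℍ[ℝ]) * D α q := by
      have e1 : (‖c‖ ^ 2 : ℝ) = r * ‖α‖ ^ 2 := by
        rw [hnα, hr]; field_simp
      have e2 : (2 * (c * star d).re : ℝ) = -(r * (2 * α.re)) := by linarith
      rw [regDenom, D, e1, e2, ← hr, Quaternion.coe_neg, Quaternion.coe_mul, Quaternion.coe_mul]
      noncomm_ring
    have hNum : q ^ 2 * (star c * a) + q * (star d * a + star c * b) + star d * b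
        = (r : ℍ[ℝ]) * ((-(q ^ 2) * α + q * (1 + α ^ 2) - α) * u) := by
      have : (-(q ^ 2) * α + q * (1 + α ^ 2) - α) * u
        = -(q ^ 2 * (α * u)) + q * (u + α ^ 2 * u) - α * u := by noncomm_ring
      have f1 : (r : ℍ[ℝ]) * (q ^ 2 * (α * u)) = -(q ^ 2 * (star c * a)) := by
        rw [← mul_assoc, Quaternion.coe_commutes, mul_assoc, hrαu, mul_neg]
      have f2 : (r : ℍ[ℝ]) * (q * (u + α ^ 2 * u)) = q * (star d * a + star c * b) := by
        rw [← mul_assoc, Quaternion.coe_commutes, mul_assoc, mul_add (r : ℍ[ℝ]), hru, hααu]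
      rw [this, mul_sub, mul_add (r : ℍ[ℝ]), mul_neg, f1, f2, hrαu, ← h2', neg_neg, sub_neg_eq_add]
    rw [regFT, hDen, hNum, _root_.mul_inv_rev, M, mul_assoc, ← mul_assoc _ (r : ℍ[ℝ]),
      inv_mul_cancel₀ hrq, one_mul, mul_assoc]

end RegMoeb

/-- For `A = [[a,c],[b,d]] ∈ Sp(1,1)`, the regular fractional transformation `ℱ_A` maps the
unit ball `𝔹` bijectively onto itself and has the form
`ℱ_A(q) = (1 − q·conj α)^{-*} * (q − α)·u` for unique `u, α` with `|u| = 1`, `|α| < 1`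
(here the pair is `x = (u, α)`). -/
theorem regular_moebius_transformation_of_ball (a c b d : ℍ[ℝ])
    (hA : !![a, c; b, d]ᴴ * !![(1 : ℍ[ℝ]), 0; 0, -1] * !![a, c; b, d] =
      !![(1 : ℍ[ℝ]), 0; 0, -1]) :
    Set.BijOn (regFT a c b d) (Metric.ball 0 1) (Metric.ball 0 1) ∧
      ∃! x : ℍ[ℝ] × ℍ[ℝ], ‖x.1‖ = 1 ∧ ‖x.2‖ < 1 ∧
        ∀ q ∈ Metric.ball (0 : ℍ[ℝ]) 1,
          regFT a c b d q =
            (((‖x.2‖ ^ 2 : ℝ) : ℍ[ℝ]) * q ^ 2 - ((2 * x.2.re : ℝ) : ℍ[ℝ]) * q + 1)⁻¹ *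
              (-(q ^ 2) * x.2 + q * (1 + x.2 ^ 2) - x.2) * x.1 := by
  obtain ⟨u, α, hu, hα, hF⟩ := RegMoeb.exists_form a c b d hA
  have hbij : Set.BijOn (regFT a c b d) (Metric.ball 0 1) (Metric.ball 0 1) :=
    (RegMoeb.Mu_bij hα hu).congr (fun q _ => (hF q).symm)
  refine ⟨hbij, (u, α), ⟨hu, hα, fun q _ => hF q⟩, ?_⟩
  rintro ⟨v, β⟩ ⟨hv, hβ, hG⟩
  have hG' : ∀ q ∈ Metric.ball (0 : ℍ[ℝ]) 1, regFT a c b d q = RegMoeb.M β q * v := hG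
  dsimp only at hv hβ
  have hαm : α ∈ Metric.ball (0 : ℍ[ℝ]) 1 := by rwa [mem_ball_zero_iff]
  have hβm : β ∈ Metric.ball (0 : ℍ[ℝ]) 1 := by rwa [mem_ball_zero_iff]
  have e : β = α := hbij.injOn hβm hαm (by
    rw [hG' β hβm, hF α, RegMoeb.M_self, RegMoeb.M_self, zero_mul, zero_mul])
  subst e
  obtain ⟨q, hq, hqe⟩ := (RegMoeb.M_bij hα).surjOn
    (show ((1 / 2 : ℝ) : ℍ[ℝ]) ∈ Metric.ball (0 : ℍ[ℝ]) 1 by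
      rw [mem_ball_zero_iff, Quaternion.norm_coe]; norm_num)
  have h := hG' q hq
  rw [hF q, hqe] at h
  have h0 : ((1 / 2 : ℝ) : ℍ[ℝ]) ≠ 0 := by
    intro h
    have h' := congrArg (fun x : ℍ[ℝ] => x.re) h
    simp only [Quaternion.re_coe, Quaternion.re_zero] at h'
    norm_num at h'
  have := mul_left_cancel₀ h0 h
  rw [this]
end

section
/- Let f(q) = ∑_{n≥0} qⁿaₙ be a power series converging for all q ∈ 𝔹 = {q ∈ ℍ : |q| < 1}, with |f(q)| < 1 for all q ∈ 𝔹 and a₀ = 0 (i.e. f : 𝔹 → 𝔹 is regular with f(0) = 0). Let g(q) = ∑_{n≥0} qⁿaₙ₊₁, so that f(q) = q·g(q) on 𝔹. Then |g(q)| ≤ 1 for all q ∈ 𝔹; moreover, if |g(q₀)| = 1 for some q₀ ∈ 𝔹, then there exists u ∈ ℍ with |u| = 1 such that g(q) = u for all q ∈ 𝔹 (equivalently, f(q) = qu). -/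
open Quaternion

section aux

/-- The Schwarz lemma on one complex slice, for vector-valued power series. -/
theorem slice_schwarz {F : Type*} [NormedAddCommGroup F] [NormedSpace ℂ F] [CompleteSpace F]
    (hF : ∀ x y : F, ‖x‖ = 1 → ‖y‖ = 1 → x ≠ y → ‖x + y‖ ≠ 2)
    (b : ℕ → F) (G : ℂ → F)
    (hG : ∀ z : ℂ, ‖z‖ < 1 → HasSum (fun n : ℕ => z ^ n • b n) (G z))
    (hs : ∀ r : ℝ, 0 ≤ r → r < 1 → Summable (fun n : ℕ => r ^ n * ‖b n‖))
    (hb : ∀ z : ℂ, ‖z‖ < 1 → ‖z‖ * ‖G z‖ < 1) :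
    (∀ z : ℂ, ‖z‖ < 1 → ‖G z‖ ≤ 1) ∧
      ∀ z w : ℂ, ‖z‖ < 1 → ‖w‖ < 1 → ‖G z‖ = 1 → G w = G z := by
  have hd : DifferentiableOn ℂ G (Metric.ball 0 1) := by
    intro z hz
    have hz' : ‖z‖ < 1 := by simpa using hz
    obtain ⟨r, hr1, hr2⟩ := exists_between hz'
    have hr0 : 0 ≤ r := (norm_nonneg z).trans hr1.le
    have h1 : DifferentiableOn ℂ (fun w : ℂ => ∑' n : ℕ, w ^ n • b n) (Metric.ball 0 r) := by
      refine Complex.differentiableOn_tsum_of_summable_norm (hs r hr0 hr2) ?_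
        Metric.isOpen_ball ?_
      · intro n
        fun_prop
      · intro n w hw
        have hw' : ‖w‖ < r := by simpa using hw
        rw [norm_smul, norm_pow]
        gcongr
    have h2 : DifferentiableOn ℂ G (Metric.ball 0 r) := by
      refine h1.congr ?_
      intro w hw
      have hw' : ‖w‖ < r := by simpa using hw
      exact (hG w (hw'.trans hr2)).tsum_eq.symm
    exact (h2.differentiableAt (Metric.isOpen_ball.mem_nhds (by simpa using hr1))).differentiableWithinAt
  have hle : ∀ z : ℂ, ‖z‖ < 1 → ‖G z‖ ≤ 1 := by
    intro z hz
    have key : ∀ r : ℝ, ‖z‖ < r → r < 1 → r * ‖G z‖ ≤ 1 := by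
      intro r hr1 hr2
      have hr0 : 0 < r := (norm_nonneg z).trans_lt hr1
      have hcl : closure (Metric.ball (0:ℂ) r) ⊆ Metric.ball 0 1 := by
        rw [closure_ball _ hr0.ne']
        exact Metric.closedBall_subset_ball hr2
      have := Complex.norm_le_of_forall_mem_frontier_norm_le (f := G) (C := 1 / r)
        (U := Metric.ball 0 r) Metric.isBounded_ball
        ((hd.mono hcl).diffContOnCl) (by
          intro w hw
          rw [frontier_ball _ hr0.ne'] at hw
          have hw' : ‖w‖ = r := by simpa using hw
          have := hb w (hw' ▸ hr2)
          rw [hw'] at this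
          rw [le_div_iff₀ hr0]
          linarith) (z := z) (subset_closure (by simpa using hr1))
      rw [le_div_iff₀ hr0] at this
      linarith
    by_contra! hc
    have h3 : max ‖z‖ (1 / ‖G z‖) < 1 := by
      apply max_lt hz
      rw [div_lt_one (by linarith)]; exact hc
    obtain ⟨r, hr1, hr2⟩ := exists_between h3
    have h4 := key r ((le_max_left _ _).trans_lt hr1) hr2
    have h5 := (le_max_right ‖z‖ (1 / ‖G z‖)).trans_lt hr1
    rw [div_lt_iff₀ (by linarith)] at h5
    linarith
  refine ⟨hle, ?_⟩
  intro z w hz hw h1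
  haveI : StrictConvexSpace ℝ F :=
    StrictConvexSpace.of_norm_add_ne_two (fun x y hx hy hxy => hF x y hx hy hxy)
  exact Complex.eqOn_of_isPreconnected_of_isMaxOn_norm (f := G) (U := Metric.ball 0 1) (c := z)
    (convex_ball _ _).isPreconnected Metric.isOpen_ball hd (by simpa using hz)
    (by
      intro v hv
      have hv' : ‖v‖ < 1 := by simpa using hv
      simpa [h1] using hle v hv') (by simpa using hw)

theorem exists_slice_s15 (q : ℍ[ℝ]) : ∃ φ : ℂ →+* ℍ[ℝ], (∀ z, ‖φ z‖ = ‖z‖) ∧ ∃ z, φ z = q := by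
  have hI : ∃ I : ℍ[ℝ], I.re = 0 ∧ ‖I‖ = 1 ∧ ∃ t : ℝ, q.im = t • I := by
    by_cases h : q.im = 0
    · obtain ⟨J, hJ⟩ : ∃ J : ℍ[ℝ], J = ⟨0, 1, 0, 0⟩ := ⟨_, rfl⟩
      have hn : ‖J‖ * ‖J‖ = 1 := by
        rw [← Quaternion.normSq_eq_norm_mul_self, Quaternion.normSq_def', hJ]; simp
      refine ⟨J, by rw [hJ], ?_, 0, by rw [h, zero_smul]⟩
      nlinarith [norm_nonneg J]
    · have h' : ‖q.im‖ ≠ 0 := norm_ne_zero_iff.mpr h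
      refine ⟨‖q.im‖⁻¹ • q.im, by simp, ?_, ‖q.im‖, ?_⟩
      · rw [norm_smul, norm_inv, norm_norm, inv_mul_cancel₀ h']
      · rw [smul_smul, mul_inv_cancel₀ h', one_smul]
  obtain ⟨I, hI0, hI1, t, ht⟩ := hI
  have hn : I.imI ^ 2 + I.imJ ^ 2 + I.imK ^ 2 = 1 := by
    have := Quaternion.normSq_eq_norm_mul_self I
    rw [Quaternion.normSq_def', hI1, hI0] at this
    linarith
  have hII : I * I = -1 := by
    ext
    · simp [hI0]; linarith
    all_goals simp [hI0]
    all_goals ring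
  have hφ : ∀ z : ℂ, Complex.lift ⟨I, hII⟩ z = (z.re : ℍ[ℝ]) + z.im • I := by
    intro z
    simp [Complex.lift, Complex.liftAux_apply]
  refine ⟨(Complex.lift ⟨I, hII⟩ : ℂ →ₐ[ℝ] ℍ[ℝ]).toRingHom, ?_, ⟨q.re, t⟩, ?_⟩
  · intro z
    change ‖Complex.lift ⟨I, hII⟩ z‖ = _
    rw [hφ, ← sq_eq_sq₀ (norm_nonneg _) (norm_nonneg _), sq, ← Quaternion.normSq_eq_norm_mul_self,
      Quaternion.normSq_def', Complex.sq_norm, Complex.normSq_apply]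
    simp [hI0]
    linear_combination z.im ^ 2 * hn
  · change Complex.lift ⟨I, hII⟩ _ = _
    rw [hφ, ← ht]
    exact Quaternion.re_add_im q

theorem quat_strict (x y : ℍ[ℝ]) (hx : ‖x‖ = 1) (hy : ‖y‖ = 1) (hxy : x ≠ y) : ‖x + y‖ ≠ 2 := by
  intro h
  have := parallelogram_law_with_norm ℝ x y
  rw [h, hx, hy] at this
  have h2 : ‖x - y‖ = 0 := by
    have : ‖x - y‖ * ‖x - y‖ = 0 := by linarith
    simpa using this
  exact hxy (sub_eq_zero.mp (norm_eq_zero.mp h2))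

end aux

/-- Schwarz lemma for regular quaternionic functions: if `f : 𝔹 → 𝔹` is regular with
`f(0) = 0` and `f(q) = q·g(q)` with `g` regular, then `|g| ≤ 1` on `𝔹`, with equality at
some point only if `g` is a unitary constant. -/
theorem schwarz_lemma (f g : ℍ[ℝ] → ℍ[ℝ]) (a : ℕ → ℍ[ℝ])
    (hf : ∀ q ∈ Metric.ball (0 : ℍ[ℝ]) 1, HasSum (fun n : ℕ => q ^ n * a n) (f q))
    (hfb : ∀ q ∈ Metric.ball (0 : ℍ[ℝ]) 1, ‖f q‖ < 1)
    (h0 : a 0 = 0)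
    (hg : ∀ q ∈ Metric.ball (0 : ℍ[ℝ]) 1, HasSum (fun n : ℕ => q ^ n * a (n + 1)) (g q))
    (hfg : ∀ q ∈ Metric.ball (0 : ℍ[ℝ]) 1, f q = q * g q) :
    (∀ q ∈ Metric.ball (0 : ℍ[ℝ]) 1, ‖g q‖ ≤ 1) ∧
      (∀ q₀ ∈ Metric.ball (0 : ℍ[ℝ]) 1, ‖g q₀‖ = 1 →
        ∃ u : ℍ[ℝ], ‖u‖ = 1 ∧ ∀ q ∈ Metric.ball (0 : ℍ[ℝ]) 1, g q = u) := by
  have hs : ∀ r : ℝ, 0 ≤ r → r < 1 → Summable (fun n : ℕ => r ^ n * ‖a (n + 1)‖) := by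
    intro r hr0 hr1
    have hr : ‖(r : ℍ[ℝ])‖ = r := by rw [Quaternion.norm_coe, Real.norm_of_nonneg hr0]
    have h := (hg (r : ℍ[ℝ]) (by simpa [hr] using hr1)).summable.norm
    simpa only [norm_mul, norm_pow, hr] using h
  have main : ∀ q : ℍ[ℝ], ‖q‖ < 1 → ‖g q‖ ≤ 1 ∧ (‖g q‖ = 1 → g 0 = g q) ∧
      (‖g 0‖ = 1 → g q = g 0) := by
    intro q hq
    obtain ⟨φ, hφ, z, rfl⟩ := exists_slice_s15 q
    letI : Module ℂ ℍ[ℝ] := Module.compHom ℍ[ℝ] φ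
    have hsm : ∀ (w : ℂ) (x : ℍ[ℝ]), w • x = φ w * x := fun w x => rfl
    letI : NormedSpace ℂ ℍ[ℝ] :=
      { norm_smul_le := fun w x => by rw [hsm, norm_mul, hφ] }
    have := slice_schwarz (F := ℍ[ℝ]) quat_strict (fun n => a (n + 1)) (fun w => g (φ w))
      (by
        intro w hw
        have := hg (φ w) (by simpa [hφ] using hw)
        simpa only [hsm, map_pow] using this) hs
      (by
        intro w hw
        have hw' : φ w ∈ Metric.ball (0 : ℍ[ℝ]) 1 := by simpa [hφ] using hw
        have := hfb (φ w) hw'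
        rwa [hfg _ hw', norm_mul, hφ] at this)
    obtain ⟨h1, h2⟩ := this
    rw [hφ] at hq
    have h00 : ‖(0:ℂ)‖ < 1 := by simp
    refine ⟨h1 z hq, fun h => ?_, fun h => ?_⟩
    · simpa using h2 z 0 hq h00 h
    · simpa using h2 0 z h00 hq (by simpa using h)
  refine ⟨fun q hq => (main q (by simpa using hq)).1, fun q₀ hq₀ h => ?_⟩
  have h3 := (main q₀ (by simpa using hq₀)).2.1 h
  have h4 : ‖g 0‖ = 1 := by rw [h3, h]
  exact ⟨g 0, h4, fun q hq => (main q (by simpa using hq)).2.2 h4⟩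
end
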